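/- arXiv:2011.01923 — 5 statements merged into one kernel-verified Lean document; each statement's English description precedes it below -/
import Mathlib

section
/- Let F be a field, R a finite-dimensional F-algebra, and N a finitely generated subgroup of the unit group Rˣ. Then N contains no non-cyclic free subgroup if and only if N satisfies a power central group identity, i.e., there exist m ≥ 1 and a nonidentity element w of the free group on generators x_1,...,x_m such that for every (c_1,...,c_m) ∈ N^m there is a positive integer p (depending on the tuple) with w(c_1,...,c_m)^p ∈ Z(R). -/
namespace PCGI

/-- A letter evaluated in a group. -/
def letter {α G : Type*} [Group G] (g : α → G) (l : α × Bool) : G := cond l.2 (g l.1) (g l.1)⁻¹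

lemma pingpong {α X G : Type*} [Group G] [MulAction G X] (g : α → G)
    (D : α × Bool → Set X) (x0 : X) (h0 : ∀ l, x0 ∉ D l) (h1 : ∀ l, letter g l • x0 ∈ D l)
    (h2 : ∀ l l' : α × Bool, l' ≠ (l.1, !l.2) → ∀ x ∈ D l', letter g l • x ∈ D l) :
    Function.Injective (FreeGroup.lift g) := by
  classical
  have key : ∀ (L : List (α × Bool)) (l : α × Bool), FreeGroup.IsReduced (l :: L) →
      (FreeGroup.lift g (FreeGroup.mk (l :: L))) • x0 ∈ D l := by
    intro L
    induction L with
    | nil => intro l _; simpa [FreeGroup.lift_mk, letter] using h1 l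
    | cons l' L ih =>
      intro l hl
      have hl' : FreeGroup.IsReduced (l' :: L) := by
        unfold FreeGroup.IsReduced at *
        exact (List.isChain_cons_cons.1 hl).2
      have hne : l' ≠ (l.1, !l.2) := by
        unfold FreeGroup.IsReduced at hl
        have := (List.isChain_cons_cons.1 hl).1
        rintro rfl
        simp at this
      have := h2 l l' hne _ (ih l' hl')
      rw [smul_smul] at this
      simpa [FreeGroup.lift_mk, letter] using this
  rw [injective_iff_map_eq_one]
  intro w hw
  by_contra hne
  have hword : w.toWord ≠ [] := by simpa [FreeGroup.toWord_eq_nil_iff] using hne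
  obtain ⟨l, L, hL⟩ := List.exists_cons_of_ne_nil hword
  have hr : FreeGroup.IsReduced (l :: L) := hL ▸ FreeGroup.isReduced_toWord
  have := key L l hr
  rw [← hL, FreeGroup.mk_toWord, hw, one_smul] at this
  exact h0 l this

lemma lift_pow_injective {α : Type*} (M : ℕ) (hM : 0 < M) :
    Function.Injective (FreeGroup.lift (fun i : α => FreeGroup.of i ^ M)) := by
  classical
  let D : α × Bool → Set (FreeGroup α) := fun l => {x | x.toWord.head? = some l}
  have step : ∀ (l : α × Bool) (x : FreeGroup α), x.toWord.head? ≠ some (l.1, !l.2) →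
      (letter FreeGroup.of l * x) ∈ D l := by
    intro l x hx
    have e : letter FreeGroup.of l * x = FreeGroup.mk (l :: x.toWord) := by
      conv_lhs => rw [← FreeGroup.mk_toWord (x := x)]
      obtain ⟨a, b⟩ := l
      cases b <;> simp [letter, FreeGroup.of, FreeGroup.inv_mk, FreeGroup.mul_mk, FreeGroup.invRev]
    change (letter FreeGroup.of l * x).toWord.head? = some l
    rw [e, FreeGroup.toWord_mk, FreeGroup.reduce.cons, FreeGroup.reduce_toWord]
    cases h : x.toWord with
    | nil => simp
    | cons a t =>
      rw [h] at hx
      have : ¬ (l.1 = a.1 ∧ l.2 = !a.2) := by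
        rintro ⟨h1, h2⟩
        apply hx
        simp only [List.head?_cons, Option.some.injEq]
        ext <;> simp [h1, h2]
      simp [this]
  have stepn : ∀ (n : ℕ) (l : α × Bool) (x : FreeGroup α), x.toWord.head? ≠ some (l.1, !l.2) →
      (letter FreeGroup.of l ^ (n + 1) * x) ∈ D l := by
    intro n l x hx
    induction n with
    | zero => simpa using step l x hx
    | succ n ih =>
      rw [pow_succ', mul_assoc]
      apply step
      rw [show (_ : FreeGroup α).toWord.head? = some l from ih]
      intro h
      have := congrArg Prod.snd (Option.some.inj h)
      simp at this
  obtain ⟨n, rfl⟩ : ∃ n, M = n + 1 := ⟨M - 1, by omega⟩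
  have hlet : ∀ l : α × Bool, letter (fun i : α => FreeGroup.of i ^ (n + 1)) l =
      letter FreeGroup.of l ^ (n + 1) := by
    rintro ⟨a, b⟩; cases b <;> simp [letter]
  refine pingpong _ D 1 (by intro l; simp [D]) ?_ ?_
  · intro l
    rw [hlet, smul_eq_mul]
    exact stepn _ _ _ (by simp)
  · intro l l' hne x hx
    rw [hlet, smul_eq_mul]
    apply stepn
    rw [show x.toWord.head? = some l' from hx]
    intro h; exact hne (Option.some.inj h)

/-- shift action of the integers on the free group on the integers -/
def shiftHom : Multiplicative ℤ →* MulAut (FreeGroup ℤ) where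
  toFun n := FreeGroup.freeGroupCongr (Equiv.addLeft n.toAdd)
  map_one' := by
    ext x
    simp only [MulAut.one_apply]
    rw [show (Equiv.addLeft (Multiplicative.toAdd (1 : Multiplicative ℤ))) = Equiv.refl ℤ by ext; simp]
    simp
  map_mul' a b := by
    apply MulEquiv.toMonoidHom_injective
    ext x
    simp [add_assoc]

lemma exists_embedding_two : ∃ j : FreeGroup ℤ →* FreeGroup (Fin 2), Function.Injective j := by
  let x : FreeGroup (Fin 2) := FreeGroup.of 0
  let y : FreeGroup (Fin 2) := FreeGroup.of 1
  let j : FreeGroup ℤ →* FreeGroup (Fin 2) := FreeGroup.lift (fun i => x ^ i * y * (x ^ i)⁻¹)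
  let s : FreeGroup (Fin 2) →* (FreeGroup ℤ ⋊[shiftHom] Multiplicative ℤ) :=
    FreeGroup.lift ![SemidirectProduct.inr (Multiplicative.ofAdd 1), SemidirectProduct.inl (FreeGroup.of 0)]
  refine ⟨j, ?_⟩
  have : s.comp j = SemidirectProduct.inl := by
    ext i
    · simp only [MonoidHom.coe_comp, Function.comp_apply, j, s, FreeGroup.lift_apply_of, map_mul, map_zpow, map_inv, x, y]
      simp only [Matrix.cons_val_zero, Matrix.cons_val_one]
      rw [← map_zpow, ← map_inv, ← SemidirectProduct.inl_aut]
      simp [shiftHom, ← ofAdd_zsmul]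
    · simp only [MonoidHom.coe_comp, Function.comp_apply, j, s, FreeGroup.lift_apply_of, map_mul, map_zpow, map_inv, x, y]
      simp only [Matrix.cons_val_zero, Matrix.cons_val_one]
      rw [← map_zpow, ← map_inv, ← SemidirectProduct.inl_aut]
      simp
  have h2 : Function.Injective (s.comp j) := by
    rw [this]; exact SemidirectProduct.inl_injective
  exact Function.Injective.of_comp (f := s) (by simpa using h2)

/-- no nontrivial word of the free group on `m` letters commutes with an extra letter -/
lemma not_commute_extra {α : Type*} (v : FreeGroup α) (hv : v ≠ 1) :
    FreeGroup.of (none : Option α) * FreeGroup.map some v ≠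
      FreeGroup.map some v * FreeGroup.of (none : Option α) := by
  classical
  intro h
  let L : FreeGroup α →* Equiv.Perm (FreeGroup α) := MulAction.toPermHom _ _
  let θ : FreeGroup (Option α) →* Equiv.Perm (FreeGroup α) :=
    FreeGroup.lift (fun o => o.elim (Equiv.swap 1 v) (fun a => L (FreeGroup.of a)))
  have h1 : θ (FreeGroup.of none) = Equiv.swap 1 v := by simp [θ]
  have h2 : θ (FreeGroup.map some v) = L v := by
    have : θ.comp (FreeGroup.map some) = L := by ext a; simp [θ]
    rw [← this]; rfl
  have h3 := congrArg θ h
  rw [map_mul, map_mul, h1, h2] at h3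
  have h4 := congrArg (fun e : Equiv.Perm (FreeGroup α) => e 1) h3
  simp [L] at h4
  have h5 : v ^ 2 = 1 := by rw [pow_two]; exact h4.symm
  exact hv (by simpa using h5)

theorem no_free_of_pcgi {R : Type*} [Ring R] (N : Subgroup Rˣ) (m : ℕ) (w : FreeGroup (Fin m))
    (hw : w ≠ 1) (h : ∀ c : Fin m → N, ∃ p : ℕ, 0 < p ∧
          ((FreeGroup.lift (fun i => (c i : Rˣ)) w : Rˣ) : R) ^ p ∈ Subring.center R) :
    ¬ ∃ f : FreeGroup (Fin 2) →* N, Function.Injective f := by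
  rintro ⟨f, hf⟩
  obtain ⟨j, hj⟩ := exists_embedding_two
  let e : Option (Fin m) → ℤ := fun o => o.elim (-1) (fun i => (i : ℤ))
  have he : Function.Injective e := by
    rintro (_ | a) (_ | b) hab
    · rfl
    · simp only [e, Option.elim] at hab; omega
    · simp only [e, Option.elim] at hab; omega
    · simp only [e, Option.elim] at hab
      congr 1; ext; omega
  let E : FreeGroup (Option (Fin m)) →* FreeGroup ℤ := FreeGroup.map e
  have hE : Function.Injective E := FreeGroup.map_injective he
  let T : FreeGroup (Option (Fin m)) →* N := f.comp (j.comp E)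
  have hT : Function.Injective T := hf.comp (hj.comp hE)
  obtain ⟨p, hp, hc⟩ := h (fun i => T (FreeGroup.of (some i)))
  have hlift : FreeGroup.lift (fun i => ((T (FreeGroup.of (some i)) : N) : Rˣ)) w =
      ((T (FreeGroup.map some w) : N) : Rˣ) := by
    have : FreeGroup.lift (fun i => ((T (FreeGroup.of (some i)) : N) : Rˣ)) =
        N.subtype.comp (T.comp (FreeGroup.map some)) := by ext i; simp
    rw [this]; rfl
  rw [hlift] at hc
  have hwp : w ^ p ≠ 1 := by
    intro h
    exact hw ((pow_eq_one_iff.1 h).resolve_right (by omega))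
  apply not_commute_extra (w ^ p) hwp
  apply hT
  rw [Subring.mem_center_iff] at hc
  have := hc (((T (FreeGroup.of none) : N) : Rˣ) : R)
  apply Subtype.ext
  apply Units.ext
  simpa [map_mul, map_pow] using this

end PCGI


namespace PCGI

lemma exists_uniform_pow_mem {G : Type*} [Group G] (H : Subgroup G) [H.FiniteIndex] :
    ∃ M : ℕ, 0 < M ∧ ∀ g : G, g ^ M ∈ H := by
  refine ⟨H.normalCore.index, Nat.pos_of_ne_zero Subgroup.FiniteIndex.index_ne_zero, fun g => ?_⟩
  exact Subgroup.normalCore_le H (Subgroup.pow_index_mem _ g)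

lemma lift_lift_pow {α G : Type*} [Group G] (M : ℕ) (c : α → G) (w : FreeGroup α) :
    FreeGroup.lift c (FreeGroup.lift (fun i => FreeGroup.of i ^ M) w) =
      FreeGroup.lift (fun i => c i ^ M) w := by
  have : (FreeGroup.lift c).comp (FreeGroup.lift (fun i => FreeGroup.of i ^ M)) =
      FreeGroup.lift (fun i => c i ^ M) := by ext i; simp
  rw [← this]; rfl

lemma exists_word_of_solvable {G : Type*} [Group G] (H : Subgroup G) [H.FiniteIndex]
    (hs : Group.IsSolvable H) : ∃ (m : ℕ) (w : FreeGroup (Fin m)), 1 ≤ m ∧ w ≠ 1 ∧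
      ∀ c : Fin m → G, ∃ p : ℕ, 0 < p ∧ (FreeGroup.lift c w) ^ p = 1 := by
  obtain ⟨M, hM, hMH⟩ := exists_uniform_pow_mem H
  obtain ⟨r, hr⟩ := hs
  let m := Fintype.card (Equiv.Perm (Fin 5))
  let q : FreeGroup (Fin m) →* Equiv.Perm (Fin 5) :=
    FreeGroup.lift (Fintype.equivFin (Equiv.Perm (Fin 5))).symm
  have hq : Function.Surjective q := by
    intro σ
    exact ⟨FreeGroup.of (Fintype.equivFin _ σ), by simp [q]⟩
  have hns : derivedSeries (FreeGroup (Fin m)) r ≠ ⊥ := by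
    intro hb
    have : Group.IsSolvable (FreeGroup (Fin m)) := ⟨r, hb⟩
    have := Group.isSolvable_of_surjective hq
    exact Equiv.Perm.not_isSolvable_fin_5 this
  obtain ⟨⟨w0, hw0⟩, hne0⟩ := Subgroup.ne_bot_iff_exists_ne_one.1 hns
  have hne : w0 ≠ 1 := fun h => hne0 (Subtype.ext h)
  refine ⟨m, FreeGroup.lift (fun i => FreeGroup.of i ^ M) w0, ?_, ?_, ?_⟩
  · exact Fintype.card_pos
  · intro h
    exact hne (lift_pow_injective M hM (by rw [h, map_one]))
  · intro c
    refine ⟨1, one_pos, ?_⟩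
    rw [pow_one, lift_lift_pow]
    let c' : Fin m → H := fun i => ⟨c i ^ M, hMH _⟩
    have h1 : FreeGroup.lift (fun i => c i ^ M) = H.subtype.comp (FreeGroup.lift c') := by
      ext i; simp [c']
    rw [h1]
    have h2 : FreeGroup.lift c' w0 ∈ derivedSeries H r :=
      map_derivedSeries_le_derivedSeries (FreeGroup.lift c') r (Subgroup.mem_map_of_mem _ hw0)
    rw [hr, Subgroup.mem_bot] at h2
    simp [h2]

lemma exists_word_of_comm {G : Type*} [Group G] (H : Subgroup G) [H.FiniteIndex]
    (hs : ∀ x ∈ H, ∀ y ∈ H, ∃ p : ℕ, 0 < p ∧ (x * y * x⁻¹ * y⁻¹) ^ p = 1) :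
    ∃ (m : ℕ) (w : FreeGroup (Fin m)), 1 ≤ m ∧ w ≠ 1 ∧
      ∀ c : Fin m → G, ∃ p : ℕ, 0 < p ∧ (FreeGroup.lift c w) ^ p = 1 := by
  obtain ⟨M, hM, hMH⟩ := exists_uniform_pow_mem H
  let w0 : FreeGroup (Fin 2) := FreeGroup.of 0 * FreeGroup.of 1 * (FreeGroup.of 0)⁻¹ * (FreeGroup.of 1)⁻¹
  have hne : w0 ≠ 1 := by
    simp only [w0, ne_eq]
    decide
  refine ⟨2, FreeGroup.lift (fun i => FreeGroup.of i ^ M) w0, by norm_num, ?_, ?_⟩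
  · intro h
    exact hne (lift_pow_injective M hM (by rw [h, map_one]))
  · intro c
    rw [lift_lift_pow]
    simpa [w0] using hs _ (hMH (c 0)) _ (hMH (c 1))

end PCGI


namespace PCGI

open Module

/-- A subspace is invariant under a subgroup. -/
def Inv {K G M : Type*} [Field K] [Group G] [AddCommGroup M] [Module K M]
    (ρ : G →* Module.End K M) (H : Subgroup G) (U : Submodule K M) : Prop :=
  ∀ h ∈ H, ∀ u ∈ U, ρ h u ∈ U

/-- Strong irreducibility. -/
def StrIrr {K G M : Type*} [Field K] [Group G] [AddCommGroup M] [Module K M]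
    (ρ : G →* Module.End K M) : Prop :=
  ∀ H : Subgroup G, H.FiniteIndex → ∀ U : Submodule K M, Inv ρ H U → U = ⊥ ∨ U = ⊤

section
variable {K G M : Type*} [Field K] [Group G] [AddCommGroup M] [Module K M]

lemma rho_inv_apply (ρ : G →* Module.End K M) (g : G) (x : M) : ρ g⁻¹ (ρ g x) = x := by
  rw [← Module.End.mul_apply, ← map_mul]; simp

lemma rho_apply_inv (ρ : G →* Module.End K M) (g : G) (x : M) : ρ g (ρ g⁻¹ x) = x := by
  rw [← Module.End.mul_apply, ← map_mul]; simp

lemma rho_injective (ρ : G →* Module.End K M) (g : G) : Function.Injective (ρ g) :=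
  Function.LeftInverse.injective (rho_inv_apply ρ g)

/-- The linear equivalence given by a group element. -/
def rhoEquiv (ρ : G →* Module.End K M) (g : G) : M ≃ₗ[K] M :=
  LinearEquiv.ofLinearMap (ρ g) (ρ g⁻¹) (by ext; simp [rho_apply_inv]) (by ext; simp [rho_inv_apply])

lemma map_map_rho (ρ : G →* Module.End K M) (g h : G) (U : Submodule K M) :
    (U.map (ρ h)).map (ρ g) = U.map (ρ (g * h)) := by
  rw [map_mul, Module.End.mul_eq_comp, Submodule.map_comp]

lemma map_rho_one (ρ : G →* Module.End K M) (U : Submodule K M) : U.map (ρ 1) = U := by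
  rw [map_one, Module.End.one_eq_id, Submodule.map_id]

lemma finrank_map_rho (ρ : G →* Module.End K M) (g : G) (U : Submodule K M) :
    finrank K (U.map (ρ g)) = finrank K U :=
  (LinearEquiv.finrank_eq (Submodule.equivMapOfInjective _ (rho_injective ρ g) U)).symm

end

/-- Stabilizers of elements of a finite invariant set of subspaces have finite index. -/
lemma stab_finite {K G M : Type*} [Field K] [Group G] [AddCommGroup M] [Module K M]
    (ρ : G →* Module.End K M) (T : Finset (Submodule K M))
    (hT : ∀ g : G, ∀ W ∈ T, W.map (ρ g) ∈ T) (W : Submodule K M) (hW : W ∈ T) :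
    ∃ H : Subgroup G, H.FiniteIndex ∧ Inv ρ H W := by
  letI : MulAction G (Submodule K M) :=
    { smul := fun g U => U.map (ρ g)
      one_smul := fun U => map_rho_one ρ U
      mul_smul := fun g h U => (map_map_rho ρ g h U).symm }
  refine ⟨MulAction.stabilizer G W, ?_, ?_⟩
  · have hf : (MulAction.orbit G W).Finite := by
      refine T.finite_toSet.subset ?_
      rintro _ ⟨g, rfl⟩
      exact hT g W hW
    refine ⟨?_⟩
    rw [MulAction.index_stabilizer]
    have : (MulAction.orbit G W).Nonempty := ⟨W, MulAction.mem_orbit_self W⟩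
    exact (Set.ncard_pos hf).2 this |>.ne'
  · intro h hh u hu
    have : W.map (ρ h) = W := hh
    rw [← this]
    exact Submodule.mem_map_of_mem hu

open Classical in
lemma cover_aux {K G M : Type*} [Field K] [Group G] [AddCommGroup M] [Module K M]
    [FiniteDimensional K M] (ρ : G →* Module.End K M) (v : M) (d : ℕ) :
    ∀ (c : ℕ) (T : Finset (Submodule K M)), (∀ W ∈ T, finrank K W < d) →
      (T.filter (fun W : Submodule K M => finrank K W + 1 = d)).card = c →
      (∀ g, ∃ W ∈ T, ρ g v ∈ W) →
      ∃ (H : Subgroup G) (W' : Submodule K M) (g0 : G), H.FiniteIndex ∧ Inv ρ H W' ∧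
        ρ g0 v ∈ W' ∧ ∃ W ∈ T, W' ≤ W := by
  induction d with
  | zero =>
    intro c T h _ hc
    obtain ⟨W, hW, _⟩ := hc 1
    exact absurd (h W hW) (by omega)
  | succ d ihd =>
    intro c
    induction c using Nat.strong_induction_on with
    | _ c ihc =>
    intro T hT hcard hcov
    set T1 := T.filter (fun W : Submodule K M => finrank K W + 1 = d + 1) with hT1
    rcases Finset.eq_empty_or_nonempty T1 with h0 | ⟨W0, hW0⟩
    · refine ihd _ T ?_ rfl hcov
      intro W hW
      have := hT W hW
      have h2 : W ∉ T1 := by simp [h0]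
      simp only [hT1, Finset.mem_filter, hW, true_and] at h2
      omega
    by_cases hinv : ∀ g : G, ∀ W ∈ T1, W.map (ρ g) ∈ T1
    · by_cases hred : ∀ g, ∃ W ∈ T.erase W0, ρ g v ∈ W
      · obtain ⟨H, W', g0, h1, h2, h3, W, hW, h4⟩ :=
          ihc _ (by
            rw [← hcard]
            refine Finset.card_lt_card (s := (T.erase W0).filter
              (fun W : Submodule K M => finrank K W + 1 = d + 1)) ?_
            refine Finset.ssubset_iff_subset_ne.2 ⟨Finset.filter_subset_filter _ (Finset.erase_subset _ _), ?_⟩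
            intro h
            rw [← h] at hW0
            simp at hW0) (T.erase W0)
            (fun W hW => hT W (Finset.mem_of_mem_erase hW)) rfl hred
        exact ⟨H, W', g0, h1, h2, h3, W, Finset.mem_of_mem_erase hW, h4⟩
      · push Not at hred
        obtain ⟨g0, hg0⟩ := hred
        obtain ⟨W, hW, hgW⟩ := hcov g0
        have : W = W0 := by
          by_contra hne
          exact hg0 W (Finset.mem_erase.2 ⟨hne, hW⟩) hgW
        subst this
        obtain ⟨H, hH, hHW⟩ := stab_finite ρ T1 hinv W hW0
        exact ⟨H, W, g0, hH, hHW, hgW, W, hW, le_rfl⟩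
    · push Not at hinv
      obtain ⟨g, W1, hW1, hgW1⟩ := hinv
      let T' : Finset (Submodule K M) :=
        (T ×ˢ T).image (fun p => p.1 ⊓ p.2.map (ρ g⁻¹))
      obtain ⟨H, W', g0, h1, h2, h3, W, hW, h4⟩ := ihc (T'.filter (fun W : Submodule K M => finrank K W + 1 = d + 1)).card (by
          rw [← hcard]
          refine Finset.card_lt_card ?_
          refine (Finset.ssubset_iff_of_subset ?_).2 ⟨W1, hW1, ?_⟩
          · intro W hW
            simp only [T', Finset.mem_filter, Finset.mem_image, Finset.mem_product, Prod.exists] at hW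
            obtain ⟨⟨A, B, ⟨hA, hB⟩, rfl⟩, hd⟩ := hW
            have hle : finrank K (A ⊓ B.map (ρ g⁻¹) : Submodule K M) ≤ finrank K A :=
              Submodule.finrank_mono inf_le_left
            have := hT A hA
            have heq : A ⊓ B.map (ρ g⁻¹) = A :=
              Submodule.eq_of_le_of_finrank_le inf_le_left (by omega)
            rw [heq] at hd ⊢
            exact Finset.mem_filter.2 ⟨hA, hd⟩
          · intro hmem
            simp only [T', Finset.mem_filter, Finset.mem_image, Finset.mem_product, Prod.exists] at hmem
            obtain ⟨⟨A, B, ⟨hA, hB⟩, hAB⟩, hd⟩ := hmem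
            have hle : W1 ≤ B.map (ρ g⁻¹) := hAB ▸ inf_le_right
            have hB' := hT B hB
            have heq : W1 = B.map (ρ g⁻¹) :=
              Submodule.eq_of_le_of_finrank_le hle (by rw [finrank_map_rho]; omega)
            apply hgW1
            rw [heq, map_map_rho, mul_inv_cancel, map_rho_one]
            have : finrank K B = finrank K W1 := by rw [heq, finrank_map_rho]
            simp only [hT1, Finset.mem_filter, hB, true_and]
            omega) T' (by
          intro W hW
          simp only [T', Finset.mem_image, Finset.mem_product, Prod.exists] at hW
          obtain ⟨A, B, ⟨hA, hB⟩, rfl⟩ := hW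
          exact lt_of_le_of_lt (Submodule.finrank_mono inf_le_left) (hT A hA)) rfl (by
          intro x
          obtain ⟨A, hA, hxA⟩ := hcov x
          obtain ⟨B, hB, hxB⟩ := hcov (g * x)
          refine ⟨_, Finset.mem_image.2 ⟨(A, B), Finset.mem_product.2 ⟨hA, hB⟩, rfl⟩, hxA, ?_⟩
          refine ⟨_, hxB, ?_⟩
          rw [map_mul, Module.End.mul_apply, rho_inv_apply])
      simp only [T', Finset.mem_image, Finset.mem_product, Prod.exists] at hW
      obtain ⟨A, B, ⟨hA, hB⟩, rfl⟩ := hW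
      exact ⟨H, W', g0, h1, h2, h3, A, hA, h4.trans inf_le_left⟩

lemma cover {K G M : Type*} [Field K] [Group G] [AddCommGroup M] [Module K M]
    [FiniteDimensional K M] (ρ : G →* Module.End K M) (v : M)
    (T : Finset (Submodule K M)) (hcov : ∀ g, ∃ W ∈ T, ρ g v ∈ W) :
      ∃ (H : Subgroup G) (W' : Submodule K M) (g0 : G), H.FiniteIndex ∧ Inv ρ H W' ∧
        ρ g0 v ∈ W' ∧ ∃ W ∈ T, W' ≤ W := by
  classical
  exact cover_aux ρ v (finrank K M + 1) _ T
    (fun W _ => Nat.lt_succ_of_le (Submodule.finrank_le W)) rfl hcov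

/-- The contragredient representation. -/
def dualRep {K G M : Type*} [Field K] [Group G] [AddCommGroup M] [Module K M]
    (ρ : G →* Module.End K M) : G →* Module.End K (Dual K M) where
  toFun g := Dual.transpose (R := K) (ρ g⁻¹)
  map_one' := by ext; simp [Dual.transpose_apply]
  map_mul' g h := by ext; simp [Dual.transpose_apply]

lemma dualRep_apply {K G M : Type*} [Field K] [Group G] [AddCommGroup M] [Module K M]
    (ρ : G →* Module.End K M) (g : G) (χ : Dual K M) (x : M) :
    dualRep ρ g χ x = χ (ρ g⁻¹ x) := rfl

lemma StrIrr.dual {K G M : Type*} [Field K] [Group G] [AddCommGroup M] [Module K M]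
    [FiniteDimensional K M] {ρ : G →* Module.End K M} (h : StrIrr ρ) : StrIrr (dualRep ρ) := by
  intro H hH U hU
  have : Inv ρ H U.dualCoannihilator := by
    intro g hg x hx
    rw [Submodule.mem_dualCoannihilator] at hx ⊢
    intro χ hχ
    have := hx _ (hU g⁻¹ (H.inv_mem hg) χ hχ)
    rwa [dualRep_apply, inv_inv] at this
  rcases h H hH _ this with h1 | h1
  · right
    rw [← Subspace.dualCoannihilator_dualAnnihilator_eq (W := U), h1, Submodule.dualAnnihilator_bot]
  · left
    rw [← Subspace.dualCoannihilator_dualAnnihilator_eq (W := U), h1, Submodule.dualAnnihilator_top]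

/-- General position. -/
lemma general_position {K G E : Type*} [Field K] [Group G] [AddCommGroup E] [Module K E]
    [FiniteDimensional K E] {ρ : G →* Module.End K E} (h : StrIrr ρ) {ι κ : Type*}
    [Finite ι] [Finite κ] (v : ι → E) (W : ι → Submodule K E) (v' : κ → E)
    (W' : κ → Submodule K E) (hv : ∀ i, v i ≠ 0) (hW : ∀ i, W i ≠ ⊤)
    (hv' : ∀ i, v' i ≠ 0) (hW' : ∀ i, W' i ≠ ⊤) :
    ∃ g : G, (∀ i, ρ g (v i) ∉ W i) ∧ ∀ i, ρ g⁻¹ (v' i) ∉ W' i := by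
  classical
  cases nonempty_fintype ι
  cases nonempty_fintype κ
  have hex : ∀ i, ∃ χ : Dual K E, χ ≠ 0 ∧ W' i ≤ LinearMap.ker χ := fun i =>
    Submodule.exists_le_ker_of_lt_top (W' i) (lt_top_iff_ne_top.2 (hW' i))
  choose χ hχ0 hχ using hex
  let σ : G →* Module.End K ((ι → E) × (κ → Dual K E)) :=
    { toFun := fun g => LinearMap.prodMap (LinearMap.pi fun i => ρ g ∘ₗ LinearMap.proj i)
        (LinearMap.pi fun i => dualRep ρ g ∘ₗ LinearMap.proj i)
      map_one' := by
        refine LinearMap.ext fun x => Prod.ext ?_ ?_ <;> funext i <;> simp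
      map_mul' := fun g g' => by
        refine LinearMap.ext fun x => Prod.ext ?_ ?_ <;> funext i <;> simp }
  have hσ1 : ∀ g x i, (σ g x).1 i = ρ g (x.1 i) := fun g x i => rfl
  have hσ2 : ∀ g x i, (σ g x).2 i = dualRep ρ g (x.2 i) := fun g x i => rfl
  by_contra hcon
  push Not at hcon
  let S1 : ι → Submodule K ((ι → E) × (κ → Dual K E)) := fun i =>
    (W i).comap (LinearMap.proj i ∘ₗ LinearMap.fst K _ _)
  let S2 : κ → Submodule K ((ι → E) × (κ → Dual K E)) := fun i =>
    (LinearMap.ker (Dual.eval K E (v' i))).comap (LinearMap.proj i ∘ₗ LinearMap.snd K _ _)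
  obtain ⟨H, U, g0, hH, hU, hg0, V, hV, hUV⟩ := cover σ (v, χ)
    (Finset.univ.image S1 ∪ Finset.univ.image S2) (by
      intro g
      by_cases h1 : ∀ i, ρ g (v i) ∉ W i
      · obtain ⟨i, hi⟩ := hcon g h1
        refine ⟨S2 i, by simp, ?_⟩
        have := hχ i hi
        exact this
      · push Not at h1
        obtain ⟨i, hi⟩ := h1
        exact ⟨S1 i, by simp, hi⟩)
  simp only [Finset.mem_union, Finset.mem_image, Finset.mem_univ, true_and] at hV
  rcases hV with ⟨i, rfl⟩ | ⟨i, rfl⟩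
  · have hinv : Inv ρ H (U.map (LinearMap.proj i ∘ₗ LinearMap.fst K (ι → E) (κ → Dual K E))) := by
      rintro g hg _ ⟨x, hx, rfl⟩
      exact ⟨σ g x, hU g hg x hx, rfl⟩
    rcases h H hH _ hinv with h1 | h1
    · have hm : (LinearMap.proj i ∘ₗ LinearMap.fst K (ι → E) (κ → Dual K E)) (σ g0 (v, χ)) ∈
        (U.map (LinearMap.proj i ∘ₗ LinearMap.fst K (ι → E) (κ → Dual K E))) :=
        Submodule.mem_map_of_mem hg0
      rw [h1, Submodule.mem_bot] at hm
      have hm' : ρ g0 (v i) = 0 := hm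
      exact hv i (rho_injective ρ g0 (by rw [hm', map_zero]))
    · apply hW i
      rw [eq_top_iff, ← h1, Submodule.map_le_iff_le_comap]
      exact hUV
  · have hinv : Inv (dualRep ρ) H
      (U.map (LinearMap.proj i ∘ₗ LinearMap.snd K (ι → E) (κ → Dual K E))) := by
      rintro g hg _ ⟨x, hx, rfl⟩
      exact ⟨σ g x, hU g hg x hx, rfl⟩
    rcases h.dual H hH _ hinv with h1 | h1
    · have hm : (LinearMap.proj i ∘ₗ LinearMap.snd K (ι → E) (κ → Dual K E)) (σ g0 (v, χ)) ∈
        (U.map (LinearMap.proj i ∘ₗ LinearMap.snd K (ι → E) (κ → Dual K E))) :=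
        Submodule.mem_map_of_mem hg0
      rw [h1, Submodule.mem_bot] at hm
      have hm' : dualRep ρ g0 (χ i) = 0 := hm
      exact hχ0 i (rho_injective (dualRep ρ) g0 (by rw [hm', map_zero]))
    · have h2 : (⊤ : Submodule K (Dual K E)) ≤ LinearMap.ker (Dual.eval K E (v' i)) := by
        rw [← h1, Submodule.map_le_iff_le_comap]
        exact hUV
      apply hv' i
      rw [← Module.forall_dual_apply_eq_zero_iff K]
      intro f
      exact h2 (Submodule.mem_top : f ∈ ⊤)

end PCGI


namespace PCGI

open Module Filter Topology

section nb
variable {K E ι : Type*} [NormedField K] [AddCommGroup E] [Module K E] [Fintype ι]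

/-- The coordinate norm. -/
noncomputable def nb (b : Basis ι K E) (x : E) : ℝ := ∑ i, ‖b.repr x i‖

variable (b : Basis ι K E)

lemma nb_nonneg (x : E) : 0 ≤ nb b x := Finset.sum_nonneg fun _ _ => norm_nonneg _

lemma nb_zero : nb b 0 = 0 := by simp [nb]

lemma nb_add_le (x y : E) : nb b (x + y) ≤ nb b x + nb b y := by
  simp only [nb, ← Finset.sum_add_distrib, map_add, Finsupp.add_apply]
  exact Finset.sum_le_sum fun _ _ => norm_add_le _ _

lemma nb_smul (c : K) (x : E) : nb b (c • x) = ‖c‖ * nb b x := by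
  simp [nb, Finset.mul_sum]

lemma nb_sum_le {κ : Type*} (s : Finset κ) (f : κ → E) :
    nb b (∑ i ∈ s, f i) ≤ ∑ i ∈ s, nb b (f i) := by
  classical
  induction s using Finset.induction_on with
  | empty => simp [nb_zero]
  | insert a s ha ih =>
    rw [Finset.sum_insert ha, Finset.sum_insert ha]
    exact (nb_add_le b _ _).trans (by gcongr)

lemma nb_pos {x : E} (hx : x ≠ 0) : 0 < nb b x := by
  refine lt_of_le_of_ne (nb_nonneg b x) fun h => hx ?_
  have := (Finset.sum_eq_zero_iff_of_nonneg (fun i _ => norm_nonneg (b.repr x i))).1 h.symm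
  apply b.repr.injective
  ext i
  simpa using this i (Finset.mem_univ i)

lemma coord_le_nb (x : E) (i : ι) : ‖b.repr x i‖ ≤ nb b x :=
  Finset.single_le_sum (f := fun i => ‖b.repr x i‖) (fun i _ => norm_nonneg _) (Finset.mem_univ i)

lemma nb_map_le {E' ι' : Type*} [AddCommGroup E'] [Module K E'] [Fintype ι'] (b' : Basis ι' K E')
    (T : E →ₗ[K] E') (x : E) : nb b' (T x) ≤ (∑ i, nb b' (T (b i))) * nb b x := by
  conv_lhs => rw [← b.sum_repr x, map_sum]
  refine (nb_sum_le b' _ _).trans ?_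
  rw [Finset.sum_mul]
  refine Finset.sum_le_sum fun i _ => ?_
  rw [map_smul, nb_smul, mul_comm]
  exact mul_le_mul_of_nonneg_left (coord_le_nb b x i) (nb_nonneg _ _)

lemma dual_le (χ : Dual K E) (x : E) : ‖χ x‖ ≤ (∑ i, ‖χ (b i)‖) * nb b x := by
  conv_lhs => rw [← b.sum_repr x, map_sum]
  refine (norm_sum_le _ _).trans ?_
  rw [Finset.sum_mul]
  refine Finset.sum_le_sum fun i _ => ?_
  rw [map_smul, smul_eq_mul, norm_mul, mul_comm]
  exact mul_le_mul_of_nonneg_left (coord_le_nb b x i) (norm_nonneg _)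

/-- Cone around a vector. -/
def Cone (p : E) (η : ℝ) : Set E := {v | ∃ s : K, s ≠ 0 ∧ nb b (v - s • p) ≤ η * ‖s‖}

/-- Subspace of vectors along which a sequence of functionals is small. -/
def nullSub (𝓤 : Filter ℕ) (L : ℕ → Dual K E) (γ : ℕ → ℝ) : Submodule K E where
  carrier := {v | Tendsto (fun k => ‖L k v‖ / γ k) 𝓤 (𝓝 0)}
  zero_mem' := by simpa using tendsto_const_nhds
  add_mem' := by
    intro x y hx hy
    have h := (hx.norm.add hy.norm)
    simp only [norm_zero, add_zero] at h
    refine squeeze_zero_norm (fun k => ?_) h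
    rw [norm_div, norm_div, norm_div, norm_norm, norm_norm, norm_norm, ← add_div, map_add]
    gcongr
    exact norm_add_le _ _
  smul_mem' := by
    intro c x hx
    have h := hx.const_mul ‖c‖
    rw [mul_zero] at h
    refine h.congr fun k => ?_
    simp [mul_div_assoc]

lemma mem_nullSub (𝓤 : Filter ℕ) (L : ℕ → Dual K E) (γ : ℕ → ℝ) (v : E) :
    v ∈ nullSub 𝓤 L γ ↔ Tendsto (fun k => ‖L k v‖ / γ k) 𝓤 (𝓝 0) := Iff.rfl

lemma contract_aux {G : Type*} [Group G] (ρ : G →* Module.End K E) (X : ℕ → G) (e : E)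
    (ψ : ℕ → Dual K E) (γ ε : ℕ → ℝ) (C : ℝ) (𝓤 : Ultrafilter ℕ) (hγ : ∀ k, 0 < γ k)
    (hC : 0 ≤ C)
    (h1 : ∀ k v, nb b (ρ (X k) v - ψ k v • e) ≤ ε k * γ k * nb b v)
    (h2 : ∀ k v, ‖ψ k v‖ ≤ C * γ k * nb b v) (hε : Tendsto ε 𝓤 (𝓝 0)) (hε0 : ∀ k, 0 ≤ ε k)
    (τ σ : G) (hy : ρ (τ⁻¹ * σ) e ∉ nullSub 𝓤 ψ γ) :
    ∀ᶠ η in 𝓝[>] (0 : ℝ), ∀ᶠ k in (𝓤 : Filter ℕ), ∀ v ∈ Cone b (ρ σ e) η,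
      ρ (τ * X k * τ⁻¹) v ∈ Cone b (ρ τ e) η := by
  rw [mem_nullSub, Metric.tendsto_nhds] at hy
  push Not at hy
  obtain ⟨ε0, hε0', hy⟩ := hy
  set y := ρ (τ⁻¹ * σ) e with hydef
  have hy' : ∀ᶠ k in (𝓤 : Filter ℕ), ε0 * γ k ≤ ‖ψ k y‖ := by
    have := Ultrafilter.frequently_iff_eventually.1 (by simpa using hy)
    filter_upwards [this] with k hk
    rw [abs_of_pos (hγ k)] at hk
    exact (le_div_iff₀ (hγ k)).1 hk
  obtain ⟨A, hA0, hA⟩ : ∃ A : ℝ, 0 ≤ A ∧ ∀ u, nb b (ρ τ⁻¹ u) ≤ A * nb b u :=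
    ⟨_, Finset.sum_nonneg fun i _ => nb_nonneg b _, nb_map_le b b (ρ τ⁻¹)⟩
  obtain ⟨B, hB0, hB⟩ : ∃ B : ℝ, 0 ≤ B ∧ ∀ u, nb b (ρ τ u) ≤ B * nb b u :=
    ⟨_, Finset.sum_nonneg fun i _ => nb_nonneg b _, nb_map_le b b (ρ τ)⟩
  have hη0 : 0 < min 1 (ε0 / (2 * (C * A + 1))) := by
    have : 0 ≤ C * A := mul_nonneg hC hA0
    positivity
  filter_upwards [Ioo_mem_nhdsGT hη0] with η hη
  obtain ⟨hη0, hη1⟩ := hη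
  have hη2 : η ≤ 1 := (hη1.trans_le (min_le_left _ _)).le
  have hη3 : C * A * η ≤ ε0 / 2 := by
    have : 0 ≤ C * A := mul_nonneg hC hA0
    have h3 := (hη1.trans_le (min_le_right _ _)).le
    rw [le_div_iff₀ (by positivity)] at h3
    nlinarith
  have hsm : ∀ᶠ k in (𝓤 : Filter ℕ), B * ε k * (nb b y + A) ≤ η * (ε0 / 2) := by
    have h := (hε.const_mul B).mul_const (nb b y + A)
    simp only [mul_zero, zero_mul] at h
    have hpos : 0 < η * (ε0 / 2) := by positivity
    filter_upwards [h.eventually (gt_mem_nhds hpos)] with k hk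
    exact hk.le
  filter_upwards [hy', hsm] with k hk1 hk2
  rintro v ⟨s, hs, hv⟩
  have hs' : 0 < ‖s‖ := norm_pos_iff.2 hs
  have hγk := hγ k
  set u := v - s • ρ σ e with hu
  have hz : ρ τ⁻¹ v = s • y + ρ τ⁻¹ u := by
    rw [hu, map_sub, map_smul, hydef, map_mul, Module.End.mul_apply]; abel
  set z := ρ τ⁻¹ v with hzdef
  have hu' : nb b (ρ τ⁻¹ u) ≤ A * (η * ‖s‖) := (hA u).trans (by gcongr)
  have hnz : nb b z ≤ ‖s‖ * (nb b y + A) := by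
    rw [hz]
    refine (nb_add_le b _ _).trans ?_
    rw [nb_smul, mul_add]
    have : A * (η * ‖s‖) ≤ ‖s‖ * A := by nlinarith [mul_nonneg hA0 hs'.le]
    linarith
  have hψ : ‖s‖ * γ k * (ε0 / 2) ≤ ‖ψ k z‖ := by
    have e1 : ψ k z = s * ψ k y + ψ k (ρ τ⁻¹ u) := by rw [hz, map_add, map_smul, smul_eq_mul]
    have e2 : ‖ψ k (ρ τ⁻¹ u)‖ ≤ C * γ k * (A * (η * ‖s‖)) :=
      (h2 k _).trans (mul_le_mul_of_nonneg_left hu' (by positivity))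
    have e3 : ‖s * ψ k y‖ ≤ ‖ψ k z‖ + ‖ψ k (ρ τ⁻¹ u)‖ := by
      have := norm_sub_le (ψ k z) (ψ k (ρ τ⁻¹ u))
      rwa [e1, add_sub_cancel_right, ← e1] at this
    rw [norm_mul] at e3
    have e4 : ‖s‖ * (ε0 * γ k) ≤ ‖s‖ * ‖ψ k y‖ := by gcongr
    have e5 : C * A * η * (γ k * ‖s‖) ≤ ε0 / 2 * (γ k * ‖s‖) := by gcongr
    nlinarith
  refine ⟨ψ k z, ?_, ?_⟩
  · rw [← norm_pos_iff]
    exact lt_of_lt_of_le (by positivity) hψ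
  · have : ρ (τ * X k * τ⁻¹) v - ψ k z • ρ τ e = ρ τ (ρ (X k) z - ψ k z • e) := by
      simp [hzdef]
    rw [this]
    calc _ ≤ B * (ε k * γ k * nb b z) := (hB _).trans (by gcongr; exact h1 k z)
      _ ≤ B * (ε k * γ k * (‖s‖ * (nb b y + A))) := by
          have := hε0 k
          gcongr
      _ = B * ε k * (nb b y + A) * (γ k * ‖s‖) := by ring
      _ ≤ η * (ε0 / 2) * (γ k * ‖s‖) := by gcongr
      _ = η * (‖s‖ * γ k * (ε0 / 2)) := by ring
      _ ≤ _ := by gcongr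

lemma cone_sep (p q : E) (hq : p ∉ Submodule.span K {q}) (hp : q ∉ Submodule.span K {p}) :
    ∀ᶠ η in 𝓝[>] (0 : ℝ), p ∉ Cone b q η := by
  obtain ⟨χ, hχq, hχp⟩ := Submodule.exists_le_ker_of_notMem hp
  have hχp' : χ p = 0 := hχp (Submodule.mem_span_singleton_self p)
  set C := ∑ i, ‖χ (b i)‖ with hC
  have hC0 : 0 ≤ C := Finset.sum_nonneg fun i _ => norm_nonneg _
  have hq0 : 0 < ‖χ q‖ := norm_pos_iff.2 hχq
  have : 0 < ‖χ q‖ / (C + 1) := by positivity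
  filter_upwards [Ioo_mem_nhdsGT this] with η hη
  rintro ⟨s, hs, hle⟩
  have h1 := dual_le b χ (p - s • q)
  rw [map_sub, map_smul, hχp', zero_sub, norm_neg, smul_eq_mul, norm_mul, ← hC] at h1
  have hs' : 0 < ‖s‖ := norm_pos_iff.2 hs
  have h2 := hη.2
  rw [lt_div_iff₀ (by positivity)] at h2
  have h3 : C * nb b (p - s • q) ≤ C * (η * ‖s‖) := by gcongr
  have h4 : ‖s‖ * ‖χ q‖ > ‖s‖ * (η * (C + 1)) := by gcongr
  nlinarith [mul_pos hs' hη.1]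

end nb

section main
variable {K G E ι : Type*} [NormedField K] [Group G] [AddCommGroup E] [Module K E] [Fintype ι]

lemma contract_seq (b : Basis ι K E) (ρ : G →* Module.End K E) (𝓤 : Ultrafilter ℕ)
    (h𝓤 : (𝓤 : Filter ℕ) ≤ atTop) (a f : G) (Λ : K) (hΛ : Λ ≠ 0) (e : E) (φ : Dual K E)
    (β : ℕ → ℝ) (hβ : β = fun k => ∑ i, nb b (ρ (a ^ k)⁻¹ (b i))) (hβ0 : ∀ k, 0 < β k)
    (hdom : ∀ x (χ : Dual K E), Tendsto (fun k : ℕ => (Λ ^ k)⁻¹ * χ (ρ (a ^ k) x)) atTop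
      (𝓝 (φ x * χ e)))
    (hbad : ¬ ∀ i, Tendsto (fun k => ‖φ (ρ f (ρ (a ^ k)⁻¹ (b i)))‖ / β k) 𝓤 (𝓝 0)) :
    ∃ Bad : Submodule K E, Bad ≠ ⊤ ∧ ∀ τ σ : G, ρ (τ⁻¹ * σ) e ∉ Bad →
      ∀ᶠ η in 𝓝[>] (0 : ℝ), ∀ᶠ k in (𝓤 : Filter ℕ), ∀ v ∈ Cone b (ρ σ e) η,
      ρ (τ * (a ^ k * f * (a ^ k)⁻¹) * τ⁻¹) v ∈ Cone b (ρ τ e) η := by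
  let ψ : ℕ → Dual K E := fun k => Λ ^ k • (φ ∘ₗ ρ f ∘ₗ ρ (a ^ k)⁻¹)
  let γ : ℕ → ℝ := fun k => ‖Λ‖ ^ k * β k
  have hΛ' : 0 < ‖Λ‖ := norm_pos_iff.2 hΛ
  have hγ : ∀ k, 0 < γ k := fun k => by have := hβ0 k; positivity
  have hquot : ∀ k v, ‖ψ k v‖ / γ k = ‖φ (ρ f (ρ (a ^ k)⁻¹ v))‖ / β k := by
    intro k v
    simp only [ψ, γ, LinearMap.smul_apply, LinearMap.comp_apply, smul_eq_mul, norm_mul, norm_pow]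
    rw [mul_div_mul_left _ _ (by positivity)]
  let T : ℕ → Module.End K E := fun k => (Λ ^ k)⁻¹ • ρ (a ^ k) - φ.smulRight e
  let δ : ℕ → ℝ := fun k => ∑ i, nb b (T k (b i))
  have hδ : Tendsto δ atTop (𝓝 0) := by
    have : Tendsto δ atTop (𝓝 (∑ i : ι, ∑ j : ι, 0)) := by
      refine tendsto_finsetSum _ fun i _ => tendsto_finsetSum _ fun j _ => ?_
      have h := (hdom (b i) (b.coord j)).sub_const (φ (b i) * b.coord j e)
      rw [sub_self] at h
      have := h.norm
      rw [norm_zero] at this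
      refine this.congr fun k => ?_
      simp [T]
    simpa using this
  obtain ⟨B, hB0, hB⟩ : ∃ B : ℝ, 0 ≤ B ∧ ∀ u, nb b (ρ f u) ≤ B * nb b u :=
    ⟨_, Finset.sum_nonneg fun i _ => nb_nonneg b _, nb_map_le b b (ρ f)⟩
  obtain ⟨C, hC0, hC⟩ : ∃ C : ℝ, 0 ≤ C ∧ ∀ u, ‖φ u‖ ≤ C * nb b u :=
    ⟨_, Finset.sum_nonneg fun i _ => norm_nonneg _, dual_le b φ⟩
  have hβv : ∀ k v, nb b (ρ (a ^ k)⁻¹ v) ≤ β k * nb b v := by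
    intro k v
    rw [hβ]
    exact nb_map_le b b (ρ (a ^ k)⁻¹) v
  have hfv : ∀ k v, nb b (ρ f (ρ (a ^ k)⁻¹ v)) ≤ B * (β k * nb b v) := fun k v =>
    (hB _).trans (by gcongr; exact hβv k v)
  have hδ0 : ∀ k, 0 ≤ δ k := fun k => Finset.sum_nonneg fun i _ => nb_nonneg b _
  refine ⟨nullSub 𝓤 ψ γ, ?_, fun τ σ hts => contract_aux b ρ (fun k => a ^ k * f * (a ^ k)⁻¹)
    e ψ γ (fun k => δ k * B) (C * B) 𝓤 hγ (by positivity) ?_ ?_ ?_ ?_ τ σ hts⟩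
  · intro htop
    apply hbad
    intro i
    have : b i ∈ nullSub 𝓤 ψ γ := htop ▸ Submodule.mem_top
    rw [mem_nullSub] at this
    exact this.congr fun k => hquot k _
  · intro k v
    set w := ρ f (ρ (a ^ k)⁻¹ v) with hw
    have h1 : ρ (a ^ k * f * (a ^ k)⁻¹) v - ψ k v • e = Λ ^ k • T k w := by
      have hne : Λ ^ k ≠ 0 := pow_ne_zero k hΛ
      simp only [T, ψ, LinearMap.smul_apply, LinearMap.comp_apply, LinearMap.sub_apply,
        LinearMap.smulRight_apply, smul_sub, smul_smul, smul_eq_mul, ← hw]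
      rw [mul_inv_cancel₀ hne, one_smul, map_mul, map_mul, Module.End.mul_apply,
        Module.End.mul_apply]
    rw [h1, nb_smul, norm_pow]
    calc _ ≤ ‖Λ‖ ^ k * (δ k * nb b w) := by gcongr; exact nb_map_le b b (T k) w
      _ ≤ ‖Λ‖ ^ k * (δ k * (B * (β k * nb b v))) := by
          have := hδ0 k
          gcongr
          exact hfv k v
      _ = _ := by simp only [γ]; ring
  · intro k v
    simp only [ψ, LinearMap.smul_apply, LinearMap.comp_apply, smul_eq_mul, norm_mul, norm_pow]
    calc _ ≤ ‖Λ‖ ^ k * (C * (B * (β k * nb b v))) := by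
          gcongr
          exact (hC _).trans (by gcongr; exact hfv k v)
      _ = _ := by simp only [γ]; ring
  · have := (hδ.mono_left h𝓤).mul_const B
    rwa [zero_mul] at this
  · intro k
    exact mul_nonneg (hδ0 k) hB0

theorem free_of_dom [FiniteDimensional K E] (ρ : G →* Module.End K E) (hirr : StrIrr ρ)
    (hdim : 2 ≤ finrank K E) (a : G) (Λ : K) (hΛ : Λ ≠ 0) (e : E) (he : e ≠ 0)
    (φ : Dual K E) (hφ : φ ≠ 0)
    (hdom : ∀ x (χ : Dual K E), Tendsto (fun k : ℕ => (Λ ^ k)⁻¹ * χ (ρ (a ^ k) x)) atTop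
      (𝓝 (φ x * χ e))) :
    ∃ f : FreeGroup (Fin 2) →* G, Function.Injective f := by
  classical
  let b := Module.finBasis K E
  let 𝓤 : Ultrafilter ℕ := hyperfilter ℕ
  have h𝓤 : (𝓤 : Filter ℕ) ≤ atTop := Nat.hyperfilter_le_atTop
  let β : ℕ → ℝ := fun k => ∑ i, nb b (ρ (a ^ k)⁻¹ (b i))
  haveI : Nonempty (Fin (finrank K E)) := ⟨⟨0, by omega⟩⟩
  have hβ0 : ∀ k, 0 < β k := fun k => Finset.sum_pos (fun i _ => nb_pos b (by
    intro h
    exact b.ne_zero i (rho_injective ρ _ (by rw [h, map_zero])))) Finset.univ_nonempty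
  let Bs : Submodule K (Dual K E) :=
    ⨅ i, nullSub 𝓤 (fun k => Dual.eval K E (ρ (a ^ k)⁻¹ (b i))) β
  have hBs : Bs ≠ ⊤ := by
    intro htop
    have h1 : ∀ i j, Tendsto (fun k => ‖b.coord j (ρ (a ^ k)⁻¹ (b i))‖ / β k) 𝓤 (𝓝 0) := by
      intro i j
      have : b.coord j ∈ Bs := htop ▸ Submodule.mem_top
      rw [Submodule.mem_iInf] at this
      exact this i
    have h2 : Tendsto (fun k => ∑ i, ∑ j, ‖b.coord j (ρ (a ^ k)⁻¹ (b i))‖ / β k) 𝓤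
      (𝓝 (∑ i : Fin (finrank K E), ∑ j : Fin (finrank K E), 0)) :=
      tendsto_finsetSum _ fun i _ => tendsto_finsetSum _ fun j _ => h1 i j
    have h3 : (fun k => ∑ i, ∑ j, ‖b.coord j (ρ (a ^ k)⁻¹ (b i))‖ / β k) = fun k => 1 := by
      funext k
      simp only [← Finset.sum_div]
      exact div_self (hβ0 k).ne'
    rw [h3] at h2
    simp at h2
  have hco : Bs.dualCoannihilator ≠ ⊥ := by
    intro h
    apply hBs
    rw [← Subspace.dualCoannihilator_dualAnnihilator_eq (W := Bs), h, Submodule.dualAnnihilator_bot]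
  obtain ⟨x, hx, hx0⟩ := Submodule.exists_mem_ne_zero_of_ne_bot hco
  rw [Submodule.mem_dualCoannihilator] at hx
  have hker : LinearMap.ker φ ≠ ⊤ := fun h => hφ (LinearMap.ker_eq_top.1 h)
  obtain ⟨f, hf1, hf2⟩ := general_position hirr (fun _ : Unit => x) (fun _ => LinearMap.ker φ)
    (fun _ : Unit => x) (fun _ => LinearMap.ker φ) (fun _ => hx0) (fun _ => hker)
    (fun _ => hx0) (fun _ => hker)
  have key : ∀ f : G, ρ f x ∉ LinearMap.ker φ →
      ¬ ∀ i, Tendsto (fun k => ‖φ (ρ f (ρ (a ^ k)⁻¹ (b i)))‖ / β k) 𝓤 (𝓝 0) := by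
    intro f hf hcon
    apply hf
    refine hx (φ ∘ₗ ρ f) ?_
    rw [Submodule.mem_iInf]
    exact hcon
  obtain ⟨B1, hB1, hc1⟩ := contract_seq b ρ 𝓤 h𝓤 a f Λ hΛ e φ β rfl hβ0 hdom (key f (hf1 ()))
  obtain ⟨B2, hB2, hc2⟩ := contract_seq b ρ 𝓤 h𝓤 a f⁻¹ Λ hΛ e φ β rfl hβ0 hdom (key _ (hf2 ()))
  -- the good relation
  let Good : G → G → Prop := fun g h => ρ (g⁻¹ * h) e ∉ B1 ∧ ρ (g⁻¹ * h) e ∉ B2 ∧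
    ρ h e ∉ Submodule.span K {ρ g e}
  have hspan : ∀ v : E, Submodule.span K {v} ≠ ⊤ := by
    intro v h
    have h1 := finrank_span_le_card (R := K) ({v} : Set E)
    rw [Set.toFinset_singleton, Finset.card_singleton] at h1
    rw [h, finrank_top] at h1
    omega
  have hmapne : ∀ (g : G) (W : Submodule K E), W ≠ ⊤ → W.comap (ρ g) ≠ ⊤ := by
    intro g W hW h
    apply hW
    rw [eq_top_iff]
    intro y _
    have : ρ g⁻¹ y ∈ W.comap (ρ g) := h ▸ Submodule.mem_top
    rwa [Submodule.mem_comap, rho_apply_inv] at this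
  have hge : ∀ g : G, ρ g e ≠ 0 := fun g h => he (rho_injective ρ g (by rw [h, map_zero]))
  have hex : ∀ s : Finset G, ∃ y : G, ∀ g ∈ s, Good g y ∧ Good y g := by
    intro s
    obtain ⟨y, hy1, hy2⟩ := general_position hirr
      (ι := s × Fin 3) (κ := s × Fin 2) (fun _ => e)
      (fun p => ![B1.comap (ρ (p.1 : G)⁻¹), B2.comap (ρ (p.1 : G)⁻¹),
        Submodule.span K {ρ (p.1 : G) e}] p.2)
      (fun p => ρ (p.1 : G) e) (fun p => ![B1, B2] p.2) (fun _ => he)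
      (by
        rintro ⟨g, i⟩
        fin_cases i
        · exact hmapne _ _ hB1
        · exact hmapne _ _ hB2
        · exact hspan _) (fun p => hge _)
      (by
        rintro ⟨g, i⟩
        fin_cases i
        · exact hB1
        · exact hB2)
    refine ⟨y, fun g hg => ?_⟩
    have a1 := hy1 (⟨g, hg⟩, 0)
    have a2 := hy1 (⟨g, hg⟩, 1)
    have a3 := hy1 (⟨g, hg⟩, 2)
    have a4 := hy2 (⟨g, hg⟩, 0)
    have a5 := hy2 (⟨g, hg⟩, 1)
    simp only [Matrix.cons_val, Submodule.mem_comap] at a1 a2 a3 a4 a5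
    refine ⟨⟨?_, ?_, a3⟩, ?_, ?_, ?_⟩
    · rwa [map_mul, Module.End.mul_apply]
    · rwa [map_mul, Module.End.mul_apply]
    · rwa [map_mul, Module.End.mul_apply]
    · rwa [map_mul, Module.End.mul_apply]
    · intro h
      obtain ⟨c, hc⟩ := Submodule.mem_span_singleton.1 h
      apply a3
      have hc0 : c ≠ 0 := by
        rintro rfl
        exact hge g (by rw [← hc, zero_smul])
      refine Submodule.mem_span_singleton.2 ⟨c⁻¹, ?_⟩
      rw [← hc, smul_smul, inv_mul_cancel₀ hc0, one_smul]
  obtain ⟨τ, hτ⟩ : ∃ τ : ℕ → G, Pairwise fun i j => Good (τ i) (τ j) := by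
    haveI : Std.Symm (fun g h => Good g h ∧ Good h g) := ⟨fun g h hh => ⟨hh.2, hh.1⟩⟩
    obtain ⟨τ, -, hτ⟩ := exists_seq_of_forall_finset_exists' (fun _ : G => True)
      (fun g h => Good g h ∧ Good h g)
      (fun s _ => (hex s).imp fun y hy => ⟨trivial, hy⟩)
    exact ⟨τ, fun i j hij => (hτ hij).1⟩
  -- choose η
  have hη : ∀ᶠ η in 𝓝[>] (0 : ℝ), ∀ i j : Fin 5, i ≠ j →
      (∀ᶠ k in (𝓤 : Filter ℕ), ∀ v ∈ Cone b (ρ (τ j) e) η,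
        ρ (τ i * (a ^ k * f * (a ^ k)⁻¹) * (τ i)⁻¹) v ∈ Cone b (ρ (τ i) e) η) ∧
      (∀ᶠ k in (𝓤 : Filter ℕ), ∀ v ∈ Cone b (ρ (τ j) e) η,
        ρ (τ i * (a ^ k * f⁻¹ * (a ^ k)⁻¹) * (τ i)⁻¹) v ∈ Cone b (ρ (τ i) e) η) ∧
      ρ (τ i) e ∉ Cone b (ρ (τ j) e) η := by
    rw [eventually_all]; intro i
    rw [eventually_all]; intro j
    by_cases hij : i = j
    · simp [hij]
    have hij' : (i : ℕ) ≠ j := fun h => hij (Fin.ext h)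
    have g1 := hτ hij'
    have g2 := hτ hij'.symm
    filter_upwards [hc1 _ _ g1.1, hc2 _ _ g1.2.1, cone_sep b _ _ g2.2.2 g1.2.2] with η e1 e2 e3 _
    exact ⟨e1, e2, e3⟩
  obtain ⟨η, hη, hηpos⟩ := (hη.and self_mem_nhdsWithin).exists
  have hk : ∀ᶠ k in (𝓤 : Filter ℕ), ∀ i j : Fin 5, i ≠ j →
      (∀ v ∈ Cone b (ρ (τ j) e) η,
        ρ (τ i * (a ^ k * f * (a ^ k)⁻¹) * (τ i)⁻¹) v ∈ Cone b (ρ (τ i) e) η) ∧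
      (∀ v ∈ Cone b (ρ (τ j) e) η,
        ρ (τ i * (a ^ k * f⁻¹ * (a ^ k)⁻¹) * (τ i)⁻¹) v ∈ Cone b (ρ (τ i) e) η) := by
    rw [eventually_all]; intro i
    rw [eventually_all]; intro j
    by_cases hij : i = j
    · simp [hij]
    filter_upwards [(hη i j hij).1, (hη i j hij).2.1] with k e1 e2 _
    exact ⟨e1, e2⟩
  obtain ⟨k, hk⟩ := hk.exists
  let X : Fin 5 → G := fun i => τ i * (a ^ k * f * (a ^ k)⁻¹) * (τ i)⁻¹
  let C : Fin 5 → Set E := fun i => Cone b (ρ (τ i) e) η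
  have hX : ∀ i j, i ≠ j → ∀ v ∈ C j, ρ (X i) v ∈ C i := fun i j hij => (hk i j hij).1
  have hX' : ∀ i j, i ≠ j → ∀ v ∈ C j, ρ (X i)⁻¹ v ∈ C i := by
    intro i j hij v hv
    have := (hk i j hij).2 v hv
    have h2 : (X i)⁻¹ = τ i * (a ^ k * f⁻¹ * (a ^ k)⁻¹) * (τ i)⁻¹ := by
      simp only [X]; group
    rw [h2]
    exact this
  let i1 : Fin 2 → Fin 5 := ![0, 2]
  let i2 : Fin 2 → Fin 5 := ![1, 3]
  let D : Fin 2 × Bool → Set E := fun l => if l.2 then C (i1 l.1) else C (i2 l.1)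
  let g : Fin 2 → G := fun i => X (i1 i) * X (i2 i)
  letI act : MulAction G E :=
    { smul := fun g x => ρ g x
      one_smul := fun x => by
        change ρ 1 x = x
        simp
      mul_smul := fun g h x => by
        change ρ (g * h) x = ρ g (ρ h x)
        simp }
  have hsm : ∀ (g : G) (x : E), g • x = ρ g x := fun _ _ => rfl
  have hstep : ∀ (l : Fin 2 × Bool) (j : Fin 5), (l.2 = true → j ≠ i2 l.1) →
      (l.2 = false → j ≠ i1 l.1) → ∀ x ∈ C j, letter g l • x ∈ D l := by
    rintro ⟨i, _ | _⟩ j h1 h2 x hx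
    · have h2' : j ≠ i1 i := h2 rfl
      have : letter g (i, false) = (X (i2 i))⁻¹ * (X (i1 i))⁻¹ := by simp [letter, g]
      rw [this, hsm, map_mul, Module.End.mul_apply]
      refine hX' _ (i1 i) ?_ _ (hX' _ j h2'.symm x hx)
      fin_cases i <;> decide
    · have h1' : j ≠ i2 i := h1 rfl
      have : letter g (i, true) = X (i1 i) * X (i2 i) := by simp [letter, g]
      rw [this, hsm, map_mul, Module.End.mul_apply]
      refine hX _ (i2 i) ?_ _ (hX _ j h1'.symm x hx)
      fin_cases i <;> decide
  have d4 : (∀ i, (4 : Fin 5) ≠ i1 i) ∧ ∀ i, (4 : Fin 5) ≠ i2 i := by decide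
  have d12 : ∀ i i', i1 i ≠ i2 i' := by decide
  have d11 : ∀ i i', i ≠ i' → i1 i ≠ i1 i' := by decide
  have d22 : ∀ i i', i ≠ i' → i2 i ≠ i2 i' := by decide
  refine ⟨FreeGroup.lift g, pingpong g D (ρ (τ (4 : Fin 5)) e) ?_ ?_ ?_⟩
  · rintro ⟨i, _ | _⟩
    · refine (hη 4 (i2 i) ?_).2.2
      fin_cases i <;> decide
    · refine (hη 4 (i1 i) ?_).2.2
      fin_cases i <;> decide
  · intro l
    refine hstep l 4 ?_ ?_ _ ⟨1, one_ne_zero, ?_⟩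
    · intro _; exact d4.2 l.1
    · intro _; exact d4.1 l.1
    · have h0 : (0 : ℝ) < η := hηpos
      simp [nb_zero, h0.le]
  · rintro ⟨i, s⟩ ⟨i', s'⟩ hne x hx
    rcases s' with _ | _
    · refine hstep _ (i2 i') ?_ ?_ x hx
      · rintro (rfl : s = true)
        have : i' ≠ i := fun h => hne (by simp [h])
        exact d22 i' i this
      · intro _
        exact fun h => d12 i i' h.symm
    · refine hstep _ (i1 i') ?_ ?_ x hx
      · intro _
        exact d12 i' i
      · rintro (rfl : s = false)
        have : i' ≠ i := fun h => hne (by simp [h])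
        exact d11 i' i this

end main

end PCGI


namespace PCGI

open Module Filter Topology

section
variable {K V ι : Type*} [NormedField K] [AddCommGroup V] [Module K V] [Fintype ι]

/-- Vectors with orbit growth at most `r ^ k`. -/
def growthSub (b : Basis ι K V) (T : Module.End K V) (r : ℝ) : Submodule K V where
  carrier := {v | ∃ C : ℝ, ∀ k : ℕ, nb b ((T ^ k) v) ≤ C * r ^ k}
  zero_mem' := ⟨0, fun k => by simp [nb_zero]⟩
  add_mem' := by
    rintro x y ⟨C, hC⟩ ⟨D, hD⟩
    refine ⟨C + D, fun k => ?_⟩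
    rw [map_add, add_mul]
    exact (nb_add_le b _ _).trans (add_le_add (hC k) (hD k))
  smul_mem' := by
    rintro c x ⟨C, hC⟩
    refine ⟨‖c‖ * C, fun k => ?_⟩
    rw [map_smul, nb_smul, mul_assoc]
    exact mul_le_mul_of_nonneg_left (hC k) (norm_nonneg c)

lemma gen_growth (b : Basis ι K V) (T : Module.End K V) (μ : K) (r : ℝ) (hr : ‖μ‖ < r) :
    T.maxGenEigenspace μ ≤ growthSub b T r := by
  have hr0 : 0 < r := (norm_nonneg μ).trans_lt hr
  intro v hv
  rw [Module.End.mem_maxGenEigenspace] at hv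
  obtain ⟨n, hn⟩ := hv
  induction n generalizing v with
  | zero =>
    have : v = 0 := by simpa using hn
    rw [this]; exact Submodule.zero_mem _
  | succ n ih =>
    obtain ⟨C, hC⟩ := ih (v := (T - μ • 1) v) (by rw [← Module.End.mul_apply, ← pow_succ]; exact hn)
    set u := (T - μ • 1) v with hu
    have hTv : T v = μ • v + u := by simp [hu]
    refine ⟨max (nb b v) (C / (r - ‖μ‖)), fun k => ?_⟩
    set D := max (nb b v) (C / (r - ‖μ‖)) with hD
    have hD1 : C ≤ D * (r - ‖μ‖) := by
      rw [← div_le_iff₀ (by linarith)]; exact le_max_right _ _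
    induction k with
    | zero => simp [hD]
    | succ k ihk =>
      have : (T ^ (k + 1)) v = μ • (T ^ k) v + (T ^ k) u := by
        rw [pow_succ, Module.End.mul_apply, hTv, map_add, map_smul]
      rw [this]
      calc _ ≤ ‖μ‖ * nb b ((T ^ k) v) + nb b ((T ^ k) u) := by
            refine (nb_add_le b _ _).trans ?_
            rw [nb_smul]
        _ ≤ ‖μ‖ * (D * r ^ k) + C * r ^ k := by gcongr; exact hC k
        _ = (‖μ‖ * D + C) * r ^ k := by ring
        _ ≤ (D * r) * r ^ k := by gcongr; linarith
        _ = _ := by ring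

lemma multilinear_bound {d : ℕ} (b : Basis ι K V) (f : MultilinearMap K (fun _ : Fin d => V) K) :
    ∃ C : ℝ, 0 ≤ C ∧ ∀ w : Fin d → V, ‖f w‖ ≤ C * ∏ i, nb b (w i) := by
  classical
  refine ⟨∑ σ : Fin d → ι, ‖f (fun i => b (σ i))‖, Finset.sum_nonneg fun _ _ => norm_nonneg _,
    fun w => ?_⟩
  have hw : w = fun i => ∑ j, b.repr (w i) j • b j := funext fun i => (b.sum_repr (w i)).symm
  conv_lhs => rw [hw, f.map_sum]
  refine (norm_sum_le _ _).trans ?_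
  rw [Finset.sum_mul]
  refine Finset.sum_le_sum fun σ _ => ?_
  rw [f.map_smul_univ, smul_eq_mul, norm_mul, norm_prod, mul_comm]
  refine mul_le_mul_of_nonneg_left ?_ (norm_nonneg _)
  exact Finset.prod_le_prod (fun _ _ => norm_nonneg _) fun i _ => coord_le_nb b _ _

theorem dom_ext [IsAlgClosed K] [FiniteDimensional K V] (T : Module.End K V) (t : K)
    (ht : T.HasEigenvalue t) (h1 : 1 < ‖t‖) :
    ∃ d ≤ finrank K V, ∃ Λ : K, 1 < ‖Λ‖ ∧ ∃ (e : ⋀[K]^d V) (φ : Dual K (⋀[K]^d V)), φ e = 1 ∧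
      ∀ x (χ : Dual K (⋀[K]^d V)),
        Tendsto (fun k : ℕ => (Λ ^ k)⁻¹ * χ (exteriorPower.map d (T ^ k) x)) atTop
          (𝓝 (φ x * χ e)) := by
  classical
  let b := Module.finBasis K V
  have hfin : Set.Finite {μ | T.HasEigenvalue μ} := T.finite_hasEigenvalue
  obtain ⟨m, hm, hmax⟩ := Set.exists_max_image _ (fun μ : K => ‖μ‖) hfin ⟨t, ht⟩
  set R := ‖m‖ with hR
  have hR1 : 1 < R := h1.trans_le (hmax t ht)
  have hR0 : 0 < R := one_pos.trans hR1
  let S1 : Set K := {μ | ‖μ‖ = R}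
  let P : Submodule K V := ⨆ μ ∈ S1, T.maxGenEigenspace μ
  let Q : Submodule K V := ⨆ μ ∈ S1ᶜ, T.maxGenEigenspace μ
  have hind := T.independent_maxGenEigenspace
  have hdisj : Disjoint P Q := hind.disjoint_biSup_biSup disjoint_compl_right
  have hcod : P ⊔ Q = ⊤ := by
    rw [eq_top_iff, ← T.iSup_maxGenEigenspace_eq_top]
    refine iSup_le fun μ => ?_
    by_cases hμ : μ ∈ S1
    · exact le_sup_of_le_left (le_biSup (fun μ => T.maxGenEigenspace μ) hμ)
    · exact le_sup_of_le_right (le_biSup (fun μ => T.maxGenEigenspace μ) (Set.mem_compl hμ))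
  have hcompl : IsCompl P Q := ⟨hdisj, codisjoint_iff.2 hcod⟩
  have hne_eig : ∀ μ, ¬ T.HasEigenvalue μ → T.maxGenEigenspace μ = ⊥ := by
    intro μ hμ
    by_contra h
    have h2 : T.HasUnifEigenvalue μ ⊤ := h
    exact hμ (h2.lt zero_lt_one)
  -- the small radius
  obtain ⟨r, hr0, hrR, hr⟩ : ∃ r : ℝ, 0 < r ∧ r < R ∧ Q ≤ growthSub b T r := by
    let s := (hfin.toFinset.filter (fun μ : K => ‖μ‖ ≠ R)).image (fun μ : K => ‖μ‖)
    have hs : ∀ x ∈ insert 0 s, x < R := by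
      intro x hx
      rw [Finset.mem_insert] at hx
      rcases hx with rfl | hx
      · exact hR0
      · simp only [s, Finset.mem_image, Finset.mem_filter, Set.Finite.mem_toFinset] at hx
        obtain ⟨μ, ⟨hμ, hμR⟩, rfl⟩ := hx
        exact lt_of_le_of_ne (hmax μ hμ) hμR
    let x0 := (insert 0 s).max' (Finset.insert_nonempty _ _)
    have hx0 : x0 < R := hs _ (Finset.max'_mem _ _)
    obtain ⟨r, hr1, hr2⟩ := exists_between hx0
    have hr3 : ∀ x ∈ insert 0 s, x < r := fun x hx => (Finset.le_max' _ _ hx).trans_lt hr1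
    refine ⟨r, hr3 0 (Finset.mem_insert_self _ _), hr2, ?_⟩
    refine iSup₂_le fun μ hμ => ?_
    by_cases he : T.HasEigenvalue μ
    · apply gen_growth
      refine hr3 _ (Finset.mem_insert_of_mem ?_)
      simp only [s, Finset.mem_image, Finset.mem_filter, Set.Finite.mem_toFinset]
      exact ⟨μ, ⟨he, hμ⟩, rfl⟩
    · rw [hne_eig μ he]; exact bot_le
  -- P
  have hPinv : ∀ x ∈ P, T x ∈ P := by
    intro x hx
    have : P ≤ P.comap T := by
      refine iSup₂_le fun μ hμ y hy => ?_
      have h3 : T y ∈ T.maxGenEigenspace μ := Module.End.mapsTo_maxGenEigenspace_of_comm (Commute.refl T) μ hy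
      exact Submodule.mem_iSup_of_mem μ (Submodule.mem_iSup_of_mem hμ h3)
    exact this hx
  let TP : Module.End K P := T.restrict hPinv
  let d := finrank K P
  let p : Basis (Fin d) K P := Module.finBasis K P
  let Λ : K := LinearMap.det TP
  have hroots : ∀ μ ∈ TP.charpoly.roots, ‖μ‖ = R := by
    intro μ hμ
    have h2 : TP.HasEigenvalue μ := by
      rw [Module.End.hasEigenvalue_iff_isRoot_charpoly]
      exact (Polynomial.mem_roots'.1 hμ).2
    obtain ⟨⟨x, hxP⟩, hx⟩ := h2.exists_hasEigenvector
    have hx0 : x ≠ 0 := fun h => hx.2 (Subtype.ext h)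
    have hTx : T x = μ • x := congrArg Subtype.val hx.apply_eq_smul
    by_contra hne
    have hmem : x ∈ Q := by
      refine Submodule.mem_iSup_of_mem μ (Submodule.mem_iSup_of_mem (hne : μ ∈ S1ᶜ) ?_)
      rw [Module.End.mem_maxGenEigenspace]
      exact ⟨1, by simp [hTx]⟩
    exact hx0 ((Submodule.disjoint_def.1 hdisj) x hxP hmem)
  have hΛ : ‖Λ‖ = R ^ d := by
    have h2 := Module.End.det_eq_prod_roots_charpoly_of_splits (f := TP) (IsAlgClosed.splits _)
    have h3 : Multiset.card TP.charpoly.roots = d := by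
      rw [IsAlgClosed.card_roots_eq_natDegree, LinearMap.charpoly_natDegree]
    change ‖LinearMap.det TP‖ = _
    rw [h2]
    have h4 : ∀ s : Multiset K, (∀ μ ∈ s, ‖μ‖ = R) → ‖s.prod‖ = R ^ Multiset.card s := by
      intro s
      induction s using Multiset.induction_on with
      | empty => simp
      | cons a s ih =>
        intro h
        rw [Multiset.prod_cons, norm_mul, h a (Multiset.mem_cons_self _ _),
          ih fun μ hμ => h μ (Multiset.mem_cons_of_mem hμ), Multiset.card_cons, pow_succ']
    rw [h4 _ hroots, h3]
  have hd0 : d ≠ 0 := by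
    intro h
    obtain ⟨x, hx⟩ := Module.End.HasEigenvalue.exists_hasEigenvector hm
    have hxP : x ∈ P := by
      refine Submodule.mem_iSup_of_mem m (Submodule.mem_iSup_of_mem (rfl : m ∈ S1) ?_)
      rw [Module.End.mem_maxGenEigenspace]
      exact ⟨1, by simp [hx.apply_eq_smul]⟩
    have : P = ⊥ := Submodule.finrank_eq_zero.1 h
    rw [this] at hxP
    exact hx.2 hxP
  have hΛ1 : 1 < ‖Λ‖ := by rw [hΛ]; exact one_lt_pow₀ hR1 hd0
  have hΛ0 : Λ ≠ 0 := norm_pos_iff.1 (one_pos.trans hΛ1)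
  -- the large radius
  obtain ⟨R', hR'1, hR'2⟩ : ∃ R', R < R' ∧ R' ^ (d - 1) * r < R ^ d := by
    have hc : Tendsto (fun x : ℝ => x ^ (d - 1) * r) (𝓝[>] R) (𝓝 (R ^ (d - 1) * r)) :=
      ((continuous_pow (d - 1)).mul continuous_const).continuousAt.tendsto.mono_left
        nhdsWithin_le_nhds
    have hlt : R ^ (d - 1) * r < R ^ d := by
      conv_rhs => rw [← Nat.succ_pred_eq_of_ne_zero hd0, pow_succ]
      exact mul_lt_mul_of_pos_left hrR (by positivity)
    obtain ⟨x, hx1, hx2⟩ := ((hc.eventually (gt_mem_nhds hlt)).and self_mem_nhdsWithin).exists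
    exact ⟨x, hx2, hx1⟩
  have hR'0 : 0 < R' := hR0.trans hR'1
  have hPgrow : P ≤ growthSub b T R' := iSup₂_le fun μ hμ =>
    gen_growth b T μ R' (by rw [show ‖μ‖ = R from hμ]; exact hR'1)
  have hQgrow : Q ≤ growthSub b T R' := by
    intro x hx
    obtain ⟨C, hC⟩ := hr hx
    refine ⟨C, fun k => (hC k).trans ?_⟩
    have hC0 : 0 ≤ C := by
      have := (nb_nonneg b _).trans (hC 0)
      simpa using this
    gcongr
    exact (hrR.trans hR'1).le
  let proj : V →ₗ[K] P := Submodule.linearProjOfIsCompl P Q hcompl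
  let e : ⋀[K]^d V := exteriorPower.ιMulti K d (fun i => (p i : V))
  let φ : Dual K (⋀[K]^d V) :=
    exteriorPower.alternatingMapLinearEquiv (p.det.compLinearMap proj)
  have hφ : ∀ v : Fin d → V, φ (exteriorPower.ιMulti K d v) = p.det (fun i => proj (v i)) := by
    intro v
    simp only [φ, exteriorPower.alternatingMapLinearEquiv_apply_ιMulti]
    rfl
  refine ⟨d, Submodule.finrank_le P, Λ, hΛ1, e, φ, ?_, ?_⟩
  · rw [hφ]
    have : (fun i => proj (p i : V)) = p := by
      funext i
      exact Submodule.linearProjOfIsCompl_apply_left hcompl (p i)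
    rw [this, Basis.det_self]
  · intro x χ
    have hspan : x ∈ Submodule.span K (exteriorPower.ιMulti K d ''
        {a | Set.range a ⊆ (P : Set V) ∪ Q}) := by
      rw [exteriorPower.ιMulti_span_of_span]
      · trivial
      · rw [Submodule.span_union, Submodule.span_eq, Submodule.span_eq, hcod]
    induction hspan using Submodule.span_induction with
    | zero => simpa using tendsto_const_nhds
    | add x y _ _ hx hy =>
      have := hx.add hy
      simpa only [map_add, mul_add, add_mul] using this
    | smul c x _ hx =>
      have := hx.const_mul c
      refine (this.congr fun k => ?_).trans (le_of_eq ?_)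
      · simp only [map_smul, smul_eq_mul]; ring
      · simp only [map_smul, smul_eq_mul]; ring_nf
    | mem x hx =>
      obtain ⟨v, hv, rfl⟩ := hx
      have hv' : ∀ i, v i ∈ P ∨ v i ∈ Q := fun i => hv (Set.mem_range_self i)
      let F : V [⋀^Fin d]→ₗ[K] K := χ.compAlternatingMap (exteriorPower.ιMulti K d)
      have hFk : ∀ k, χ (exteriorPower.map d (T ^ k) (exteriorPower.ιMulti K d v)) =
          F (fun i => (T ^ k) (v i)) := by
        intro k
        rw [exteriorPower.map_apply_ιMulti]; rfl
      simp only [hFk]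
      by_cases hall : ∀ i, v i ∈ P
      · let v' : Fin d → P := fun i => ⟨v i, hall i⟩
        have hTk : ∀ k (y : P), ((TP ^ k) y : V) = (T ^ k) y := by
          intro k
          induction k with
          | zero => intro y; simp
          | succ k ih =>
            intro y
            rw [pow_succ, pow_succ, Module.End.mul_apply, Module.End.mul_apply, ih]
            rfl
        have hg := AlternatingMap.eq_smul_basis_det p (F.compLinearMap P.subtype)
        have hval : ∀ k, F (fun i => (T ^ k) (v i)) = χ e * (Λ ^ k * p.det v') := by
          intro k
          have h5 : F (fun i => (T ^ k) (v i)) = (F.compLinearMap P.subtype) ((TP ^ k) ∘ v') := by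
            rw [AlternatingMap.compLinearMap_apply]
            congr 1
            funext i
            exact (hTk k (v' i)).symm
          rw [h5, hg, AlternatingMap.smul_apply, Basis.det_comp, map_pow, smul_eq_mul]
          rfl
        have h6 : φ (exteriorPower.ιMulti K d v) = p.det v' := by
          rw [hφ]
          congr 1
          funext i
          exact Submodule.linearProjOfIsCompl_apply_left hcompl (v' i)
        rw [h6]
        refine tendsto_const_nhds.congr fun k => ?_
        rw [hval]
        field_simp
      · push Not at hall
        obtain ⟨i0, hi0⟩ := hall
        have hi0Q : v i0 ∈ Q := (hv' i0).resolve_left hi0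
        have h6 : φ (exteriorPower.ιMulti K d v) = 0 := by
          rw [hφ]
          refine AlternatingMap.map_coord_zero _ i0 ?_
          exact (Submodule.linearProjOfIsCompl_apply_eq_zero_iff hcompl).2 hi0Q
        rw [h6, zero_mul]
        have hgr : ∀ i, ∃ C : ℝ, 0 ≤ C ∧ ∀ k : ℕ, nb b ((T ^ k) (v i)) ≤
            C * (if i = i0 then r else R') ^ k := by
          intro i
          have : v i ∈ growthSub b T (if i = i0 then r else R') := by
            split_ifs with h
            · rw [h]; exact hr hi0Q
            · rcases hv' i with h2 | h2
              · exact hPgrow h2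
              · exact hQgrow h2
          obtain ⟨C, hC⟩ := this
          refine ⟨C, ?_, hC⟩
          have := (nb_nonneg b _).trans (hC 0)
          simpa using this
        choose C hC0 hC using hgr
        obtain ⟨D, hD0, hD⟩ := multilinear_bound b F.toMultilinearMap
        set q := R' ^ (d - 1) * r with hq
        have hprod : ∀ k : ℕ, ∏ i, (C i * (if i = i0 then r else R') ^ k) = (∏ i, C i) * q ^ k := by
          intro k
          rw [Finset.prod_mul_distrib, Finset.prod_pow]
          congr 2
          rw [Finset.prod_ite, Finset.prod_const, Finset.prod_const, mul_comm, hq]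
          congr 1
          · congr 1
            rw [Finset.filter_not, Finset.filter_eq' , if_pos (Finset.mem_univ _),
              Finset.card_sdiff_of_subset (Finset.subset_univ _)]
            simp
          · rw [Finset.filter_eq', if_pos (Finset.mem_univ _)]; simp
        have hbound : ∀ k : ℕ, ‖(Λ ^ k)⁻¹ * F (fun i => (T ^ k) (v i))‖ ≤
            (D * ∏ i, C i) * (q / R ^ d) ^ k := by
          intro k
          rw [norm_mul, norm_inv, norm_pow, hΛ]
          have h7 : ‖F (fun i => (T ^ k) (v i))‖ ≤ D * ((∏ i, C i) * q ^ k) := by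
            refine (hD _).trans ?_
            rw [← hprod]
            gcongr with i
            · exact fun i _ => nb_nonneg b _
            · exact hC i k
          calc _ ≤ ((R ^ d) ^ k)⁻¹ * (D * ((∏ i, C i) * q ^ k)) := by gcongr
            _ = _ := by rw [div_pow]; field_simp
        have hq1 : q / R ^ d < 1 := (div_lt_one (by positivity)).2 hR'2
        have hlim := (tendsto_pow_atTop_nhds_zero_of_lt_one (by positivity) hq1).const_mul
          (D * ∏ i, C i)
        rw [mul_zero] at hlim
        exact squeeze_zero_norm hbound hlim

end

end PCGI


namespace PCGI

open Module Filter Topology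

/-- Every vector of `B` outside `A` sits in a strongly irreducible layer. -/
def FlagProp {K G M : Type*} [Field K] [Group G] [AddCommGroup M] [Module K M]
    (ρ : G →* Module.End K M) (H : Subgroup G) (A B : Submodule K M) : Prop :=
  ∀ e ∈ B, e ∉ A → ∃ U0 U1 : Submodule K M, U0 ≤ U1 ∧ Inv ρ H U0 ∧ Inv ρ H U1 ∧
    e ∈ U1 ∧ e ∉ U0 ∧ ∀ H' : Subgroup G, H' ≤ H → H'.FiniteIndex → ∀ U : Submodule K M,
      Inv ρ H' U → U0 ≤ U → U ≤ U1 → U = U0 ∨ U = U1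

section
variable {K G M : Type*} [Field K] [Group G] [AddCommGroup M] [Module K M]

lemma Inv.mono {ρ : G →* Module.End K M} {H H' : Subgroup G} {U : Submodule K M}
    (h : Inv ρ H U) (hle : H' ≤ H) : Inv ρ H' U := fun g hg => h g (hle hg)

lemma FlagProp.mono {ρ : G →* Module.End K M} {H H' : Subgroup G} {A B : Submodule K M}
    (h : FlagProp ρ H A B) (hle : H' ≤ H) : FlagProp ρ H' A B := by
  intro e he heA
  obtain ⟨U0, U1, h1, h2, h3, h4, h5, h6⟩ := h e he heA
  exact ⟨U0, U1, h1, h2.mono hle, h3.mono hle, h4, h5, fun L hL => h6 L (hL.trans hle)⟩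

lemma flag_aux [FiniteDimensional K M] (ρ : G →* Module.End K M) (n : ℕ) :
    ∀ (H : Subgroup G) (A B : Submodule K M), H.FiniteIndex → Inv ρ H A → Inv ρ H B → A ≤ B →
      finrank K B - finrank K A = n → ∃ H' ≤ H, H'.FiniteIndex ∧ FlagProp ρ H' A B := by
  induction n using Nat.strong_induction_on with
  | _ n ih =>
  intro H A B hH hA hB hAB hn
  by_cases hC : ∃ (H' : Subgroup G) (C : Submodule K M), H' ≤ H ∧ H'.FiniteIndex ∧ Inv ρ H' C ∧
      A < C ∧ C < B
  · obtain ⟨H', C, hle, hfi, hC, hAC, hCB⟩ := hC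
    have e1 := Submodule.finrank_lt_finrank_of_lt hAC
    have e2 := Submodule.finrank_lt_finrank_of_lt hCB
    obtain ⟨H1, hl1, hf1, hp1⟩ := ih _ (by omega) H' A C hfi (hA.mono hle) hC hAC.le rfl
    obtain ⟨H2, hl2, hf2, hp2⟩ := ih _ (by omega) H' C B hfi hC (hB.mono hle) hCB.le rfl
    refine ⟨H1 ⊓ H2, inf_le_left.trans (hl1.trans hle), inferInstance, ?_⟩
    intro e heB heA
    by_cases heC : e ∈ C
    · exact hp1.mono inf_le_left e heC heA
    · exact hp2.mono inf_le_right e heB heC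
  · refine ⟨H, le_rfl, hH, fun e heB heA => ⟨A, B, hAB, hA, hB, heB, heA, ?_⟩⟩
    intro H' hle hfi U hU hAU hUB
    by_contra hne
    push Not at hne
    exact hC ⟨H', U, hle, hfi, hU, lt_of_le_of_ne hAU (Ne.symm hne.1), lt_of_le_of_ne hUB hne.2⟩

lemma flag_exists [FiniteDimensional K M] (ρ : G →* Module.End K M) :
    ∃ H : Subgroup G, H.FiniteIndex ∧ FlagProp ρ H ⊥ ⊤ := by
  obtain ⟨H, -, h1, h2⟩ := flag_aux ρ _ ⊤ ⊥ ⊤ inferInstance (fun g _ u hu => by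
    rw [Submodule.mem_bot] at hu ⊢; rw [hu, map_zero]) (fun g _ u hu => trivial) bot_le rfl
  exact ⟨H, h1, h2⟩

/-- The exterior power representation. -/
noncomputable def extRep (ρ : G →* Module.End K M) (d : ℕ) : G →* Module.End K (⋀[K]^d M) where
  toFun g := exteriorPower.map d (ρ g)
  map_one' := by
    rw [map_one, Module.End.one_eq_id, exteriorPower.map_id]; rfl
  map_mul' g h := by
    rw [map_mul, Module.End.mul_eq_comp, exteriorPower.map_comp]; rfl

lemma exists_good_subgroup [FiniteDimensional K M] (ρ : G →* Module.End K M) :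
    ∃ H : Subgroup G, H.FiniteIndex ∧ ∀ d ≤ finrank K M, FlagProp (extRep ρ d) H ⊥ ⊤ := by
  have h : ∀ d : ℕ, ∃ H : Subgroup G, H.FiniteIndex ∧ FlagProp (extRep ρ d) H ⊥ ⊤ :=
    fun d => flag_exists (extRep ρ d)
  choose L hL1 hL2 using h
  haveI := hL1
  refine ⟨⨅ d : Fin (finrank K M + 1), L d, Subgroup.finiteIndex_iInf fun i => hL1 i, ?_⟩
  intro d hd
  exact (hL2 d).mono (iInf_le (fun d : Fin (finrank K M + 1) => L d) ⟨d, Nat.lt_succ_of_le hd⟩)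

/-- The representation on a layer. -/
def layerRep (ρ : G →* Module.End K M) (H : Subgroup G) (U0 U1 : Submodule K M)
    (h0 : Inv ρ H U0) (h1 : Inv ρ H U1) : H →* Module.End K (U1 ⧸ U0.submoduleOf U1) where
  toFun h := Submodule.mapQ _ _ ((ρ h).restrict (h1 h h.2)) (by
    rintro ⟨x, hx⟩ hx0
    exact h0 h h.2 x hx0)
  map_one' := by
    refine Submodule.linearMap_qext _ (LinearMap.ext fun x => ?_)
    simp only [LinearMap.comp_apply, Submodule.mkQ_apply, Submodule.mapQ_apply, Module.End.one_apply]
    congr 1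
    exact Subtype.ext (by simp [LinearMap.restrict_coe_apply])
  map_mul' g h := by
    refine Submodule.linearMap_qext _ (LinearMap.ext fun x => ?_)
    simp only [LinearMap.comp_apply, Submodule.mkQ_apply, Submodule.mapQ_apply, Module.End.mul_apply]
    congr 1
    exact Subtype.ext (by simp [LinearMap.restrict_coe_apply])

lemma layerRep_mk (ρ : G →* Module.End K M) (H : Subgroup G) (U0 U1 : Submodule K M)
    (h0 : Inv ρ H U0) (h1 : Inv ρ H U1) (h : H) (x : U1) :
    layerRep ρ H U0 U1 h0 h1 h (Submodule.Quotient.mk x) =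
      Submodule.Quotient.mk ⟨ρ h x, h1 h h.2 x x.2⟩ := rfl

lemma layer_strIrr (ρ : G →* Module.End K M) (H : Subgroup G) [H.FiniteIndex]
    (U0 U1 : Submodule K M) (hle : U0 ≤ U1)
    (h0 : Inv ρ H U0) (h1 : Inv ρ H U1)
    (hirr : ∀ H' : Subgroup G, H' ≤ H → H'.FiniteIndex → ∀ U : Submodule K M,
      Inv ρ H' U → U0 ≤ U → U ≤ U1 → U = U0 ∨ U = U1) :
    StrIrr (layerRep ρ H U0 U1 h0 h1) := by
  intro L hL W hW
  let U : Submodule K M := (W.comap (U0.submoduleOf U1).mkQ).map U1.subtype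
  have hmem : ∀ x : U1, (x : M) ∈ U ↔ (Submodule.Quotient.mk x : U1 ⧸ U0.submoduleOf U1) ∈ W := by
    intro x
    constructor
    · rintro ⟨y, hy, hyx⟩
      have : y = x := Subtype.ext hyx
      subst this; exact hy
    · intro hx
      exact ⟨x, hx, rfl⟩
  have hL' : (L.map H.subtype).FiniteIndex := by
    refine ⟨?_⟩
    rw [Subgroup.index_map_subtype]
    exact mul_ne_zero hL.index_ne_zero Subgroup.FiniteIndex.index_ne_zero
  have hinv : Inv ρ (L.map H.subtype) U := by
    rintro _ ⟨g, hg, rfl⟩ u hu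
    obtain ⟨y, hy, rfl⟩ := hu
    have := hW g hg _ hy
    exact (hmem ⟨ρ g y, h1 g g.2 y y.2⟩).2 this
  rcases hirr _ (Subgroup.map_subtype_le L) hL' U hinv (by
      intro x hx
      refine (hmem ⟨x, hle hx⟩).2 ?_
      have : (Submodule.Quotient.mk ⟨x, hle hx⟩ : U1 ⧸ U0.submoduleOf U1) = 0 :=
        (Submodule.Quotient.mk_eq_zero _).2 hx
      rw [this]; exact W.zero_mem) (Submodule.map_subtype_le _ _) with h | h
  · left
    rw [eq_bot_iff]
    intro y hy
    obtain ⟨x, rfl⟩ := Submodule.Quotient.mk_surjective _ y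
    have := (hmem x).2 hy
    rw [h] at this
    exact (Submodule.Quotient.mk_eq_zero _).2 this
  · right
    rw [eq_top_iff]
    intro y _
    obtain ⟨x, rfl⟩ := Submodule.Quotient.mk_surjective _ y
    refine (hmem x).1 ?_
    rw [h]
    exact x.2

end

lemma commutator_trivial {K G E : Type*} [Field K] [Group G] [AddCommGroup E] [Module K E]
    (σ : G →* Module.End K E) (h1 : finrank K E = 1) (a : G) (ha : a ∈ commutator G) :
    σ a = 1 := by
  have hcomm : ∀ g h : G, σ g * σ h = σ h * σ g := by
    obtain ⟨v, hv, hspan⟩ := finrank_eq_one_iff'.1 h1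
    have hs : ∀ (T S : Module.End K E) (w : E), T (S w) = S (T w) := by
      intro T S w
      obtain ⟨c, hc⟩ := hspan w
      obtain ⟨s, hs⟩ := hspan (S v)
      obtain ⟨t, ht⟩ := hspan (T v)
      simp only [← hc, map_smul, ← hs, ← ht]
      rw [smul_comm t s v]
    intro g h
    exact LinearMap.ext fun w => hs _ _ w
  have hle : commutator G ≤ σ.toHomUnits.ker := by
    rw [commutator_def, Subgroup.commutator_le]
    intro g _ h _
    rw [MonoidHom.mem_ker, map_commutatorElement, commutatorElement_eq_one_iff_mul_comm]
    exact Units.ext (hcomm g h)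
  have := hle ha
  rw [MonoidHom.mem_ker] at this
  exact congrArg Units.val this

theorem free_of_layer {K G M : Type*} [NormedField K] [Group G] [AddCommGroup M]
    [Module K M] [FiniteDimensional K M] (ρd : G →* Module.End K M) (H : Subgroup G)
    [H.FiniteIndex] (a : H) (ha : a ∈ commutator H) (Λ : K) (hΛ : 1 < ‖Λ‖) (e : M) (φ : Dual K M)
    (hφe : φ e = 1) (U0 U1 : Submodule K M) (hle : U0 ≤ U1) (h0 : Inv ρd H U0) (h1 : Inv ρd H U1)
    (he1 : e ∈ U1) (he0 : e ∉ U0)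
    (hirr : ∀ H' : Subgroup G, H' ≤ H → H'.FiniteIndex → ∀ U : Submodule K M,
      Inv ρd H' U → U0 ≤ U → U ≤ U1 → U = U0 ∨ U = U1)
    (hdom' : ∀ (x : M) (χ : Dual K M), Tendsto (fun k : ℕ => (Λ ^ k)⁻¹ * χ (ρd (a ^ k : H) x))
      atTop (𝓝 (φ x * χ e))) :
    ∃ f : FreeGroup (Fin 2) →* H, Function.Injective f := by
  have hφ0 : ∀ x ∈ U0, φ x = 0 := by
    intro x hx
    obtain ⟨χ, hχe, hχ0⟩ := Submodule.exists_le_ker_of_notMem he0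
    have h2 := hdom' x χ
    have h3 : ∀ k : ℕ, (Λ ^ k)⁻¹ * χ (ρd (a ^ k : H) x) = 0 := by
      intro k
      have : χ (ρd (a ^ k : H) x) = 0 := hχ0 (h0 _ (a ^ k).2 x hx)
      rw [this, mul_zero]
    simp only [h3] at h2
    have h4 := tendsto_nhds_unique h2 tendsto_const_nhds
    exact (mul_eq_zero.1 h4).resolve_right hχe
  let E := U1 ⧸ U0.submoduleOf U1
  let σ : H →* Module.End K E := layerRep ρd H U0 U1 h0 h1
  let eb : E := Submodule.Quotient.mk ⟨e, he1⟩
  have heb : eb ≠ 0 := fun h => he0 ((Submodule.Quotient.mk_eq_zero (U0.submoduleOf U1)).1 h)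
  let φb : Dual K E := Submodule.liftQ _ (φ.domRestrict U1) (fun x hx => hφ0 x hx)
  have hφb : φb eb = 1 := hφe
  have hdomE : ∀ x (χ : Dual K E), Tendsto (fun k : ℕ => (Λ ^ k)⁻¹ * χ (σ (a ^ k) x)) atTop
      (𝓝 (φb x * χ eb)) := by
    intro x χ
    obtain ⟨x, rfl⟩ := Submodule.Quotient.mk_surjective _ x
    obtain ⟨χ', hχ'⟩ := LinearMap.exists_extend (χ ∘ₗ (U0.submoduleOf U1).mkQ)
    have hχ'' : ∀ y : U1, χ (Submodule.Quotient.mk y) = χ' y := fun y =>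
      (LinearMap.congr_fun hχ' y).symm
    have h2 := hdom' (x : M) χ'
    have h3 : φb (Submodule.Quotient.mk x) = φ x := rfl
    rw [h3, hχ'']
    refine h2.congr fun k => ?_
    rw [layerRep_mk, hχ'']
  have hpos : 0 < finrank K E := by
    haveI : Nontrivial E := ⟨eb, 0, heb⟩
    exact finrank_pos
  have hdim : 2 ≤ finrank K E := by
    by_contra hlt
    have hone : finrank K E = 1 := by omega
    have ha1 := commutator_trivial σ hone a ha
    obtain ⟨χ, hχ⟩ : ∃ χ : Dual K E, χ eb ≠ 0 := by
      by_contra hcon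
      push Not at hcon
      exact heb ((Module.forall_dual_apply_eq_zero_iff K eb).1 hcon)
    have h2 := hdomE eb χ
    rw [hφb, one_mul] at h2
    have h3 : Tendsto (fun k : ℕ => (Λ ^ k)⁻¹ * χ (σ (a ^ k) eb)) atTop (𝓝 (0 * χ eb)) := by
      have h4 : Tendsto (fun k : ℕ => (Λ ^ k)⁻¹) atTop (𝓝 0) := by
        have := tendsto_pow_atTop_nhds_zero_of_norm_lt_one (x := Λ⁻¹) (by
          rw [norm_inv]; exact inv_lt_one_of_one_lt₀ hΛ)
        simpa only [inv_pow] using this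
      refine (h4.mul_const (χ eb)).congr fun k => ?_
      rw [map_pow, ha1, one_pow, Module.End.one_apply]
    have := tendsto_nhds_unique h2 h3
    rw [zero_mul] at this
    exact hχ this
  exact free_of_dom σ (layer_strIrr ρd H U0 U1 hle h0 h1 hirr) hdim a Λ
    (norm_pos_iff.1 (one_pos.trans hΛ)) eb heb φb (fun h => by simp [h] at hφb) hdomE

theorem caseI_aux {K G V : Type*} [NormedField K] [IsAlgClosed K] [Group G] [AddCommGroup V]
    [Module K V] [FiniteDimensional K V] (ρ : G →* Module.End K V) (H : Subgroup G)
    [H.FiniteIndex] (hflag : ∀ d ≤ finrank K V, FlagProp (extRep ρ d) H ⊥ ⊤)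
    (a : H) (ha : a ∈ commutator H) (t : K) (ht : (ρ a).HasEigenvalue t) (ht1 : 1 < ‖t‖) :
    ∃ f : FreeGroup (Fin 2) →* H, Function.Injective f := by
  obtain ⟨d, hd, Λ, hΛ, e, φ, hφe, hdom⟩ := dom_ext (ρ a) t ht ht1
  have he : e ≠ 0 := by
    rintro rfl
    simp at hφe
  obtain ⟨U0, U1, hle, h0, h1, he1, he0, hirr⟩ := hflag d hd e trivial (by simpa using he)
  have hdom' : ∀ x (χ : Dual K (⋀[K]^d V)), Tendsto (fun k : ℕ => (Λ ^ k)⁻¹ * χ (extRep ρ d (a ^ k : H) x))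
      atTop (𝓝 (φ x * χ e)) := by
    intro x χ
    refine (hdom x χ).congr fun k => ?_
    have hk : extRep ρ d ((a ^ k : H) : G) = exteriorPower.map d ((ρ a) ^ k) := by
      change exteriorPower.map d (ρ _) = _
      rw [Subgroup.coe_pow, map_pow]
    rw [hk]
  exact free_of_layer (extRep ρ d) H a ha Λ hΛ e φ hφe U0 U1 hle h0 h1 he1 he0 hirr hdom'

theorem caseI {K G V : Type*} [Field K] [IsAlgClosed K] [Group G] [AddCommGroup V]
    [Module K V] [FiniteDimensional K V] (ρ : G →* Module.End K V) (H : Subgroup G)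
    [H.FiniteIndex] (hflag : ∀ d ≤ finrank K V, FlagProp (extRep ρ d) H ⊥ ⊤)
    (a : H) (ha : a ∈ commutator H) (t : K) (ht : (ρ a).HasEigenvalue t)
    (v : AbsoluteValue K ℝ) (ht1 : v t ≠ 1) :
    ∃ f : FreeGroup (Fin 2) →* H, Function.Injective f := by
  letI : NormedField K := v.toNormedField
  have hv : ∀ x : K, ‖x‖ = v x := fun x => rfl
  obtain ⟨x, hx⟩ := ht.exists_hasEigenvector
  have ht0 : t ≠ 0 := by
    rintro rfl
    have := hx.apply_eq_smul
    rw [zero_smul] at this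
    exact hx.2 (rho_injective ρ a (by rw [this, map_zero]))
  rcases lt_or_gt_of_ne ht1 with h | h
  · have hinv : (ρ ((a⁻¹ : H) : G)).HasEigenvalue t⁻¹ := by
      refine Module.End.hasEigenvalue_of_hasEigenvector (x := x) ⟨?_, hx.2⟩
      rw [Module.End.mem_eigenspace_iff]
      have h2 := rho_inv_apply ρ (a : G) x
      rw [hx.apply_eq_smul, map_smul] at h2
      rw [Subgroup.coe_inv]
      conv_rhs => rw [← h2]
      rw [smul_smul, inv_mul_cancel₀ ht0, one_smul]
    refine caseI_aux ρ H hflag a⁻¹ (Subgroup.inv_mem _ ha) t⁻¹ hinv ?_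
    rw [norm_inv]
    exact (one_lt_inv₀ (norm_pos_iff.2 ht0)).2 h
  · exact caseI_aux ρ H hflag a ha t ht h

end PCGI


namespace PCGI

open Cardinal Polynomial

lemma exists_algHom_of_countable {A K L : Type*} [CommRing A] [IsDomain A] [Countable A] [Field K]
    [Countable K] [Field L] [IsAlgClosed L] [Uncountable L] [Algebra A K] [Algebra A L]
    [FaithfulSMul A K] [FaithfulSMul A L] : Nonempty (K →ₐ[A] L) := by
  obtain ⟨s, hs⟩ := exists_isTranscendenceBasis A K
  obtain ⟨u, hu⟩ := exists_isTranscendenceBasis A L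
  have hcard := IsAlgClosed.cardinal_eq_cardinal_transcendence_basis_of_aleph0_lt _ hu
    (Cardinal.mk_le_aleph0_iff.2 inferInstance) (Cardinal.aleph0_lt_mk_iff.2 inferInstance)
  have hinf : Infinite u := by
    rw [Cardinal.infinite_iff]
    rw [Cardinal.lift_id, Cardinal.lift_id] at hcard
    rw [← hcard]
    exact (Cardinal.aleph0_lt_mk_iff.2 inferInstance).le
  obtain ⟨i, hi⟩ : ∃ i : s → u, Function.Injective i := by
    obtain ⟨f, hf⟩ := exists_injective_nat s
    exact ⟨fun x => Infinite.natEmbedding u (f x), (Infinite.natEmbedding u).injective.comp hf⟩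
  have hind : AlgebraicIndependent A (fun x : s => ((i x : u) : L)) := hu.1.comp i hi
  letI a1 : Algebra (MvPolynomial s A) K := (MvPolynomial.aeval (R := A) (fun x : s => (x : K))).toAlgebra
  letI a2 : Algebra (MvPolynomial s A) L := (MvPolynomial.aeval (R := A) (fun x : s => ((i x : u) : L))).toAlgebra
  haveI : IsScalarTower A (MvPolynomial s A) K := IsScalarTower.of_algebraMap_eq' (MvPolynomial.aeval _).comp_algebraMap.symm
  haveI : IsScalarTower A (MvPolynomial s A) L := IsScalarTower.of_algebraMap_eq' (MvPolynomial.aeval _).comp_algebraMap.symm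
  haveI f1 : FaithfulSMul (MvPolynomial s A) K := (faithfulSMul_iff_algebraMap_injective _ _).2 hs.1
  haveI f2 : FaithfulSMul (MvPolynomial s A) L := (faithfulSMul_iff_algebraMap_injective _ _).2 hind
  haveI : Algebra.IsAlgebraic (MvPolynomial s A) K := by
    have := hs.isAlgebraic
    refine ⟨fun x => ?_⟩
    have hx := this.isAlgebraic x
    obtain ⟨q, hq0, hq⟩ := hx
    refine ⟨q.map (hs.1.aevalEquiv.symm : _ →+* MvPolynomial s A), ?_, ?_⟩
    · rw [Ne, Polynomial.map_eq_zero_iff]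
      · exact hq0
      · exact hs.1.aevalEquiv.symm.injective
    · rw [aeval_def, eval₂_map]
      rw [aeval_def] at hq
      convert hq using 2
      ext y
      change MvPolynomial.aeval _ (hs.1.aevalEquiv.symm y) = y.1
      rw [← hs.1.algebraMap_aevalEquiv, AlgEquiv.apply_symm_apply]
      rfl
  exact ⟨(IsAlgClosed.lift (R := MvPolynomial s A) (S := K) (M := L)).restrictScalars A⟩

lemma exists_hom_transcendental {P K L : Type*} [Field P] [Countable P] [Field K] [Countable K]
    [Field L] [IsAlgClosed L] [Uncountable L] [Algebra P K] [Algebra P L] (t : K) (s : L)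
    (ht : Transcendental P t) (hs : Transcendental P s) : ∃ f : K →+* L, f t = s := by
  letI : Algebra P[X] K := (aeval (R := P) t).toAlgebra
  letI : Algebra P[X] L := (aeval (R := P) s).toAlgebra
  haveI f1 : FaithfulSMul P[X] K := (faithfulSMul_iff_algebraMap_injective _ _).2
    (transcendental_iff_injective.1 ht)
  haveI f2 : FaithfulSMul P[X] L := (faithfulSMul_iff_algebraMap_injective _ _).2
    (transcendental_iff_injective.1 hs)
  haveI : Countable P[X] := by
    rw [← Cardinal.mk_le_aleph0_iff]
    exact Polynomial.cardinalMk_le_max.trans (max_le (Cardinal.mk_le_aleph0_iff.2 inferInstance) le_rfl)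
  obtain ⟨f⟩ := exists_algHom_of_countable (A := P[X]) (K := K) (L := L)
  refine ⟨f, ?_⟩
  have h1 : algebraMap P[X] K X = t := aeval_X t
  have h2 : algebraMap P[X] L X = s := aeval_X s
  rw [← h1, ← h2]
  exact f.commutes X

lemma exists_hom_algebraic {P K L : Type*} [Field P] [Countable P] [Field K] [Countable K]
    [Field L] [IsAlgClosed L] [Uncountable L] [Algebra P K] [Algebra P L] (t : K) (s : L)
    (ht : IsIntegral P t) (hs : aeval s (minpoly P t) = 0) : ∃ f : K →+* L, f t = s := by
  haveI : Fact (Irreducible (minpoly P t)) := ⟨minpoly.irreducible ht⟩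
  let A := AdjoinRoot (minpoly P t)
  letI : Algebra A K := (AdjoinRoot.lift (algebraMap P K) t (minpoly.aeval P t)).toAlgebra
  letI : Algebra A L := (AdjoinRoot.lift (algebraMap P L) s hs).toAlgebra
  haveI : Countable P[X] := by
    rw [← Cardinal.mk_le_aleph0_iff]
    exact Polynomial.cardinalMk_le_max.trans (max_le (Cardinal.mk_le_aleph0_iff.2 inferInstance) le_rfl)
  haveI : Countable A := (AdjoinRoot.mk_surjective (g := minpoly P t)).countable
  haveI f1 : FaithfulSMul A K := (faithfulSMul_iff_algebraMap_injective _ _).2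
    (algebraMap A K).injective
  haveI f2 : FaithfulSMul A L := (faithfulSMul_iff_algebraMap_injective _ _).2
    (algebraMap A L).injective
  obtain ⟨f⟩ := exists_algHom_of_countable (A := A) (K := K) (L := L)
  refine ⟨f, ?_⟩
  have h1 : algebraMap A K (AdjoinRoot.root _) = t := AdjoinRoot.lift_root _
  have h2 : algebraMap A L (AdjoinRoot.root _) = s := AdjoinRoot.lift_root _
  have h3 := f.commutes (AdjoinRoot.root (minpoly P t))
  rw [h2] at h3
  exact (congrArg f h1.symm).trans h3

lemma abs_of_hom {K L : Type*} [Field K] [NormedField L] (f : K →+* L) (t : K) (h : ‖f t‖ ≠ 1) :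
    ∃ v : AbsoluteValue K ℝ, v t ≠ 1 :=
  ⟨(IsAbsoluteValue.toAbsoluteValue (norm : L → ℝ)).comp f.injective, h⟩

end PCGI


namespace PCGI

open Cardinal Polynomial

section char0
variable {K : Type*} [Field K] [Countable K] [CharZero K]

instance : Uncountable ℂ := Cardinal.aleph0_lt_mk_iff.1 (by rw [Cardinal.mk_complex]; exact Cardinal.aleph0_lt_continuum)

lemma abs_transc0 (t : K) (ht : Transcendental ℚ t) : ∃ v : AbsoluteValue K ℝ, v t ≠ 1 := by
  have h1 : ∃ s : ℂ, Transcendental ℚ s := by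
    by_contra hcon
    push Not at hcon
    have hc : {x : ℂ | IsAlgebraic ℚ x}.Countable := Algebraic.countable ℚ ℂ
    have : (Set.univ : Set ℂ).Countable := hc.mono fun x _ => by
      have := hcon x
      rw [Transcendental, not_not] at this
      exact this
    exact Set.not_countable_univ this
  obtain ⟨s, hs⟩ := h1
  by_cases hn : ‖s‖ = 1
  · have h2 : Transcendental ℚ (s * algebraMap ℚ ℂ 2) := by
      intro h
      refine hs ?_
      have h3 := h.mul (isAlgebraic_algebraMap (R := ℚ) (A := ℂ) (2⁻¹ : ℚ))
      rwa [mul_assoc, ← map_mul, mul_inv_cancel₀ two_ne_zero, map_one, mul_one] at h3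
    obtain ⟨f, hf⟩ := exists_hom_transcendental t _ ht h2
    refine abs_of_hom f t ?_
    rw [hf, norm_mul, hn]
    simp
  · obtain ⟨f, hf⟩ := exists_hom_transcendental t s ht hs
    exact abs_of_hom f t (by rwa [hf])

lemma abs_integral (t : K) (ht0 : t ≠ 0) (ht : IsIntegral ℤ t) (h : ∀ n : ℕ, 0 < n → t ^ n ≠ 1) :
    ∃ v : AbsoluteValue K ℝ, v t ≠ 1 := by
  have htq : IsIntegral ℚ t := ht.tower_top
  let K' := IntermediateField.adjoin ℚ {t}
  haveI : FiniteDimensional ℚ K' := IntermediateField.adjoin.finiteDimensional htq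
  haveI : NumberField K' := { to_charZero := inferInstance, to_finiteDimensional := inferInstance }
  let x : K' := IntermediateField.AdjoinSimple.gen ℚ t
  have hxt : algebraMap K' K x = t := IntermediateField.AdjoinSimple.algebraMap_gen ℚ t
  have hx0 : x ≠ 0 := by
    intro h0
    rw [h0, map_zero] at hxt
    exact ht0 hxt.symm
  have hxi : IsIntegral ℤ x := by
    rw [← hxt] at ht
    exact (isIntegral_algHom_iff (IsScalarTower.toAlgHom ℤ K' K) (algebraMap K' K).injective).1 ht
  have h1 : ∃ φ : K' →+* ℂ, 1 < ‖φ x‖ := by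
    by_contra hcon
    push Not at hcon
    obtain ⟨n, hn, hxn⟩ := NumberField.Embeddings.pow_eq_one_of_norm_le_one K' ℂ hx0 hxi hcon
    apply h n hn
    rw [← hxt, ← map_pow, hxn, map_one]
  obtain ⟨φ, hφ⟩ := h1
  have hs : aeval (φ x) (minpoly ℚ t) = 0 := by
    have h2 : aeval x (minpoly ℚ t) = 0 := by
      apply (algebraMap K' K).injective
      rw [map_zero, ← aeval_algebraMap_apply, hxt, minpoly.aeval]
    have h3 := congrArg φ.toRatAlgHom h2
    rw [map_zero, ← aeval_algHom_apply] at h3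
    exact h3
  obtain ⟨f, hf⟩ := exists_hom_algebraic t (φ x) htq hs
  exact abs_of_hom f t (by rw [hf]; exact hφ.ne')

lemma abs_nonintegral (t : K) (htq : IsIntegral ℚ t) (ht : ¬ IsIntegral ℤ t) :
    ∃ v : AbsoluteValue K ℝ, v t ≠ 1 := by
  have h1 : ∃ i, ((minpoly ℚ t).coeff i).den ≠ 1 := by
    by_contra hcon
    push Not at hcon
    have h2 : minpoly ℚ t ∈ Polynomial.lifts (Int.castRingHom ℚ) := by
      rw [Polynomial.lifts_iff_coeff_lifts]
      intro i
      exact ⟨((minpoly ℚ t).coeff i).num, by simpa using Rat.coe_int_num_of_den_eq_one (hcon i)⟩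
    obtain ⟨q, hq, -, hqm⟩ := Polynomial.lifts_and_natDegree_eq_and_monic h2 (minpoly.monic htq)
    apply ht
    refine ⟨q, hqm, ?_⟩
    have h3 := minpoly.aeval ℚ t
    rw [← hq, aeval_def, eval₂_map] at h3
    have h4 : (algebraMap ℚ K).comp (Int.castRingHom ℚ) = algebraMap ℤ K :=
      Subsingleton.elim (α := ℤ →+* K) _ _
    rw [h4] at h3
    exact h3
  obtain ⟨i, hi⟩ := h1
  obtain ⟨p, hp, hpd⟩ := Nat.exists_prime_and_dvd hi
  haveI : Fact p.Prime := ⟨hp⟩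
  haveI : Uncountable ℚ_[p] := Cardinal.aleph0_lt_mk_iff.1
    (Cardinal.aleph0_lt_continuum.trans_le (continuum_le_cardinal_of_nontriviallyNormedField ℚ_[p]))
  haveI : Uncountable (PadicAlgCl p) := (algebraMap ℚ_[p] (PadicAlgCl p)).injective.uncountable
  have h4 : ∃ s : PadicAlgCl p, aeval s (minpoly ℚ t) = 0 ∧ 1 < ‖s‖ := by
    by_contra hcon
    push Not at hcon
    let O : Subring (PadicAlgCl p) :=
      { carrier := {x | ‖x‖ ≤ 1}
        mul_mem' := fun {a b} ha hb => by
          simp only [Set.mem_setOf_eq] at *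
          rw [norm_mul]; exact mul_le_one₀ ha (norm_nonneg _) hb
        one_mem' := by simp
        add_mem' := fun {a b} ha hb => (IsUltrametricDist.norm_add_le_max a b).trans (max_le ha hb)
        zero_mem' := by simp
        neg_mem' := fun {a} ha => by simpa using ha }
    let q := (minpoly ℚ t).map (algebraMap ℚ (PadicAlgCl p))
    have hqm : q.Monic := (minpoly.monic htq).map _
    have hq : q ∈ Polynomial.lifts O.subtype := by
      have hsp := IsAlgClosed.splits q
      rw [hsp.eq_prod_roots, hqm.leadingCoeff, map_one, one_mul]
      refine Subsemiring.multiset_prod_mem _ _ ?_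
      intro r hr
      obtain ⟨a, ha, rfl⟩ := Multiset.mem_map.1 hr
      have ha' : ‖a‖ ≤ 1 := by
        refine hcon a ?_
        have := (mem_roots'.1 ha).2
        rwa [IsRoot, eval_map, ← aeval_def] at this
      refine ⟨X - C ⟨a, ha'⟩, ?_⟩
      simp
    rw [Polynomial.lifts_iff_coeff_lifts] at hq
    obtain ⟨y, hy⟩ := hq i
    have h5 : ‖q.coeff i‖ ≤ 1 := by rw [← hy]; exact y.2
    rw [coeff_map] at h5
    have h6 : algebraMap ℚ (PadicAlgCl p) ((minpoly ℚ t).coeff i) =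
        algebraMap ℚ_[p] (PadicAlgCl p) (((minpoly ℚ t).coeff i : ℚ) : ℚ_[p]) := by simp
    rw [h6, norm_algebraMap', Padic.norm_rat_le_one_iff_padicValuation_le_one,
      Rat.padicValuation_le_one_iff] at h5
    exact h5 hpd
  obtain ⟨s, hs, hs1⟩ := h4
  obtain ⟨f, hf⟩ := exists_hom_algebraic t s htq hs
  exact abs_of_hom f t (by rw [hf]; exact hs1.ne')

lemma abs_char0 (t : K) (ht0 : t ≠ 0) (h : ∀ n : ℕ, 0 < n → t ^ n ≠ 1) :
    ∃ v : AbsoluteValue K ℝ, v t ≠ 1 := by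
  by_cases h1 : IsAlgebraic ℚ t
  · by_cases h2 : IsIntegral ℤ t
    · exact abs_integral t ht0 h2 h
    · exact abs_nonintegral t h1.isIntegral h2
  · exact abs_transc0 t h1

end char0

section charp
open WithZero

lemma root_of_unity_of_alg {K : Type*} [Field K] (p : ℕ) [Fact p.Prime] [Algebra (ZMod p) K]
    (t : K) (ht0 : t ≠ 0) (halg : IsAlgebraic (ZMod p) t) : ∃ n : ℕ, 0 < n ∧ t ^ n = 1 := by
  have hintg := halg.isIntegral
  let K' := IntermediateField.adjoin (ZMod p) {t}
  haveI : FiniteDimensional (ZMod p) K' := IntermediateField.adjoin.finiteDimensional hintg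
  haveI : Finite K' := Module.finite_of_finite (ZMod p)
  let x : K' := IntermediateField.AdjoinSimple.gen (ZMod p) t
  have hxt : algebraMap K' K x = t := IntermediateField.AdjoinSimple.algebraMap_gen (ZMod p) t
  have hx0 : x ≠ 0 := by
    intro h0
    rw [h0, map_zero] at hxt
    exact ht0 hxt.symm
  have h2 := isOfFinOrder_of_finite (Units.mk0 x hx0)
  obtain ⟨n, hn, hxn⟩ := isOfFinOrder_iff_pow_eq_one.1 h2
  refine ⟨n, hn, ?_⟩
  have h3 : x ^ n = 1 := by simpa using congrArg Units.val hxn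
  rw [← hxt, ← map_pow, h3, map_one]

lemma abs_charp {K : Type*} [Field K] [Countable K] (p : ℕ) [Fact p.Prime] [CharP K p]
    (t : K) (ht0 : t ≠ 0) (h : ∀ n : ℕ, 0 < n → t ^ n ≠ 1) :
    ∃ v : AbsoluteValue K ℝ, v t ≠ 1 := by
  letI : Algebra (ZMod p) K := ZMod.algebra K p
  have ht : Transcendental (ZMod p) t := by
    intro halg
    obtain ⟨n, hn, h1⟩ := root_of_unity_of_alg p t ht0 halg
    exact h n hn h1
  let L0 := LaurentSeries (ZMod p)
  let x : L0 := HahnSeries.ofPowerSeries ℤ (ZMod p) PowerSeries.X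
  have hvx : Valued.v x = WithZero.exp (-1 : ℤ) := by
    have := LaurentSeries.valuation_X_pow (ZMod p) 1
    rwa [pow_one] at this
  letI hr : (Valued.v : Valuation L0 ℤᵐ⁰).RankOne :=
    { hom' := (WithZeroMulInt.toNNReal (e := 2) two_ne_zero).comp MonoidWithZeroHom.ValueGroup₀.embedding
      strictMono' := (WithZeroMulInt.toNNReal_strictMono (by norm_num)).comp
        MonoidWithZeroHom.ValueGroup₀.embedding_strictMono
      exists_val_nontrivial := ⟨x, by rw [hvx]; simp, by
        rw [hvx]
        exact (WithZero.exp_lt_exp.2 (by norm_num : (-1 : ℤ) < 0)).ne⟩ }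
  letI : NontriviallyNormedField L0 := Valued.toNontriviallyNormedField L0 ℤᵐ⁰
  haveI : CompleteSpace L0 := LaurentSeries.instLaurentSeriesComplete
  haveI : IsUltrametricDist L0 := Valued.instIsUltrametricDist L0 ℤᵐ⁰
  have hx1 : ‖x‖ < 1 := by
    refine Valued.toNormedField.norm_lt_one_iff.2 ?_
    rw [hvx]
    exact WithZero.exp_lt_exp.2 (by norm_num : (-1 : ℤ) < 0)
  haveI : Uncountable L0 := Cardinal.aleph0_lt_mk_iff.1
    (Cardinal.aleph0_lt_continuum.trans_le (continuum_le_cardinal_of_nontriviallyNormedField L0))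
  let L := AlgebraicClosure L0
  haveI : Uncountable L := (algebraMap L0 L).injective.uncountable
  letI : NormedField L := spectralNorm.normedField L0 L
  have hs1 : ‖algebraMap L0 L x‖ < 1 := by
    change spectralNorm L0 L (algebraMap L0 L x) < 1
    rw [spectralNorm_extends]
    exact hx1
  have hx0 : x ≠ 0 := by
    intro h0
    rw [h0, map_zero] at hvx
    exact WithZero.exp_ne_zero hvx.symm
  have hs0 : algebraMap L0 L x ≠ 0 := fun h0 => hx0 ((algebraMap L0 L).injective (by rw [h0, map_zero]))
  letI : Algebra (ZMod p) L := ((algebraMap L0 L).comp (HahnSeries.C (Γ := ℤ) (R := ZMod p))).toAlgebra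
  have hs : Transcendental (ZMod p) (algebraMap L0 L x) := by
    intro halg
    obtain ⟨n, hn, h1⟩ := root_of_unity_of_alg p _ hs0 halg
    have h2 := congrArg norm h1
    rw [norm_pow, norm_one] at h2
    exact (pow_lt_one₀ (norm_nonneg _) hs1 hn.ne').ne h2
  obtain ⟨f, hf⟩ := exists_hom_transcendental t _ ht hs
  exact abs_of_hom f t (by rw [hf]; exact hs1.ne)

end charp

theorem exists_abs {K : Type*} [Field K] [Countable K]
    (t : K) (ht0 : t ≠ 0) (h : ∀ n : ℕ, 0 < n → t ^ n ≠ 1) :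
    ∃ v : AbsoluteValue K ℝ, v t ≠ 1 := by
  obtain ⟨p, hp⟩ := CharP.exists K
  rcases CharP.char_is_prime_or_zero K p with hp' | rfl
  · haveI : Fact p.Prime := ⟨hp'⟩
    exact abs_charp p t ht0 h
  · haveI := CharP.charP_to_charZero K
    exact abs_char0 t ht0 h

end PCGI


namespace PCGI

open Module Polynomial

section
variable {K V : Type*} [Field K] [AddCommGroup V] [Module K V] [FiniteDimensional K V]

lemma nilp_of_eigen [IsAlgClosed K] (T : Module.End K V) (m : ℕ)
    (h : ∀ t, T.HasEigenvalue t → t ^ m = 1) : IsNilpotent (T ^ m - 1) := by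
  have hintg : IsIntegral K T := Algebra.IsIntegral.isIntegral T
  have hsp := IsAlgClosed.splits (minpoly K T)
  have h1 : minpoly K T ∣ (X ^ m - 1) ^ (Multiset.card (minpoly K T).roots) := by
    have h2 : ∀ s : Multiset K, (∀ a ∈ s, a ^ m = 1) →
        (s.map (fun a => X - C a)).prod ∣ (X ^ m - 1 : K[X]) ^ (Multiset.card s) := by
      intro s
      induction s using Multiset.induction_on with
      | empty => intro _; simp
      | cons a s ih =>
        intro hs
        rw [Multiset.map_cons, Multiset.prod_cons, Multiset.card_cons, pow_succ']
        refine mul_dvd_mul ?_ (ih fun b hb => hs b (Multiset.mem_cons_of_mem hb))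
        rw [dvd_iff_isRoot]
        simp [hs a (Multiset.mem_cons_self a s)]
    have h3 := h2 (minpoly K T).roots (fun a ha => by
      refine h a ?_
      exact Module.End.hasEigenvalue_of_isRoot (mem_roots'.1 ha).2)
    conv_lhs => rw [hsp.eq_prod_roots, (minpoly.monic hintg).leadingCoeff, map_one, one_mul]
    exact h3
  refine ⟨Multiset.card (minpoly K T).roots, ?_⟩
  have := (minpoly.dvd_iff (A := K) (x := T)).1 h1
  simpa using this

lemma nilp_of_eigen' [IsAlgClosed K] (T : Module.End K V)
    (h : ∀ t, T.HasEigenvalue t → ∃ n : ℕ, 0 < n ∧ t ^ n = 1) :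
    ∃ m : ℕ, 0 < m ∧ IsNilpotent (T ^ m - 1) := by
  classical
  choose! n hn0 hn1 using h
  haveI : Finite T.Eigenvalues := inferInstance
  haveI : Fintype T.Eigenvalues := Fintype.ofFinite _
  refine ⟨∏ t : T.Eigenvalues, n t, Finset.prod_pos fun t _ => hn0 t t.2, nilp_of_eigen T _ ?_⟩
  intro t ht
  obtain ⟨c, hc⟩ := Finset.dvd_prod_of_mem (fun t : T.Eigenvalues => n t) (Finset.mem_univ ⟨t, ht⟩)
  rw [hc, pow_mul]
  change (t ^ n t) ^ c = 1
  rw [hn1 t ht, one_pow]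

lemma pow_eq_one_charp [IsAlgClosed K] (p : ℕ) [Fact p.Prime] [CharP K p] (T : Module.End K V)
    (h : ∀ t, T.HasEigenvalue t → ∃ n : ℕ, 0 < n ∧ t ^ n = 1) :
    ∃ m : ℕ, 0 < m ∧ T ^ m = 1 := by
  obtain ⟨m, hm, k, hk⟩ := nilp_of_eigen' T h
  refine ⟨m * p ^ k, Nat.mul_pos hm (pow_pos (Fact.out : p.Prime).pos k), ?_⟩
  rcases subsingleton_or_nontrivial V with hV | hV
  · exact Subsingleton.elim _ _
  haveI : CharP (Module.End K V) p := charP_of_injective_algebraMap (algebraMap K (Module.End K V)).injective p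
  have h2 : (T ^ m - 1) ^ (p ^ k) = 0 := by
    obtain ⟨c, hc⟩ := Nat.exists_eq_add_of_le (Nat.lt_pow_self (Fact.out : p.Prime).one_lt (n := k)).le
    rw [hc, pow_add, hk, zero_mul]
  rw [sub_pow_char_pow_of_commute p k (Commute.one_right _), one_pow, ← pow_mul] at h2
  exact sub_eq_zero.1 h2

lemma nilp_of_trace [CharZero K] (I : Submodule K (Module.End K V))
    (hmul : ∀ x ∈ I, ∀ y ∈ I, x * y ∈ I) (htr : ∀ x ∈ I, LinearMap.trace K V x = 0)
    (x : Module.End K V) (hx : x ∈ I) : IsNilpotent x := by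
  let A := Algebra.adjoin K {x}
  letI : CommRing A := Algebra.adjoinCommRingOfComm K (by
    rintro a rfl b rfl; rfl)
  haveI : IsArtinianRing A := IsArtinianRing.of_finite K A
  let X0 : A := ⟨x, Algebra.self_mem_adjoin_singleton K x⟩
  obtain ⟨n, y, hy⟩ := IsArtinian.exists_pow_succ_smul_dvd X0 (1 : A)
  have hy' : X0 ^ n * (X0 * y) = X0 ^ n := by
    rw [smul_eq_mul, smul_eq_mul, mul_one] at hy
    rw [← mul_assoc, ← pow_succ]; exact hy
  have hj : ∀ j : ℕ, X0 ^ n * (X0 * y) ^ j = X0 ^ n := by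
    intro j
    induction j with
    | zero => simp
    | succ j ih => rw [pow_succ, ← mul_assoc, ih, hy']
  let E : A := (X0 * y) ^ (n + 1)
  have hE : E * E = E := by
    have h1 : E = X0 ^ n * (X0 * y ^ (n + 1)) := by
      change (X0 * y) ^ (n + 1) = _
      rw [mul_pow, pow_succ X0]; ring
    calc E * E = (X0 ^ n * (X0 * y) ^ (n + 1)) * (X0 * y ^ (n + 1)) := by
          conv_lhs => rw [h1]
          change _ = (X0 ^ n * E) * _
          rw [h1]; ring
      _ = E := by rw [hj, h1]
  have hmem : ∀ b : Module.End K V, b ∈ A → ∀ z ∈ I, z * b ∈ I := by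
    intro b hb
    induction hb using Algebra.adjoin_induction with
    | mem a ha =>
      intro z hz
      rw [Set.mem_singleton_iff] at ha
      rw [ha]; exact hmul _ hz _ hx
    | algebraMap r =>
      intro z hz
      rw [Algebra.algebraMap_eq_smul_one, mul_smul_comm, mul_one]
      exact I.smul_mem r hz
    | add a b _ _ ha hb =>
      intro z hz
      rw [mul_add]; exact I.add_mem (ha z hz) (hb z hz)
    | mul a b _ _ ha hb =>
      intro z hz
      rw [← mul_assoc]; exact hb _ (ha z hz)
  have hEI : (E : Module.End K V) ∈ I := by
    have h1 : E = X0 * (y * (X0 * y) ^ n) := by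
      change (X0 * y) ^ (n + 1) = _
      rw [pow_succ']; ring
    rw [h1]
    exact hmem _ (y * (X0 * y) ^ n).2 x hx
  have hE0 : (E : Module.End K V) = 0 := by
    refine LinearMap.IsIdempotentElem.eq_zero_of_trace_eq_zero ?_ (htr _ hEI)
    exact congrArg Subtype.val hE
  have hE0' : E = 0 := Subtype.ext hE0
  refine ⟨n, ?_⟩
  have h2 := hj (n + 1)
  change X0 ^ n * E = X0 ^ n at h2
  rw [hE0', mul_zero] at h2
  exact (congrArg Subtype.val h2).symm

/-- Kolchin: a faithful unipotent group is solvable (characteristic zero). -/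
theorem solvable_of_unipotent [CharZero K] {U : Type*} [Group U] (σ : U →* Module.End K V)
    (hinj : Function.Injective σ) (huni : ∀ u, IsNilpotent (σ u - 1)) : Group.IsSolvable U := by
  let I : Submodule K (Module.End K V) := Submodule.span K (Set.range fun u => σ u - 1)
  have hgen : ∀ u, σ u - 1 ∈ I := fun u => Submodule.subset_span ⟨u, rfl⟩
  have hmul : ∀ x ∈ I, ∀ y ∈ I, x * y ∈ I := by
    intro x hx y hy
    induction hx using Submodule.span_induction with
    | zero => rw [zero_mul]; exact I.zero_mem
    | add a b _ _ ha hb => rw [add_mul]; exact I.add_mem ha hb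
    | smul r a _ ha => rw [smul_mul_assoc]; exact I.smul_mem r ha
    | mem a ha =>
      obtain ⟨u, rfl⟩ := ha
      induction hy using Submodule.span_induction with
      | zero => rw [mul_zero]; exact I.zero_mem
      | add a b _ _ ha hb => rw [mul_add]; exact I.add_mem ha hb
      | smul r a _ ha => rw [mul_smul_comm]; exact I.smul_mem r ha
      | mem b hb =>
        obtain ⟨w, rfl⟩ := hb
        have : (σ u - 1) * (σ w - 1) = (σ (u * w) - 1) - (σ u - 1) - (σ w - 1) := by
          rw [map_mul]; noncomm_ring
        change (σ u - 1) * (σ w - 1) ∈ I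
        rw [this]
        exact I.sub_mem (I.sub_mem (hgen _) (hgen _)) (hgen _)
  have htr : ∀ x ∈ I, LinearMap.trace K V x = 0 := by
    intro x hx
    induction hx using Submodule.span_induction with
    | zero => rw [map_zero]
    | add a b _ _ ha hb => rw [map_add, ha, hb, add_zero]
    | smul r a _ ha => rw [map_smul, ha, smul_zero]
    | mem a ha =>
      obtain ⟨u, rfl⟩ := ha
      exact (LinearMap.isNilpotent_trace_of_isNilpotent (huni u)).eq_zero
  have hnil := nilp_of_trace I hmul htr
  letI : LieRing (Module.End K V) := LieRing.ofAssociativeRing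
  letI : LieAlgebra K (Module.End K V) := LieAlgebra.ofAssociativeAlgebra
  let 𝔏 : LieSubalgebra K (Module.End K V) :=
    { I with
      lie_mem' := fun {x y} hx hy => by
        rw [Ring.lie_def]
        exact I.sub_mem (hmul x hx y hy) (hmul y hy x hx) }
  haveI : LieModule.IsNilpotent 𝔏 V := by
    rw [LieModule.isNilpotent_iff_forall (R := K)]
    rintro ⟨x, hx⟩
    exact hnil x hx
  obtain ⟨k, hk⟩ := (LieModule.isNilpotent_iff K 𝔏 V).1 inferInstance
  let W : ℕ → Submodule K V := fun i => (LieModule.lowerCentralSeries K 𝔏 V i).toSubmodule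
  have hanti : ∀ i j, i ≤ j → W j ≤ W i := fun i j h =>
    LieModule.antitone_lowerCentralSeries K 𝔏 V h
  have hstep : ∀ u i, ∀ v ∈ W i, σ u v - v ∈ W (i + 1) := by
    intro u i v hv
    change σ u v - v ∈ LieModule.lowerCentralSeries K 𝔏 V (i + 1)
    rw [LieModule.lowerCentralSeries_succ]
    exact LieSubmodule.lie_mem_lie (x := (⟨σ u - 1, hgen u⟩ : 𝔏)) (LieSubmodule.mem_top _) hv
  have hpres : ∀ u i, ∀ v ∈ W i, σ u v ∈ W i := by
    intro u i v hv
    have h1 := hanti i (i + 1) (Nat.le_succ i) (hstep u i v hv)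
    have h2 := (W i).add_mem h1 hv
    rwa [sub_add_cancel] at h2
  let D : ℕ → Subgroup U := fun j =>
    { carrier := {u | ∀ i, ∀ v ∈ W i, σ u v - v ∈ W (i + j)}
      one_mem' := by
        intro i v hv
        rw [map_one, Module.End.one_apply, sub_self]; exact Submodule.zero_mem _
      mul_mem' := by
        intro a b ha hb i v hv
        have h1 := ha i (σ b v) (hpres b i v hv)
        have h2 := hb i v hv
        have h3 := (W (i + j)).add_mem h1 h2
        rwa [sub_add_sub_cancel, ← Module.End.mul_apply, ← map_mul] at h3
      inv_mem' := by
        intro a ha i v hv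
        have h1 := ha i (σ a⁻¹ v) (hpres a⁻¹ i v hv)
        rw [rho_apply_inv] at h1
        have h2 := (W (i + j)).neg_mem h1
        rwa [neg_sub] at h2 }
  have hD : ∀ j, derivedSeries U j ≤ D (j + 1) := by
    intro j
    induction j with
    | zero => intro u _ i v hv; exact hstep u i v hv
    | succ j ih =>
      rw [derivedSeries_succ, Subgroup.commutator_le]
      intro a ha b hb i v hv
      have ha' := ih ha
      have hb' := ih hb
      let w := σ a⁻¹ (σ b⁻¹ v)
      have hw : w ∈ W i := hpres _ _ _ (hpres _ _ _ hv)
      have e1 : σ (a * b * a⁻¹ * b⁻¹) v = σ a (σ b w) := by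
        rw [map_mul, map_mul, map_mul]; rfl
      have e2 : v = σ b (σ a w) := by
        change v = σ b (σ a (σ a⁻¹ (σ b⁻¹ v)))
        rw [rho_apply_inv, rho_apply_inv]
      have h1 := ha' _ _ (hb' i w hw)
      have h2 := hb' _ _ (ha' i w hw)
      have h3 := (W (i + (j + 1) + (j + 1))).sub_mem h1 h2
      have e3 : (σ a (σ b w - w) - (σ b w - w)) - (σ b (σ a w - w) - (σ a w - w)) =
          σ (a * b * a⁻¹ * b⁻¹) v - v := by
        rw [e1]
        conv_rhs => rw [e2]
        rw [map_sub, map_sub]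
        abel
      rw [e3] at h3
      exact hanti (i + (j + 1 + 1)) _ (by omega) h3
  rw [Group.isSolvable_def]
  refine ⟨k, ?_⟩
  rw [eq_bot_iff]
  intro u hu
  rw [Subgroup.mem_bot]
  apply hinj
  rw [map_one]
  ext v
  have h1 := hD k hu 0 v (by
    change v ∈ LieModule.lowerCentralSeries K 𝔏 V 0
    rw [LieModule.lowerCentralSeries_zero]; exact LieSubmodule.mem_top _)
  have h2 := hanti k (0 + (k + 1)) (by omega) h1
  change σ u v - v ∈ LieModule.lowerCentralSeries K 𝔏 V k at h2
  rw [hk, LieSubmodule.mem_bot] at h2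
  exact sub_eq_zero.1 h2

end

end PCGI


namespace PCGI

open Module Polynomial

section Selberg

lemma int_jacobson : IsJacobsonRing ℤ := by
  rw [isJacobsonRing_iff_prime_eq]
  intro P hP
  by_cases h : P = ⊥
  · subst h
    rw [eq_bot_iff]
    intro x hx
    rw [Ideal.mem_bot]
    obtain ⟨z, hz⟩ := Ideal.mem_jacobson_iff.1 hx x
    rw [Ideal.mem_bot] at hz
    have h1 : z * (x * x + 1) = 1 := by linarith
    have h2 : IsUnit (x * x + 1) := IsUnit.of_mul_eq_one z (by rw [mul_comm]; exact h1)
    have h3 : x * x + 1 = 1 := by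
      rcases Int.isUnit_iff.1 h2 with h | h
      · exact h
      · nlinarith [mul_self_nonneg x]
    have h4 : x * x = 0 := by linarith
    exact mul_self_eq_zero.1 h4
  · haveI : P.IsMaximal := hP.isMaximal h
    exact Ideal.jacobson_eq_self_of_isMaximal

lemma congr_root {A K n : Type*} [CommRing A] [Field K] [Algebra A K] [FaithfulSMul A K]
    [Fintype n] [DecidableEq n] (m : Ideal A) [m.IsMaximal] (M : Matrix n n A)
    (hM : M.map (Ideal.Quotient.mk m) = 1) (z : K)
    (hz : (M.map (algebraMap A K)).charpoly.IsRoot z) (l : ℕ) (hl : z ^ l = 1) (hz1 : z ≠ 1) :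
    (l : A) ∈ m := by
  have hz2 : M.charpoly.eval₂ (algebraMap A K) z = 0 := by
    rw [Matrix.charpoly_map, IsRoot, eval_map] at hz
    exact hz
  have hintg : IsIntegral A z := ⟨M.charpoly, Matrix.charpoly_monic M, hz2⟩
  let B := integralClosure A K
  have hinj : Function.Injective (algebraMap B K) := Subtype.val_injective
  haveI : FaithfulSMul A B := by
    rw [faithfulSMul_iff_algebraMap_injective]
    refine Function.Injective.of_comp (f := algebraMap B K) ?_
    rw [← RingHom.coe_comp, ← IsScalarTower.algebraMap_eq]
    exact FaithfulSMul.algebraMap_injective A K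
  obtain ⟨Q, hQ, hover⟩ := Ideal.exists_maximal_ideal_liesOver_of_isIntegral (S := B) m
  let zB : B := ⟨z, hintg⟩
  have hzB : M.charpoly.eval₂ (algebraMap A B) zB = 0 := by
    apply hinj
    rw [hom_eval₂, ← IsScalarTower.algebraMap_eq, map_zero]
    exact hz2
  let ψ : A ⧸ m →+* B ⧸ Q := Ideal.Quotient.lift m ((Ideal.Quotient.mk Q).comp (algebraMap A B)) (by
    intro a ha
    rw [RingHom.comp_apply, Ideal.Quotient.eq_zero_iff_mem]
    rw [hover.over] at ha
    exact ha)
  have hψ : ψ.comp (Ideal.Quotient.mk m) = (Ideal.Quotient.mk Q).comp (algebraMap A B) := by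
    ext a; rfl
  have h1 : (Ideal.Quotient.mk Q) zB = 1 := by
    have h2 := congrArg (Ideal.Quotient.mk Q) hzB
    rw [hom_eval₂, ← hψ, map_zero, ← eval₂_map, ← Matrix.charpoly_map, hM, Matrix.charpoly_one,
      eval₂_pow, eval₂_sub, eval₂_X, eval₂_one] at h2
    exact sub_eq_zero.1 (eq_zero_of_pow_eq_zero h2)
  have hsum : ∑ i ∈ Finset.range l, zB ^ i = 0 := by
    apply hinj
    rw [map_sum, map_zero]
    have h3 : (∑ i ∈ Finset.range l, z ^ i) * (z - 1) = 0 := by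
      rw [geom_sum_mul, hl, sub_self]
    rcases mul_eq_zero.1 h3 with h | h
    · simpa using h
    · exact absurd (sub_eq_zero.1 h) hz1
  have h4 := congrArg (Ideal.Quotient.mk Q) hsum
  rw [map_sum, map_zero] at h4
  simp only [map_pow, h1, one_pow, Finset.sum_const, Finset.card_range, nsmul_eq_mul,
    mul_one] at h4
  rw [hover.over, Ideal.mem_comap, map_natCast, ← Ideal.Quotient.eq_zero_iff_mem, map_natCast]
  exact h4

lemma finite_quot {A : Type*} [CommRing A] [Algebra.FiniteType ℤ A] (m : Ideal A)
    [hm : m.IsMaximal] : Finite (A ⧸ m) := by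
  letI : Field (A ⧸ m) := Ideal.Quotient.field m
  have hft : Algebra.FiniteType ℤ (A ⧸ m) :=
    Algebra.FiniteType.of_surjective (Ideal.Quotient.mkₐ ℤ m) (Ideal.Quotient.mkₐ_surjective ℤ m)
  haveI := int_jacobson
  have hfin : Module.Finite ℤ (A ⧸ m) := finite_of_finite_type_of_isJacobsonRing ℤ (A ⧸ m)
  obtain ⟨p, hp⟩ := CharP.exists (A ⧸ m)
  rcases Nat.eq_zero_or_pos p with h0 | h0
  · subst h0
    exfalso
    haveI := CharP.charP_to_charZero (A ⧸ m)
    have := isField_of_isIntegral_of_isField (R := ℤ) (S := A ⧸ m)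
      (fun a b hab => Int.cast_injective (α := A ⧸ m) (by simpa using hab)) (Field.toIsField _)
    exact Int.not_isField this
  · haveI : NeZero p := ⟨h0.ne'⟩
    letI := ZMod.algebra (A ⧸ m) p
    haveI : IsScalarTower ℤ (ZMod p) (A ⧸ m) := ⟨fun a b c => by
      simp [Algebra.smul_def, mul_assoc]⟩
    haveI : Module.Finite (ZMod p) (A ⧸ m) := Module.Finite.of_restrictScalars_finite ℤ _ _
    exact Module.finite_of_finite (ZMod p)

lemma exists_two_max {A : Type*} [CommRing A] [IsDomain A] [CharZero A]
    [Algebra.FiniteType ℤ A] : ∃ m₁ m₂ : Ideal A, m₁.IsMaximal ∧ m₂.IsMaximal ∧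
      ∀ l : ℕ, l.Prime → (l : A) ∈ m₁ → (l : A) ∉ m₂ := by
  obtain ⟨m₁, h₁⟩ := Ideal.exists_maximal A
  by_cases hp : ∃ p : ℕ, p.Prime ∧ (p : A) ∈ m₁
  · obtain ⟨p, hp, hpm⟩ := hp
    haveI := int_jacobson
    haveI hJ : IsJacobsonRing A := isJacobsonRing_of_finiteType (A := ℤ)
    have hbot : (⊥ : Ideal A).jacobson = ⊥ :=
      hJ.out (Ideal.IsPrime.isRadical Ideal.isPrime_bot)
    have hne : (p : A) ∉ (⊥ : Ideal A).jacobson := by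
      rw [hbot, Ideal.mem_bot]
      exact_mod_cast hp.ne_zero
    rw [Ideal.jacobson, Ideal.mem_sInf] at hne
    push Not at hne
    obtain ⟨m₂, ⟨-, h₂⟩, hpm₂⟩ := hne
    refine ⟨m₁, m₂, h₁, h₂, fun l hl hlm => ?_⟩
    have : l = p := by
      by_contra hlp
      have hc : Nat.Coprime l p := (Nat.coprime_primes hl hp).2 hlp
      have hb := Int.gcd_eq_gcd_ab l p
      have hg : Int.gcd l p = 1 := by simpa using hc
      rw [hg] at hb
      apply h₁.ne_top
      rw [Ideal.eq_top_iff_one]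
      have : (1 : A) = l * (Int.gcdA l p : ℤ) + p * (Int.gcdB l p : ℤ) := by
        have := congrArg (Int.cast : ℤ → A) hb
        push_cast at this
        exact this
      rw [this]
      exact m₁.add_mem (m₁.mul_mem_right _ hlm) (m₁.mul_mem_right _ hpm)
    rwa [this]
  · push Not at hp
    exact ⟨m₁, m₁, h₁, h₁, fun l hl hlm => absurd hlm (hp l hl)⟩

variable {A K n G : Type*} [CommRing A] [Field K] [Algebra A K] [Fintype n] [DecidableEq n] [Group G]

def congrHom (m : Ideal A) (μ : G →* Matrix n n A) : G →* (Matrix n n (A ⧸ m))ˣ :=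
  (((Ideal.Quotient.mk m).mapMatrix (m := n)).toMonoidHom.comp μ).toHomUnits

lemma congrHom_ker (m : Ideal A) (μ : G →* Matrix n n A) (g : G) (hg : g ∈ (congrHom m μ).ker) :
    (μ g).map (Ideal.Quotient.mk m) = 1 := by
  have := congrArg Units.val (MonoidHom.mem_ker.1 hg)
  exact this

lemma congrHom_fin [Algebra.FiniteType ℤ A] (m : Ideal A) [m.IsMaximal] (μ : G →* Matrix n n A) :
    (congrHom m μ).ker.FiniteIndex := by
  haveI := finite_quot m
  infer_instance

/-- The representation over `K` attached to a matrix representation over `A`. -/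
def matRep (K : Type*) [Field K] [Algebra A K] (μ : G →* Matrix n n A) :
    G →* Module.End K (n → K) where
  toFun g := Matrix.toLin' ((μ g).map (algebraMap A K))
  map_one' := by
    rw [map_one, Matrix.map_one _ (map_zero _) (map_one _), Matrix.toLin'_one]; rfl
  map_mul' a b := by
    rw [map_mul, Matrix.map_mul, Matrix.toLin'_mul]; rfl

lemma matRep_injective [FaithfulSMul A K] (μ : G →* Matrix n n A) (h : Function.Injective μ) :
    Function.Injective (matRep K μ) := by
  intro a b hab
  apply h
  have h1 : (μ a).map (algebraMap A K) = (μ b).map (algebraMap A K) :=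
    (Matrix.toLin' (R := K) (m := n) (n := n)).injective hab
  ext i j
  exact FaithfulSMul.algebraMap_injective A K (congrFun (congrFun h1 i) j)

lemma matRep_eig (μ : G →* Matrix n n A) (g : G) (t : K) :
    (matRep K μ g).HasEigenvalue t ↔ ((μ g).map (algebraMap A K)).charpoly.IsRoot t := by
  rw [Module.End.hasEigenvalue_iff_isRoot_charpoly]
  have h : matRep K μ g = Matrix.toLin' ((μ g).map (algebraMap A K)) := rfl
  rw [h, Matrix.charpoly_toLin']

lemma eig_pow {V : Type*} [AddCommGroup V] [Module K V] (T : Module.End K V) (t : K)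
    (h : T.HasEigenvalue t) (k : ℕ) : (T ^ k).HasEigenvalue (t ^ k) := by
  obtain ⟨v, hv⟩ := h.exists_hasEigenvector
  refine Module.End.hasEigenvalue_of_hasEigenvector (x := v) ⟨?_, hv.2⟩
  rw [Module.End.mem_eigenspace_iff]
  exact hv.pow_apply k

theorem selberg [IsDomain A] [CharZero A] [Algebra.FiniteType ℤ A] [FaithfulSMul A K]
    [IsAlgClosed K] (μ : G →* Matrix n n A) :
    ∃ L : Subgroup G, L.FiniteIndex ∧ ∀ g ∈ L,
      (∀ t, (matRep K μ g).HasEigenvalue t → ∃ k, 0 < k ∧ t ^ k = 1) →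
        IsNilpotent (matRep K μ g - 1) := by
  obtain ⟨m₁, m₂, h₁, h₂, h12⟩ := exists_two_max (A := A)
  haveI := congrHom_fin m₁ μ
  haveI := congrHom_fin m₂ μ
  refine ⟨(congrHom m₁ μ).ker ⊓ (congrHom m₂ μ).ker, inferInstance, fun g hg ht => ?_⟩
  have := nilp_of_eigen (matRep K μ g) 1 (fun t hteig => ?_)
  · simpa using this
  rw [pow_one]
  by_contra hne
  obtain ⟨k, hk, hkt⟩ := ht t hteig
  have hpos : 0 < orderOf t := orderOf_pos_iff.2 (isOfFinOrder_iff_pow_eq_one.2 ⟨k, hk, hkt⟩)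
  have hne1 : orderOf t ≠ 1 := fun h => hne (orderOf_eq_one_iff.1 h)
  obtain ⟨l, hl, hlt⟩ := Nat.exists_prime_and_dvd hne1
  obtain ⟨q, hq⟩ := hlt
  have hq0 : 0 < q := Nat.pos_of_ne_zero (by rintro rfl; rw [mul_zero] at hq; omega)
  have hz1 : t ^ q ≠ 1 := by
    intro h
    have := orderOf_dvd_of_pow_eq_one h
    have := Nat.le_of_dvd hq0 this
    have := hl.two_le
    nlinarith
  have hzl : (t ^ q) ^ l = 1 := by
    rw [← pow_mul, mul_comm, ← hq, pow_orderOf_eq_one]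
  have heig : (matRep K μ (g ^ q)).HasEigenvalue (t ^ q) := by
    rw [map_pow]; exact eig_pow _ _ hteig q
  rw [matRep_eig] at heig
  have hgq := Subgroup.pow_mem _ hg q
  exact h12 l hl
    (congr_root m₁ (μ (g ^ q)) (congrHom_ker m₁ μ _ hgq.1) _ heig l hzl hz1)
    (congr_root m₂ (μ (g ^ q)) (congrHom_ker m₂ μ _ hgq.2) _ heig l hzl hz1)

/-- Characteristic zero endgame. -/
theorem word_charZero [IsDomain A] [CharZero A] [CharZero K] [Algebra.FiniteType ℤ A]
    [FaithfulSMul A K]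
    [IsAlgClosed K] (μ : G →* Matrix n n A) (hμ : Function.Injective μ) (H : Subgroup G)
    [H.FiniteIndex]
    (hroot : ∀ a : H, a ∈ commutator H → ∀ t, (matRep K μ (a : G)).HasEigenvalue t →
      ∃ k, 0 < k ∧ t ^ k = 1) :
    ∃ (m : ℕ) (w : FreeGroup (Fin m)), 1 ≤ m ∧ w ≠ 1 ∧
      ∀ c : Fin m → G, ∃ p : ℕ, 0 < p ∧ (FreeGroup.lift c w) ^ p = 1 := by
  obtain ⟨L, hL, hLn⟩ := selberg (K := K) μ
  let H1 : Subgroup G := H ⊓ L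
  haveI : H1.FiniteIndex := inferInstanceAs (H ⊓ L).FiniteIndex
  apply exists_word_of_solvable H1
  let ι : H1 →* H := Subgroup.inclusion inf_le_left
  have hcomm : ∀ a : H1, a ∈ commutator H1 → ι a ∈ commutator H := by
    intro a ha
    have : (commutator H1).map ι ≤ commutator H := by
      rw [commutator_def, Subgroup.map_commutator, commutator_def]
      exact Subgroup.commutator_mono le_top le_top
    exact this (Subgroup.mem_map_of_mem ι ha)
  haveI : Group.IsSolvable (commutator H1) := by
    refine solvable_of_unipotent (K := K) (V := n → K)
      ((matRep K μ).comp (H1.subtype.comp (commutator H1).subtype)) ?_ ?_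
    · exact (matRep_injective μ hμ).comp
        (Subtype.val_injective.comp Subtype.val_injective)
    · intro u
      exact hLn _ u.1.2.2 (hroot (ι u.1) (hcomm _ u.2))
  exact Group.isSolvable_of_ker_le_range (commutator H1).subtype
    (Abelianization.of (G := H1)) (by rw [Abelianization.ker_of, Subgroup.range_subtype])

end Selberg

end PCGI


namespace PCGI

open Module

section Core

variable {A n G : Type*} [CommRing A] [Fintype n] [DecidableEq n] [Group G]

theorem core [IsDomain A] [Countable A] [Algebra.FiniteType ℤ A]
    (μ : G →* Matrix n n A) (hμ : Function.Injective μ)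
    (hfree : ¬ ∃ f : FreeGroup (Fin 2) →* G, Function.Injective f) :
    ∃ (m : ℕ) (w : FreeGroup (Fin m)), 1 ≤ m ∧ w ≠ 1 ∧
      ∀ c : Fin m → G, ∃ p : ℕ, 0 < p ∧ (FreeGroup.lift c w) ^ p = 1 := by
  let K := AlgebraicClosure (FractionRing A)
  haveI : Countable (FractionRing A) :=
    (IsLocalization.mk'_surjective (S := FractionRing A) (nonZeroDivisors A)).countable
  haveI : Countable K := by
    have hc : {x : K | IsAlgebraic (FractionRing A) x}.Countable :=
      Algebraic.countable (FractionRing A) K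
    exact Set.countable_univ_iff.1 (hc.mono fun x _ =>
      Algebra.IsAlgebraic.isAlgebraic (R := FractionRing A) x)
  haveI : FaithfulSMul A K := by
    rw [faithfulSMul_iff_algebraMap_injective, IsScalarTower.algebraMap_eq A (FractionRing A) K]
    exact (algebraMap (FractionRing A) K).injective.comp (IsFractionRing.injective A (FractionRing A))
  let ρ := matRep K μ
  have hρ : Function.Injective ρ := matRep_injective μ hμ
  obtain ⟨H, hH, hflag⟩ := exists_good_subgroup ρ
  have hroot : ∀ a : H, a ∈ commutator H → ∀ t, (ρ (a : G)).HasEigenvalue t →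
      ∃ k, 0 < k ∧ t ^ k = 1 := by
    intro a ha t ht
    by_contra hno
    push Not at hno
    have ht0 : t ≠ 0 := by
      rintro rfl
      obtain ⟨v, hv⟩ := ht.exists_hasEigenvector
      have h0 := hv.apply_eq_smul
      rw [zero_smul] at h0
      apply hv.2
      have h1 : ρ ((a : G)⁻¹ * a) v = 0 := by
        rw [map_mul, Module.End.mul_apply, h0, map_zero]
      simpa using h1
    obtain ⟨v, hv⟩ := exists_abs t ht0 hno
    obtain ⟨f, hf⟩ := caseI ρ H hflag a ha t ht v hv
    exact hfree ⟨H.subtype.comp f, Subtype.val_injective.comp hf⟩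
  obtain ⟨p, hp⟩ := CharP.exists A
  haveI hpK : CharP K p := charP_of_injective_algebraMap (FaithfulSMul.algebraMap_injective A K) p
  rcases CharP.char_is_prime_or_zero A p with hpr | h0
  · haveI : Fact p.Prime := ⟨hpr⟩
    apply exists_word_of_comm H
    intro x hx y hy
    let x' : H := ⟨x, hx⟩
    let y' : H := ⟨y, hy⟩
    have hc : x' * y' * x'⁻¹ * y'⁻¹ ∈ commutator H := by
      rw [← commutatorElement_def, commutator_def]
      exact Subgroup.commutator_mem_commutator (Subgroup.mem_top _) (Subgroup.mem_top _)
    obtain ⟨m, hm, h1⟩ := pow_eq_one_charp p (ρ (x * y * x⁻¹ * y⁻¹))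
      (hroot (x' * y' * x'⁻¹ * y'⁻¹) hc)
    refine ⟨m, hm, hρ ?_⟩
    rw [map_pow, h1, map_one]
  · subst h0
    haveI := CharP.charP_to_charZero A
    haveI := CharP.charP_to_charZero K
    exact word_charZero (K := K) μ hμ H hroot

end Core

/-- Finitely generated matrix groups are defined over a finitely generated ring. -/
theorem core_field {F n G : Type*} [Field F] [Fintype n] [DecidableEq n] [Group G] [Group.FG G]
    (ν : G →* Matrix n n F) (hν : Function.Injective ν)
    (hfree : ¬ ∃ f : FreeGroup (Fin 2) →* G, Function.Injective f) :
    ∃ (m : ℕ) (w : FreeGroup (Fin m)), 1 ≤ m ∧ w ≠ 1 ∧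
      ∀ c : Fin m → G, ∃ p : ℕ, 0 < p ∧ (FreeGroup.lift c w) ^ p = 1 := by
  obtain ⟨S, hS⟩ := (Group.fg_def (G := G)).1 inferInstance
  let E : Set F := ⋃ g ∈ S, ((Set.range fun ij : n × n => ν g ij.1 ij.2) ∪
    (Set.range fun ij : n × n => ν g⁻¹ ij.1 ij.2))
  have hE : E.Finite := Set.Finite.biUnion S.finite_toSet
    (fun g _ => (Set.finite_range _).union (Set.finite_range _))
  let A := Algebra.adjoin ℤ E
  haveI hft : Algebra.FiniteType ℤ A := by
    rw [← Subalgebra.fg_iff_finiteType]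
    exact ⟨hE.toFinset, by rw [Set.Finite.coe_toFinset]⟩
  haveI : Countable A := by
    obtain ⟨k, f, hf⟩ := Algebra.FiniteType.iff_quotient_mvPolynomial''.1 hft
    haveI : Countable (MvPolynomial (Fin k) ℤ) := by
      rw [← Cardinal.mk_le_aleph0_iff]
      refine MvPolynomial.cardinalMk_le_max.trans ?_
      simp
    exact hf.countable
  have hmem : ∀ g : G, ∀ i j, ν g i j ∈ A := by
    intro g
    have hg : g ∈ Subgroup.closure (S : Set G) := by rw [hS]; trivial
    induction hg using Subgroup.closure_induction'' with
    | mem x hx =>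
      intro i j
      apply Algebra.subset_adjoin
      exact Set.mem_biUnion hx (Or.inl ⟨(i, j), rfl⟩)
    | inv_mem x hx =>
      intro i j
      apply Algebra.subset_adjoin
      exact Set.mem_biUnion hx (Or.inr ⟨(i, j), rfl⟩)
    | one =>
      intro i j
      rw [map_one, Matrix.one_apply]
      split_ifs
      · exact A.one_mem
      · exact A.zero_mem
    | mul x y _ _ hx hy =>
      intro i j
      rw [map_mul, Matrix.mul_apply]
      exact A.sum_mem fun k _ => A.mul_mem (hx i k) (hy k j)
  let μ : G →* Matrix n n A :=
    { toFun := fun g => Matrix.of fun i j => ⟨ν g i j, hmem g i j⟩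
      map_one' := by
        ext i j
        simp [Matrix.one_apply]
        split_ifs <;> rfl
      map_mul' := fun a b => by
        ext i j
        simp [Matrix.mul_apply] }
  have hμ : Function.Injective μ := by
    intro a b hab
    apply hν
    ext i j
    exact congrArg Subtype.val (congrFun (congrFun hab i) j)
  exact core μ hμ hfree

theorem main_dir {F R : Type*} [Field F] [Ring R] [Algebra F R] [FiniteDimensional F R]
    (N : Subgroup Rˣ) (hfg : N.FG) (hfree : ¬ ∃ f : FreeGroup (Fin 2) →* N, Function.Injective f) :
      ∃ (m : ℕ) (w : FreeGroup (Fin m)), 1 ≤ m ∧ w ≠ 1 ∧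
        ∀ c : Fin m → N, ∃ p : ℕ, 0 < p ∧
          ((FreeGroup.lift (fun i => (c i : Rˣ)) w : Rˣ) : R) ^ p ∈ Subring.center R := by
  haveI : Group.FG N := (Group.fg_iff_subgroup_fg N).2 hfg
  let b := Module.finBasis F R
  let ν : N →* Matrix (Fin (finrank F R)) (Fin (finrank F R)) F :=
    ((Algebra.leftMulMatrix b : R →ₐ[F] _) : R →* _).comp ((Units.coeHom R).comp N.subtype)
  have hν : Function.Injective ν :=
    (Algebra.leftMulMatrix_injective b).comp (Units.val_injective.comp Subtype.val_injective)
  obtain ⟨m, w, hm, hw, h⟩ := core_field ν hν hfree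
  refine ⟨m, w, hm, hw, fun c => ?_⟩
  obtain ⟨p, hp, hp1⟩ := h c
  refine ⟨p, hp, ?_⟩
  have h2 : FreeGroup.lift (fun i => (c i : Rˣ)) w = N.subtype (FreeGroup.lift c w) := by
    have : FreeGroup.lift (fun i => (c i : Rˣ)) = N.subtype.comp (FreeGroup.lift c) := by
      ext i; simp
    rw [this]; rfl
  rw [h2, ← Units.val_pow_eq_pow_val, ← map_pow, hp1, map_one]
  exact Subring.one_mem _

end PCGI

/-- Let `R` be a finite-dimensional algebra over a field `F` and `N` a finitely generated
subgroup of `Rˣ`. Then `N` contains no non-cyclic free subgroup if and only if `N` satisfies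
a power central group identity: there is a nonidentity word `w` in a free group on `m`
generators such that every evaluation of `w` at elements of `N` has some positive power
lying in the center of `R`. -/
theorem no_free_subgroup_iff_power_central_group_identity
    {F R : Type*} [Field F] [Ring R] [Algebra F R] [FiniteDimensional F R]
    (N : Subgroup Rˣ) (hfg : N.FG) :
    (¬ ∃ f : FreeGroup (Fin 2) →* N, Function.Injective f) ↔
      ∃ (m : ℕ) (w : FreeGroup (Fin m)), 1 ≤ m ∧ w ≠ 1 ∧
        ∀ c : Fin m → N, ∃ p : ℕ, 0 < p ∧
          ((FreeGroup.lift (fun i => (c i : Rˣ)) w : Rˣ) : R) ^ p ∈ Subring.center R := by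
  exact ⟨PCGI.main_dir (F := F) N hfg, fun ⟨m, w, _, hw, h⟩ => PCGI.no_free_of_pcgi N m w hw h⟩
end

section
/- Let R be a ring of characteristic p > 0 whose Jacobson radical J(R) is a nil ideal. Then the unit group Rˣ contains a non-cyclic free subgroup if and only if the unit group of the quotient ring R/J(R) contains a non-cyclic free subgroup. -/
open Polynomial in
theorem aux_dvd (p : ℕ) (k : ℕ) :
    (X : (ZMod p)[X]) ^ (k + 1) ∣ (1 + X) ^ (p ^ k) - 1 := by
  induction k with
  | zero => simp
  | succ k ih =>
    set u : (ZMod p)[X] := (1 + X) ^ (p ^ k) with hu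
    have h1 : (X : (ZMod p)[X]) ∣ u - 1 := (dvd_pow_self X (Nat.succ_ne_zero k)).trans ih
    have h2 : (X : (ZMod p)[X]) ∣ ∑ i ∈ Finset.range p, u ^ i := by
      have h3 : ∑ i ∈ Finset.range p, u ^ i = ∑ i ∈ Finset.range p, (u ^ i - 1) := by
        simp [Finset.sum_sub_distrib]
      rw [h3]
      refine Finset.dvd_sum fun i _ => h1.trans ?_
      simpa using sub_dvd_pow_sub_pow u 1 i
    have h4 : (1 + X : (ZMod p)[X]) ^ (p ^ (k + 1)) - 1
        = (u - 1) * ∑ i ∈ Finset.range p, u ^ i := by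
      rw [mul_geom_sum, hu, ← pow_mul, pow_succ]
    rw [h4, pow_succ]
    exact mul_dvd_mul ih h2

theorem aux_torsion {R : Type*} [Ring R] (p : ℕ) [CharP R p] (x : R)
    (hx : IsNilpotent x) : ∃ k : ℕ, (1 + x) ^ (p ^ k) = 1 := by
  obtain ⟨m, hm⟩ := hx
  letI : Algebra (ZMod p) R := ZMod.algebra R p
  obtain ⟨q, hq⟩ := aux_dvd p m
  refine ⟨m, ?_⟩
  have := congrArg (Polynomial.aeval x) hq
  simp only [map_sub, map_pow, map_add, map_one, map_mul, Polynomial.aeval_X, pow_succ x m, hm,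
    zero_mul] at this
  exact sub_eq_zero.mp this

theorem aux_lift {R S : Type*} [Ring R] [Ring S] (φ : R →+* S) (hφ : Function.Surjective φ)
    (hnil : ∀ x, φ x = 0 → IsNilpotent x) :
    Function.Surjective (Units.map (φ : R →* S)) := by
  intro u
  obtain ⟨a, ha⟩ := hφ u
  obtain ⟨b, hb⟩ := hφ (u⁻¹ : Sˣ)
  have h1 : IsUnit (a * b) := by
    have := (hnil (a * b - 1) (by simp [ha, hb])).isUnit_one_add
    simpa using this
  have h2 : IsUnit (b * a) := by
    have := (hnil (b * a - 1) (by simp [ha, hb])).isUnit_one_add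
    simpa using this
  obtain ⟨c, hc, -⟩ := isUnit_iff_exists.mp h1
  obtain ⟨d, -, hd⟩ := isUnit_iff_exists.mp h2
  have h3 : d * b = b * c := left_inv_eq_right_inv (a := a) (by rw [mul_assoc, hd])
    (by rw [← mul_assoc, hc])
  refine ⟨⟨a, b * c, by rw [← mul_assoc, hc], by rw [← h3, mul_assoc, hd]⟩, ?_⟩
  ext
  simpa using ha


/-- Let `R` be a ring of characteristic `p > 0` whose Jacobson radical is a nil ideal.
Then `Rˣ` contains a non-cyclic free subgroup (a subgroup isomorphic to the free group on
two generators) if and only if the unit group of `R / J(R)` does. -/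
theorem units_free_subgroup_iff_quotient_jacobson
    {R : Type*} [Ring R] (p : ℕ) (hp : 0 < p) [CharP R p]
    (hnil : ∀ x ∈ TwoSidedIdeal.jacobson (⊥ : TwoSidedIdeal R), IsNilpotent x) :
    (∃ f : FreeGroup (Fin 2) →* Rˣ, Function.Injective f) ↔
      ∃ f : FreeGroup (Fin 2) →*
          ((TwoSidedIdeal.jacobson (⊥ : TwoSidedIdeal R)).ringCon.Quotient)ˣ,
        Function.Injective f := by
  set I := TwoSidedIdeal.jacobson (⊥ : TwoSidedIdeal R) with hI
  have hker : ∀ x, I.ringCon.mk' x = 0 → IsNilpotent x := by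
    intro x hx
    apply hnil
    rw [← TwoSidedIdeal.ker_ringCon_mk' I, TwoSidedIdeal.mem_ker]
    exact hx
  constructor
  · rintro ⟨f, hf⟩
    refine ⟨(Units.map (I.ringCon.mk' : R →* I.ringCon.Quotient)).comp f, ?_⟩
    rw [injective_iff_map_eq_one]
    intro g hg
    have h1 : I.ringCon.mk' ((f g : R) - 1) = 0 := by
      have := congrArg Units.val hg
      rw [map_sub, map_one, sub_eq_zero]
      simpa using this
    obtain ⟨k, hk⟩ := aux_torsion p _ (hker _ h1)
    rw [add_sub_cancel] at hk
    have h2 : f (g ^ (p ^ k)) = f 1 := by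
      ext
      simpa using hk
    exact (pow_eq_one_iff_left (pow_pos hp k).ne').mp (hf h2)
  · rintro ⟨f, hf⟩
    have hs := aux_lift I.ringCon.mk' I.ringCon.mk'_surjective hker
    choose s hs using hs
    refine ⟨FreeGroup.lift fun i => s (f (FreeGroup.of i)), ?_⟩
    have : (Units.map (I.ringCon.mk' : R →* I.ringCon.Quotient)).comp
        (FreeGroup.lift fun i => s (f (FreeGroup.of i))) = f := by
      ext1 i
      simp [hs]
    apply Function.Injective.of_comp (f := Units.map (I.ringCon.mk' : R →* I.ringCon.Quotient))
    rw [← MonoidHom.coe_comp, this]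
    exact hf
end

section
/- Let R be a ring of characteristic p > 0 whose Jacobson radical J(R) is a nil ideal, and let N be a subgroup of the unit group Rˣ which is a non-cyclic free group. Then the natural group homomorphism Rˣ → (R/J(R))ˣ induced by the quotient map is injective on N, and the image of N is a non-cyclic free subgroup of (R/J(R))ˣ. -/
/-- The group homomorphism `Rˣ → (R / J(R))ˣ` on unit groups induced by the quotient map
`R → R / J(R)` modulo the Jacobson radical. -/
noncomputable def unitsToJacobsonQuotient (R : Type*) [Ring R] :
    Rˣ →* ((TwoSidedIdeal.jacobson (⊥ : TwoSidedIdeal R)).ringCon.Quotient)ˣ :=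
  Units.map (RingCon.mk' (TwoSidedIdeal.jacobson (⊥ : TwoSidedIdeal R)).ringCon).toMonoidHom

theorem one_add_nilpotent_pow_eq_one {R : Type*} [Ring R] (p : ℕ) (hp : 0 < p) [CharP R p]
    (x : R) (hx : IsNilpotent x) : ∃ m : ℕ, m ≠ 0 ∧ (x + 1) ^ m = 1 := by
  obtain ⟨k, hk⟩ := hx
  have hne : p * k.factorial ≠ 0 := Nat.mul_ne_zero hp.ne' (Nat.factorial_ne_zero k)
  refine ⟨p * k.factorial, hne, ?_⟩
  rw [(Commute.one_right x).add_pow, Finset.sum_eq_single 0]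
  · simp
  · intro i _ hi0
    rcases Nat.lt_or_ge i k with hik | hik
    · have hd : p ∣ (p * k.factorial).choose i := by
        obtain ⟨j, rfl⟩ := Nat.exists_eq_succ_of_ne_zero hi0
        obtain ⟨M, hM⟩ := Nat.exists_eq_succ_of_ne_zero hne
        obtain ⟨c, hc⟩ := Nat.dvd_factorial (Nat.succ_pos j) hik.le
        have h := Nat.add_one_mul_choose_eq M j
        have hM' : M + 1 = p * k.factorial := hM.symm
        rw [hM', hc] at h
        rw [hc]
        refine ⟨c * M.choose j, ?_⟩
        apply Nat.eq_of_mul_eq_mul_right (Nat.succ_pos j)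
        simp only [Nat.succ_eq_add_one] at h ⊢
        rw [← h]
        ring
      rw [(CharP.cast_eq_zero_iff R p _).2 hd, mul_zero]
    · rw [pow_eq_zero_of_le hik hk]; simp
  · intro h
    exact absurd (Finset.mem_range.2 (Nat.succ_pos _)) h

/-- Let `R` be a ring of characteristic `p > 0` whose Jacobson radical is a nil ideal, and
let `N ≤ Rˣ` be a subgroup which is a non-cyclic free group (free of rank at least 2). Then
the natural map `Rˣ → (R / J(R))ˣ` is injective on `N` and maps `N` onto a non-cyclic free
subgroup of `(R / J(R))ˣ`. -/
theorem image_of_free_subgroup_in_quotient_jacobson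
    {R : Type*} [Ring R] (p : ℕ) (hp : 0 < p) [CharP R p]
    (hnil : ∀ x ∈ TwoSidedIdeal.jacobson (⊥ : TwoSidedIdeal R), IsNilpotent x)
    (N : Subgroup Rˣ)
    (hfree : ∃ (ι : Type) (_ : Nontrivial ι), Nonempty (FreeGroup ι ≃* N)) :
    Set.InjOn (unitsToJacobsonQuotient R) (N : Set Rˣ) ∧
      ∃ (ι : Type) (_ : Nontrivial ι),
        Nonempty (FreeGroup ι ≃* (N.map (unitsToJacobsonQuotient R))) := by
  obtain ⟨ι, hι, ⟨e⟩⟩ := hfree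
  have hinj : Function.Injective ((unitsToJacobsonQuotient R).comp N.subtype) := by
    rw [injective_iff_map_eq_one]
    intro u hu
    have h1 : (RingCon.mk' (TwoSidedIdeal.jacobson (⊥ : TwoSidedIdeal R)).ringCon)
        ((u : Rˣ) : R) = RingCon.mk' _ 1 := by
      rw [map_one]
      exact congrArg Units.val hu
    have h2 := (TwoSidedIdeal.rel_iff _ _ _).1 (Quotient.exact h1)
    obtain ⟨m, hm0, hm⟩ := one_add_nilpotent_pow_eq_one p hp _ (hnil _ h2)
    rw [sub_add_cancel] at hm
    have h3 : u ^ m = 1 := by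
      apply Subtype.ext
      apply Units.ext
      simpa using hm
    have h4 : e.symm u = 1 := by
      apply pow_left_injective hm0
      simp [← map_pow, h3]
    simpa using h4
  refine ⟨fun a ha b hb hab => ?_, ι, hι, ⟨e.trans ?_⟩⟩
  · exact congrArg Subtype.val (@hinj ⟨a, ha⟩ ⟨b, hb⟩ hab)
  · refine (MonoidHom.ofInjective hinj).trans (MulEquiv.subgroupCongr ?_)
    rw [MonoidHom.range_comp, Subgroup.range_subtype]
end

section
/- Let F be a non-absolute field of characteristic p > 0 and G a locally finite group, and let FG denote the group algebra of G over F. Then the unit group (FG)ˣ contains no non-cyclic free subgroup if and only if the derived subgroup G' = [G,G] is a p-group. -/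
/-- A field is *absolute* (or *locally finite*) if its prime subfield is finite and the
field is algebraic over it. -/
def IsAbsoluteField (F : Type*) [Field F] : Prop :=
  Finite (⊥ : Subfield F) ∧ Algebra.IsAlgebraic (⊥ : Subfield F) F

/-- A group is *locally finite* if every finitely generated subgroup is finite. -/
def IsLocallyFiniteGroup (G : Type*) [Group G] : Prop :=
  ∀ H : Subgroup G, H.FG → Finite H

theorem jac_nil {R : Type*} [Ring R] [IsArtinianRing R] {x : R} (hx : x ∈ Ring.jacobson R) : IsNilpotent x := by
  obtain ⟨n, hn⟩ := IsSemiprimaryRing.isNilpotent (R := R)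
  refine ⟨n, ?_⟩
  have := Ideal.pow_mem_pow hx n
  rw [hn] at this
  simpa using this

/-- elements congruent to one modulo the radical have p-power order -/
theorem jac_pow {R : Type*} [Ring R] [IsArtinianRing R] (p : ℕ) [Fact p.Prime] [CharP R p] {x : R}
    (hx : x - 1 ∈ Ring.jacobson R) : ∃ k, x ^ p ^ k = 1 := by
  obtain ⟨n, hn⟩ := jac_nil hx
  refine ⟨n, ?_⟩
  have h1 : (x - 1) ^ p ^ n = 0 := pow_eq_zero_of_le (Nat.lt_pow_self (Fact.out : p.Prime).one_lt).le hn
  rw [sub_pow_char_pow_of_commute p n (Commute.one_right x), one_pow, sub_eq_zero] at h1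
  exact h1

theorem finite_ring_dichotomy.{u} {A : Type u} [Ring A] [Finite A] :
    (∀ x y : A, x * y - y * x ∈ Ring.jacobson A) ∨
    ∃ (k : Type u) (_ : Field k) (_ : Finite k) (n : ℕ) (i j : Fin n) (_ : i ≠ j)
      (ψ : A →+* Matrix (Fin n) (Fin n) k) (a b : A), IsNilpotent a ∧ IsNilpotent b ∧
      ψ a = Matrix.single i j 1 ∧ ψ b = Matrix.single j i 1 := by
  classical
  obtain ⟨n, D, d, _, hd, ⟨e⟩⟩ :=
    IsSemisimpleRing.exists_ringEquiv_pi_matrix_divisionRing (A ⧸ Ring.jacobson A)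
  have hfin0 : Finite (A ⧸ Ring.jacobson A) :=
    Finite.of_surjective _ (Ideal.Quotient.mk_surjective (I := Ring.jacobson A))
  have hfin : Finite (Π i, Matrix (Fin (d i)) (Fin (d i)) (D i)) := Finite.of_equiv _ e.toEquiv
  have hD : ∀ i, Finite (D i) := by
    intro i
    have h0 : ∀ l, ∃ f : Fin (d l), True := fun l => ⟨⟨0, Nat.pos_of_ne_zero (hd l).out⟩, trivial⟩
    obtain ⟨f, -⟩ := h0 i
    refine Finite.of_surjective (fun x : (Π i, Matrix (Fin (d i)) (Fin (d i)) (D i)) => x i f f) ?_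
    intro c
    refine ⟨Pi.single i (Matrix.of fun _ _ => c), ?_⟩
    change (Pi.single (M := fun i => Matrix (Fin (d i)) (Fin (d i)) (D i)) i
      (Matrix.of fun _ _ => c)) i f f = c
    rw [Pi.single_eq_same]; rfl
  by_cases h : ∀ l, d l ≤ 1
  · left
    intro x y
    rw [← Ideal.Quotient.eq]
    apply e.injective
    simp only [map_mul]
    generalize e _ = x
    generalize e _ = y
    funext l
    ext r s
    have : Subsingleton (Fin (d l)) := Fin.subsingleton_iff_le_one.2 (h l)
    let := littleWedderburn (D l)
    simp only [Pi.mul_apply, Matrix.mul_apply]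
    refine Finset.sum_congr rfl fun q _ => ?_
    rw [Subsingleton.elim q r, Subsingleton.elim s r]
    exact mul_comm (G := D l) _ _
  · right
    push Not at h
    obtain ⟨l, hl⟩ := h
    let i : Fin (d l) := ⟨0, by omega⟩
    let j : Fin (d l) := ⟨1, hl⟩
    have hij : i ≠ j := by simp [i, j]
    have key : ∀ r s : Fin (d l), r ≠ s → ∃ a : A, IsNilpotent a ∧
        e (Ideal.Quotient.mk _ a) l = Matrix.single r s 1 := by
      intro r s hrs
      obtain ⟨a, ha⟩ := Ideal.Quotient.mk_surjective (e.symm (Pi.single l (Matrix.single r s 1)))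
      refine ⟨a, ?_, by rw [ha]; simp⟩
      have : a ^ 2 ∈ Ring.jacobson A := by
        rw [← Ideal.Quotient.eq_zero_iff_mem, map_pow, ha, ← map_pow, pow_two, ← Pi.single_mul,
          Matrix.single_mul_single_of_ne _ _ _ _ hrs.symm]
        simp
      obtain ⟨q, hq⟩ := jac_nil this
      exact ⟨2 * q, by rw [pow_mul, hq]⟩
    obtain ⟨a, ha, ha'⟩ := key i j hij
    obtain ⟨b, hb, hb'⟩ := key j i hij.symm
    exact ⟨D l, littleWedderburn (D l), hD l, d l, i, j, hij,
      ((Pi.evalRingHom (fun i => Matrix (Fin (d i)) (Fin (d i)) (D i)) l).comp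
        e.toRingHom).comp (Ideal.Quotient.mk (Ring.jacobson A)), a, b, ha, hb, ha', hb'⟩

theorem exists_fixed {R N V : Type*} [Ring R] [Group N] [Finite N] [AddCommGroup V] [Module R V]
    (p : ℕ) [Fact p.Prime] [Module (ZMod p) V] (hp0 : ∀ v : V, p • v = 0) (hN : IsPGroup p N) (ρ : N →* R)
    (x0 : V) (hx0 : x0 ≠ 0) : ∃ b : V, b ≠ 0 ∧ ∀ g, ρ g • b = b := by
  let S : Submodule (ZMod p) V := Submodule.span (ZMod p) (Set.range fun h : N => ρ h • x0)
  have hSF : Module.Finite (ZMod p) S :=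
    Module.Finite.span_of_finite (ZMod p) (Set.finite_range fun h : N => ρ h • x0)
  have hSfin : Finite S := Module.finite_of_finite (ZMod p)
  have hst : ∀ g : N, ∀ v ∈ S, ρ g • v ∈ S := by
    intro g v hv
    induction hv using Submodule.span_induction with
    | mem v hv =>
      obtain ⟨h, rfl⟩ := hv
      refine Submodule.subset_span ⟨g * h, ?_⟩
      simp only [map_mul, mul_smul]
    | zero => rw [smul_zero]; exact S.zero_mem
    | add a b _ _ ha hb => rw [smul_add]; exact S.add_mem ha hb
    | smul c a _ ha =>
      have : ρ g • c • a = c • ρ g • a :=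
        ZMod.map_smul (DistribSMul.toAddMonoidHom V (ρ g)) c a
      rw [this]; exact S.smul_mem c ha
  let act : MulAction N S :=
    { smul := fun g v => ⟨ρ g • (v : V), hst _ _ v.2⟩
      one_smul := fun v => Subtype.ext (by
        change ρ 1 • (v : V) = v
        rw [map_one, one_smul])
      mul_smul := fun g h v => Subtype.ext (by
        change ρ (g * h) • (v : V) = ρ g • ρ h • (v : V)
        rw [map_mul, mul_smul]) }
  have hx0S : x0 ∈ S := Submodule.subset_span ⟨1, by simp only [map_one, one_smul]⟩
  have hdvd : p ∣ Nat.card S := by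
    have h5 : addOrderOf (⟨x0, hx0S⟩ : S) = p :=
      addOrderOf_eq_prime (Subtype.ext (hp0 x0)) fun h => hx0 (congrArg Subtype.val h)
    exact h5.symm.dvd.trans (addOrderOf_dvd_natCard _)
  obtain ⟨b, hb, hb0⟩ := hN.exists_fixed_point_of_prime_dvd_card_of_fixed_point S hdvd
    (a := (0 : S)) (fun g => Subtype.ext (smul_zero _))
  exact ⟨b, fun h => hb0 (Subtype.ext h.symm), fun g => congrArg Subtype.val (hb g)⟩

open scoped commutatorElement in
theorem comm_of_pgroup {k H : Type*} [Field k] [Group H] [Finite H] (p : ℕ) [Fact p.Prime]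
    [CharP k p] (hH : IsPGroup p (commutator H)) (x y : MonoidAlgebra k H) :
    x * y - y * x ∈ Ring.jacobson (MonoidAlgebra k H) := by
  have h1 : ∀ n ∈ commutator H, MonoidAlgebra.of k H n - 1 ∈ Ring.jacobson (MonoidAlgebra k H) := by
    intro n hn
    rw [Ring.jacobson_eq_sInf_isMaximal, Submodule.mem_sInf]
    intro m hm
    have hs : IsSimpleModule (MonoidAlgebra k H) (MonoidAlgebra k H ⧸ m) :=
      isSimpleModule_iff_isCoatom.2 (Ideal.isMaximal_def.1 hm)
    let V := MonoidAlgebra k H ⧸ m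
    let o : H → MonoidAlgebra k H := fun h => MonoidAlgebra.of k H h
    let W0 : AddSubgroup V :=
      { carrier := {v | ∀ g ∈ commutator H, o g • v = v}
        zero_mem' := by simp
        add_mem' := by
          intro a b ha hb g hg
          rw [smul_add, ha g hg, hb g hg]
        neg_mem' := by
          intro a ha g hg
          rw [smul_neg, ha g hg] }
    let W : Submodule (MonoidAlgebra k H) V :=
      { W0 with
        smul_mem' := by
          intro c v hv
          change c • v ∈ W0
          induction c using MonoidAlgebra.induction_on with
          | of h =>
            intro g hg
            change o g • o h • v = o h • v
            have : g * h = h * (h⁻¹ * g * h⁻¹⁻¹) := by group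
            have h2 := hv _ ((inferInstance : (commutator H).Normal).conj_mem g hg h⁻¹)
            rw [smul_smul, ← map_mul, this, map_mul, ← smul_smul, h2]
          | add a b ha hb => rw [add_smul]; exact W0.add_mem ha hb
          | smul r a ha =>
            intro g hg
            have e : o g * (r • a) = (algebraMap k (MonoidAlgebra k H) r) * (o g * a) := by
              rw [mul_smul_comm, Algebra.smul_def]
            rw [smul_smul, e, mul_smul, mul_smul, ha g hg, ← mul_smul, Algebra.smul_def] }
    have hW : W ≠ ⊥ := by
      have hp0 : ∀ v : V, p • v = 0 := by
        intro v
        have e : (p : MonoidAlgebra k H) = 0 := by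
          rw [← map_natCast (algebraMap k (MonoidAlgebra k H)), CharP.cast_eq_zero, map_zero]
        rw [← Nat.cast_smul_eq_nsmul (MonoidAlgebra k H), e, zero_smul]
      have hx0 : (Submodule.Quotient.mk 1 : V) ≠ 0 := by
        intro h
        rw [Submodule.Quotient.mk_eq_zero] at h
        exact hm.ne_top ((Ideal.eq_top_iff_one m).2 h)
      let _ : Module (ZMod p) V := AddCommGroup.zmodModule hp0
      obtain ⟨b, hb0, hb⟩ := exists_fixed p hp0 hH
        ((MonoidAlgebra.of k H).comp (commutator H).subtype) _ hx0
      intro hbot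
      have hbW : (b : V) ∈ W := by
        intro g hg
        exact hb ⟨g, hg⟩
      rw [hbot, Submodule.mem_bot] at hbW
      exact hb0 hbW
    have hW' : W = ⊤ := (eq_bot_or_eq_top W).resolve_left hW
    have h3 : (Submodule.Quotient.mk 1 : V) ∈ W := by rw [hW']; trivial
    have h4 := h3 n hn
    rw [← Submodule.Quotient.mk_smul, Submodule.Quotient.eq] at h4
    simpa [o] using h4
  rw [← Ideal.Quotient.eq]
  induction x using MonoidAlgebra.induction_on with
  | of g =>
    induction y using MonoidAlgebra.induction_on with
    | of h =>
      have e : g * h = h * g * ⁅g⁻¹, h⁻¹⁆ := by simp only [commutatorElement_def]; group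
      have h2 := h1 ⁅g⁻¹, h⁻¹⁆ (Subgroup.commutator_mem_commutator (Subgroup.mem_top _) (Subgroup.mem_top _))
      rw [← map_mul, ← map_mul, e, map_mul _ (h * g), Ideal.Quotient.eq]
      have := Ideal.mul_mem_left _ (MonoidAlgebra.of k H (h * g)) h2
      rwa [mul_sub, mul_one] at this
    | add a b ha hb => rw [mul_add, add_mul, map_add, map_add, ha, hb]
    | smul r a ha =>
      rw [mul_smul_comm, smul_mul_assoc, Algebra.smul_def, Algebra.smul_def, map_mul, ha,
        ← map_mul]
  | add a b ha hb => rw [mul_add, add_mul, map_add, map_add, ha, hb]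
  | smul r a ha =>
      rw [mul_smul_comm, smul_mul_assoc, Algebra.smul_def, Algebra.smul_def, map_mul, ha,
        ← map_mul]

open Pointwise in
theorem pingpong_aux {K Γ₀ Γ V : Type*} [Field K] [LinearOrderedCommGroupWithZero Γ₀]
    (w : Valuation K Γ₀) [Group Γ] [MulAction Γ V] (y z : V → K)
    (hsurj : ∀ a b, ∃ v, y v = a ∧ z v = b) (f : Fin 2 → K) (hf : ∀ m, 1 < w (f m))
    (hff : ∀ m m', m ≠ m' → 1 < w (f m - f m')) (x : Fin 2 → Γ)
    (hz : ∀ m v, z (x m • v) = z v + f m * y v)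
    (hy : ∀ m v, y (x m • v) = y v + f m * (z v + f m * y v)) :
    Function.Injective (FreeGroup.lift x) := by
  set Ω : Set V := {v | ¬ (y v = 0 ∧ z v = 0)} with hΩ
  have hmem : ∀ m, x m ∈ MulAction.stabilizer Γ Ω := by
    intro m
    rw [MulAction.mem_stabilizer_set]
    intro v
    simp only [hΩ, Set.mem_ofPred_eq, hz, hy]
    refine not_congr ⟨fun ⟨h1, h2⟩ => ?_, fun ⟨h1, h2⟩ => by simp [h1, h2]⟩
    rw [h2] at h1
    have h3 : y v = 0 := by simpa using h1
    exact ⟨h3, by simpa [h3] using h2⟩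
  let x' : Fin 2 → MulAction.stabilizer Γ Ω := fun m => ⟨x m, hmem m⟩
  have key : Function.Injective (FreeGroup.lift x') := by
    let X : Fin 2 → Set Ω := fun m => {u | w (y u - f m * z u) < w (z u)}
    let Y : Fin 2 → Set Ω := fun m => {u | w (z u + f m * y u) ≤ w (y u)}
    have hX : ∀ m, ∀ v : Ω, v ∉ Y m → x' m • v ∈ X m := by
      intro m v hv
      have e1 : ((x' m • v : Ω) : V) = x m • (v : V) := rfl
      simp only [X, Y, Set.mem_ofPred_eq, not_le, e1, hz, hy] at hv ⊢
      simpa using hv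
    have Xz : ∀ m, ∀ v ∈ X m, z (v : V) ≠ 0 := by
      intro m v hv h
      simp [X, h] at hv
    have Yy : ∀ m, ∀ v ∈ Y m, y (v : V) ≠ 0 := by
      intro m v hv h
      have h2 := v.2
      simp only [Y, Set.mem_ofPred_eq, h] at hv
      simp at hv
      exact h2 ⟨h, hv⟩
    have lt_mul : ∀ (c d : K), 1 < w c → d ≠ 0 → w d < w (c * d) := by
      intro c d hc hd
      rw [map_mul]
      have : 0 < w d := (Valuation.pos_iff w).2 hd
      exact lt_mul_of_one_lt_left this hc
    have Xlt : ∀ m, ∀ v ∈ X m, w (z (v : V)) < w (y (v : V)) := by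
      intro m v hv
      have h1 := lt_mul _ _ (hf m) (Xz m v hv)
      have h2 : w (y (v:V) - f m * z v) < w (f m * z v) := lt_trans hv h1
      have h3 := Valuation.map_add_eq_of_lt_left w h2
      rw [add_sub_cancel] at h3
      rwa [h3]
    have Ylt : ∀ m, ∀ v ∈ Y m, w (y (v : V)) < w (z (v : V)) := by
      intro m v hv
      have h1 := lt_mul _ _ (hf m) (Yy m v hv)
      have h2 : w (z (v:V) + f m * y v) < w (f m * y v) := lt_of_le_of_lt hv h1
      have h3 := Valuation.map_sub_eq_of_lt_right w h2
      rw [add_sub_cancel_right] at h3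
      rwa [h3]
    have e : FreeGroup.lift x' = (FreeGroup.lift (fun m : ULift (Fin 2) => x' m.down)).comp
        (FreeGroup.freeGroupCongr Equiv.ulift.symm).toMonoidHom := by
      ext m; simp
    rw [e]
    rw [MonoidHom.coe_comp]
    refine Function.Injective.comp (g := FreeGroup.lift (fun m : ULift (Fin 2) => x' m.down)) ?_
      (FreeGroup.freeGroupCongr Equiv.ulift.symm).injective
    refine FreeGroup.injective_lift_of_ping_pong (fun m : ULift (Fin 2) => x' m.down)
      (fun m => X m.down) (fun m => Y m.down) ?_ ?_ ?_ ?_ ?_ ?_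
    · rintro ⟨m⟩
      obtain ⟨v, h1, h2⟩ := hsurj (f m) 1
      refine ⟨⟨v, fun h => ?_⟩, ?_⟩
      · rw [h2] at h; exact one_ne_zero h.2
      · simp [X, h1, h2]
    · rintro ⟨m⟩ ⟨m'⟩ hm
      replace hm : m ≠ m' := fun h => hm (by rw [h])
      refine Set.disjoint_left.2 fun v hv hv' => ?_
      have h1 := lt_mul _ _ (hff m m' hm) (Xz m v hv)
      have h2 : w ((f m - f m') * z (v : V)) < w (z (v : V)) := by
        have : (f m - f m') * z (v : V) = (y (v:V) - f m' * z v) - (y (v:V) - f m * z v) := by ring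
        rw [this]
        exact Valuation.map_sub_lt w hv' hv
      exact lt_asymm h1 h2
    · rintro ⟨m⟩ ⟨m'⟩ hm
      replace hm : m ≠ m' := fun h => hm (by rw [h])
      refine Set.disjoint_left.2 fun v hv hv' => ?_
      have h1 := lt_mul _ _ (hff m m' hm) (Yy m v hv)
      have h2 : w ((f m - f m') * y (v : V)) ≤ w (y (v : V)) := by
        have : (f m - f m') * y (v : V) = (z (v:V) + f m * y v) - (z (v:V) + f m' * y v) := by ring
        rw [this]
        exact Valuation.map_sub_le w hv hv'
      exact not_lt.2 h2 h1
    · rintro ⟨m⟩ ⟨m'⟩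
      exact Set.disjoint_left.2 fun v hv hv' => lt_asymm (Xlt m v hv) (Ylt m' v hv')
    · rintro ⟨m⟩ _ ⟨v, hv, rfl⟩
      exact hX m v hv
    · rintro ⟨m⟩ _ ⟨v, hv, rfl⟩
      by_contra h
      apply hv
      have := hX m _ h
      simpa using this
  have e : FreeGroup.lift x = (MulAction.stabilizer Γ Ω).subtype.comp (FreeGroup.lift x') := by
    ext m; simp [x']
  rw [e]
  exact (Subgroup.subtype_injective _).comp key

theorem exists_val {F : Type*} [Field F] (p : ℕ) [Fact p.Prime] [CharP F p]
    (hF : ¬ (Finite (⊥ : Subfield F) ∧ Algebra.IsAlgebraic (⊥ : Subfield F) F)) (K : Type*) [Field K] [Algebra F K] :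
    ∃ t : F, ∃ A : ValuationSubring K, 1 < A.valuation (algebraMap F K t) := by
  have hfin : Finite (⊥ : Subfield F) := by
    have h : (⊥ : Subfield F) ≤ (ZMod.castHom (dvd_refl p) F).fieldRange := bot_le
    have : Finite (ZMod.castHom (dvd_refl p) F).fieldRange :=
      Set.finite_range (ZMod.castHom (dvd_refl p) F)
    exact Finite.of_injective _ (Subfield.inclusion h).injective
  have h2 : ¬ Algebra.IsAlgebraic (⊥ : Subfield F) F := fun h => hF ⟨hfin, h⟩
  rw [Algebra.isAlgebraic_def] at h2
  push Not at h2
  obtain ⟨t, ht⟩ := h2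
  refine ⟨t, ?_⟩
  by_contra! hcon
  have : algebraMap F K t ∈ (⨅ V : {R : ValuationSubring K // (∅ : Set K) ⊆ R.toSubring}, V.1.toSubring) := by
    rw [Subring.mem_iInf]
    intro V
    exact (V.1.valuation_le_one_iff _).1 (hcon V.1)
  rw [iInf_valuationSubring_superset] at this
  have h3 : IsIntegral (Subring.closure (∅ : Set K)) (algebraMap F K t) := this
  have h4 : Algebra.IsIntegral ℤ (Subring.closure (∅ : Set K)) := by
    refine ⟨fun ⟨a, ha⟩ => ?_⟩
    rw [Subring.closure_empty, Subring.mem_bot] at ha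
    obtain ⟨n, rfl⟩ := ha
    exact (isIntegral_algebraMap (R := ℤ) (A := Subring.closure (∅ : Set K)) (x := n))
  have h5 : IsIntegral ℤ (algebraMap F K t) := isIntegral_trans _ h3
  rw [isIntegral_algebraMap_iff (algebraMap F K).injective] at h5
  exact ht (IsIntegral.tower_top (A := (⊥ : Subfield F)) h5).isAlgebraic

theorem free_of_noncomm {F H : Type*} [Field F] [Group H] [Finite H] (p : ℕ) [Fact p.Prime]
    [CharP F p] (hF : ¬ (Finite (⊥ : Subfield F) ∧ Algebra.IsAlgebraic (⊥ : Subfield F) F))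
    (h : ¬ ∀ x y : MonoidAlgebra (ZMod p) H,
      x * y - y * x ∈ Ring.jacobson (MonoidAlgebra (ZMod p) H)) :
    ∃ f : FreeGroup (Fin 2) →* (MonoidAlgebra F H)ˣ, Function.Injective f := by
  have hfin : Finite (MonoidAlgebra (ZMod p) H) := Module.finite_of_finite (ZMod p)
  obtain ⟨k, _, _, n, i, j, hij, ψ, a, b, ha, hb, ha', hb'⟩ :=
    (finite_ring_dichotomy (A := MonoidAlgebra (ZMod p) H)).resolve_left h
  let K := AlgebraicClosure F
  have hK : CharP K p := charP_of_injective_algebraMap (algebraMap F K).injective p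
  have hpA : (p : MonoidAlgebra (ZMod p) H) = 0 := by
    rw [← map_natCast (algebraMap (ZMod p) (MonoidAlgebra (ZMod p) H)), CharP.cast_eq_zero,
      map_zero]
  have hk : CharP k p := by
    rw [CharP.charP_iff_prime_eq_zero Fact.out]
    have h1 : (p : Matrix (Fin n) (Fin n) k) = 0 := by
      rw [← map_natCast ψ, hpA, map_zero]
    have h2 := congrFun (congrFun h1 i) i
    rw [← Matrix.diagonal_natCast, Matrix.diagonal_apply_eq] at h2
    exact h2
  let _ : Algebra (ZMod p) k := ZMod.algebra k p
  let _ : Algebra (ZMod p) K := ZMod.algebra K p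
  let ι : k →+* K := (IsAlgClosed.lift : k →ₐ[ZMod p] K).toRingHom
  let Θ : MonoidAlgebra (ZMod p) H →+* Matrix (Fin n) (Fin n) K := ι.mapMatrix.comp ψ
  let Φ : MonoidAlgebra F H →ₐ[F] Matrix (Fin n) (Fin n) K :=
    MonoidAlgebra.lift F _ H (Θ.toMonoidHom.comp (MonoidAlgebra.of (ZMod p) H))
  let φ : MonoidAlgebra (ZMod p) H →+* MonoidAlgebra F H :=
    MonoidAlgebra.mapRingHom H (ZMod.castHom (dvd_refl p) F)
  have hcomp : Φ.toRingHom.comp φ = Θ := by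
    refine MonoidAlgebra.ringHom_ext' (Subsingleton.elim _ _) ?_
    ext1 g
    simp [Φ, φ]
  have hΦ : ∀ x, Φ (φ x) = Θ x := fun x => congrArg (fun f => f x) hcomp
  have hα : Φ (φ a) = Matrix.single i j 1 := by
    rw [hΦ]; simp [Θ, ha']
  have hβ : Φ (φ b) = Matrix.single j i 1 := by
    rw [hΦ]; simp [Θ, hb']
  obtain ⟨t, Av, hAv⟩ := exists_val p hF K
  let U : (c : F) → (e : MonoidAlgebra F H) → IsNilpotent e → (MonoidAlgebra F H)ˣ :=
    fun c e he => (IsNilpotent.isUnit_one_add (he.smul c)).unit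
  have hU : ∀ c e he, ((U c e he : (MonoidAlgebra F H)ˣ) : MonoidAlgebra F H) = 1 + c • e :=
    fun c e he => rfl
  let x : Fin 2 → (MonoidAlgebra F H)ˣ := fun m =>
    U (t ^ ((m : ℕ) + 1)) (φ a) (ha.map φ) * U (t ^ ((m : ℕ) + 1)) (φ b) (hb.map φ)
  let act : MulAction (MonoidAlgebra F H)ˣ (Fin n → K) :=
    { smul := fun u v => (Φ (u : MonoidAlgebra F H)).mulVec v
      one_smul := fun v => by
        change (Φ ((1 : (MonoidAlgebra F H)ˣ) : MonoidAlgebra F H)).mulVec v = v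
        simp
      mul_smul := fun u w v => by
        change (Φ ((u * w : (MonoidAlgebra F H)ˣ) : MonoidAlgebra F H)).mulVec v =
          (Φ (u : MonoidAlgebra F H)).mulVec ((Φ (w : MonoidAlgebra F H)).mulVec v)
        rw [Units.val_mul, map_mul, Matrix.mulVec_mulVec] }
  have hact : ∀ m (v : Fin n → K), x m • v =
      ((1 + t ^ ((m : ℕ) + 1) • Matrix.single i j (1 : K)) *
        (1 + t ^ ((m : ℕ) + 1) • Matrix.single j i (1 : K))).mulVec v := by
    intro m v
    change (Φ ((x m : (MonoidAlgebra F H)ˣ) : MonoidAlgebra F H)).mulVec v = _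
    simp only [x, Units.val_mul, hU, map_mul, map_add, map_one, map_smul, hα, hβ]
  refine ⟨_, pingpong_aux Av.valuation (fun v : Fin n → K => v i) (fun v => v j) ?_
    (fun m => algebraMap F K t ^ ((m : ℕ) + 1)) ?_ ?_ x ?_ ?_⟩
  · intro c d
    exact ⟨Function.update (fun _ => d) i c, by simp, by simp [hij.symm]⟩
  · intro m
    rw [map_pow]
    exact one_lt_pow' hAv (by omega)
  · have h1 : 1 < Av.valuation (algebraMap F K t ^ 2 - algebraMap F K t) := by
      rw [Valuation.map_sub_eq_of_lt_left, map_pow]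
      · exact one_lt_pow' hAv (by omega)
      · rw [map_pow, pow_two]
        exact lt_mul_of_one_lt_left (lt_trans zero_lt_one hAv) hAv
    intro m m' hm
    fin_cases m <;> fin_cases m'
    · exact absurd rfl hm
    · rw [Valuation.map_sub_swap]; simpa using h1
    · simpa using h1
    · exact absurd rfl hm
  · intro m v
    simp only [hact]
    rw [← Matrix.mulVec_mulVec]
    simp only [Matrix.add_mulVec, Matrix.smul_mulVec, Matrix.single_mulVec, Matrix.one_mulVec,
      Pi.add_apply, Pi.smul_apply, Function.update_self, Function.update_of_ne hij,
      Function.update_of_ne hij.symm, Pi.zero_apply, smul_zero, add_zero, one_mul]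
    simp only [Algebra.smul_def, map_pow]
  · intro m v
    simp only [hact]
    rw [← Matrix.mulVec_mulVec]
    simp only [Matrix.add_mulVec, Matrix.smul_mulVec, Matrix.single_mulVec, Matrix.one_mulVec,
      Pi.add_apply, Pi.smul_apply, Function.update_self, Function.update_of_ne hij,
      Function.update_of_ne hij.symm, Pi.zero_apply, smul_zero, add_zero, one_mul]
    simp only [Algebra.smul_def, map_pow]

theorem pgroup_of_comm {H : Type*} [Group H] [Finite H] (p : ℕ) [Fact p.Prime]
    (h : ∀ x y : MonoidAlgebra (ZMod p) H,
      x * y - y * x ∈ Ring.jacobson (MonoidAlgebra (ZMod p) H)) (g : H) (hg : g ∈ commutator H) :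
    ∃ k, g ^ p ^ k = 1 := by
  have hfin : Finite (MonoidAlgebra (ZMod p) H) := Module.finite_of_finite (ZMod p)
  have hch : CharP (MonoidAlgebra (ZMod p) H) p :=
    charP_of_injective_algebraMap (algebraMap (ZMod p) (MonoidAlgebra (ZMod p) H)).injective p
  let mk := Ideal.Quotient.mk (Ring.jacobson (MonoidAlgebra (ZMod p) H))
  let f : H →* (MonoidAlgebra (ZMod p) H ⧸ Ring.jacobson (MonoidAlgebra (ZMod p) H))ˣ :=
    (mk.toMonoidHom.comp (MonoidAlgebra.of (ZMod p) H)).toHomUnits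
  have hle : commutator H ≤ f.ker := by
    rw [commutator_def, Subgroup.commutator_le]
    intro a _ b _
    rw [MonoidHom.mem_ker, map_commutatorElement, commutatorElement_eq_one_iff_mul_comm]
    ext
    change mk (MonoidAlgebra.of (ZMod p) H a) * mk (MonoidAlgebra.of (ZMod p) H b) =
      mk (MonoidAlgebra.of (ZMod p) H b) * mk (MonoidAlgebra.of (ZMod p) H a)
    rw [← map_mul mk, ← map_mul mk]
    exact Ideal.Quotient.eq.2 (h (MonoidAlgebra.of (ZMod p) H a) (MonoidAlgebra.of (ZMod p) H b))
  have h1 : MonoidAlgebra.of (ZMod p) H g - 1 ∈ Ring.jacobson (MonoidAlgebra (ZMod p) H) := by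
    rw [← Ideal.Quotient.eq, map_one]
    have h2 : f g = 1 := hle hg
    have h3 : ((f g : _ˣ) : MonoidAlgebra (ZMod p) H ⧸ Ring.jacobson (MonoidAlgebra (ZMod p) H)) =
      mk (MonoidAlgebra.of (ZMod p) H g) := rfl
    rw [h2, Units.val_one] at h3
    exact h3.symm
  obtain ⟨k, hk⟩ := jac_pow p h1
  refine ⟨k, MonoidAlgebra.of_injective (R := ZMod p) ?_⟩
  rw [map_pow, hk, map_one]

theorem exists_fg_commutator {G : Type*} [Group G] (g : G) (hg : g ∈ commutator G) :
    ∃ H : Subgroup G, H.FG ∧ g ∈ ⁅H, H⁆ := by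
  rw [commutator_def, Subgroup.commutator_def] at hg
  induction hg using Subgroup.closure_induction with
  | mem x hx =>
    obtain ⟨a, -, b, -, rfl⟩ := hx
    refine ⟨Subgroup.closure {a, b}, (Subgroup.fg_iff _).2 ⟨{a, b}, rfl, by simp⟩, Subgroup.commutator_mem_commutator ?_ ?_⟩
    · exact Subgroup.subset_closure (by simp)
    · exact Subgroup.subset_closure (by simp)
  | one => exact ⟨⊥, (Subgroup.fg_iff _).2 ⟨∅, by simp, by simp⟩, Subgroup.one_mem _⟩
  | mul x y _ _ hx hy =>
    obtain ⟨A, hA, hxA⟩ := hx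
    obtain ⟨B, hB, hyB⟩ := hy
    exact ⟨A ⊔ B, hA.sup hB, Subgroup.mul_mem _
      (Subgroup.commutator_mono le_sup_left le_sup_left hxA)
      (Subgroup.commutator_mono le_sup_right le_sup_right hyB)⟩
  | inv x _ hx =>
    obtain ⟨A, hA, hxA⟩ := hx
    exact ⟨A, hA, Subgroup.inv_mem _ hxA⟩

theorem mem_range_of_support {F G : Type*} [Field F] [Group G] (u : MonoidAlgebra F G) :
    ∃ s : Set G, s.Finite ∧ ∀ H : Subgroup G, s ⊆ H →
      ∃ x : MonoidAlgebra F H, MonoidAlgebra.mapDomainRingHom F H.subtype x = u := by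
  induction u using MonoidAlgebra.induction_on with
  | of g =>
    refine ⟨{g}, by simp, fun H hH => ⟨MonoidAlgebra.of F H ⟨g, hH rfl⟩, ?_⟩⟩
    simp
  | add a b ha hb =>
    obtain ⟨s, hs, h1⟩ := ha
    obtain ⟨r, hr, h2⟩ := hb
    refine ⟨s ∪ r, hs.union hr, fun H hH => ?_⟩
    obtain ⟨x, hx⟩ := h1 H (Set.subset_union_left.trans hH)
    obtain ⟨y, hy⟩ := h2 H (Set.subset_union_right.trans hH)
    exact ⟨x + y, by rw [map_add, hx, hy]⟩
  | smul c a ha =>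
    obtain ⟨s, hs, h1⟩ := ha
    refine ⟨s, hs, fun H hH => ?_⟩
    obtain ⟨x, hx⟩ := h1 H hH
    refine ⟨MonoidAlgebra.single 1 c * x, ?_⟩
    rw [map_mul, hx, Algebra.smul_def]
    simp

/-- Let `F` be a non-absolute field of characteristic `p > 0` and `G` a locally finite group.
Then the unit group of the group algebra `F[G]` contains no non-cyclic free subgroup if and
only if the derived subgroup `[G, G]` is a `p`-group. -/
theorem no_free_subgroup_iff_commutator_isPGroup
    {F G : Type*} [Field F] [Group G] (p : ℕ) (hp : 0 < p) [CharP F p]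
    (hF : ¬ IsAbsoluteField F) (hG : IsLocallyFiniteGroup G) :
    (¬ ∃ f : FreeGroup (Fin 2) →* (MonoidAlgebra F G)ˣ, Function.Injective f) ↔
      IsPGroup p (commutator G) := by
  have : NeZero p := ⟨hp.ne'⟩
  have hprime : Fact p.Prime := CharP.char_is_prime_of_pos F p
  have hinj : ∀ H : Subgroup G, Function.Injective (MonoidAlgebra.mapDomainRingHom F H.subtype) :=
    fun H => MonoidAlgebra.mapDomain_injective (Subgroup.subtype_injective H)
  constructor
  · rintro hno ⟨g, hg⟩
    obtain ⟨H, hH, hgH⟩ := exists_fg_commutator g hg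
    have hfin : Finite H := hG H hH
    have hmap : g ∈ (commutator H).map H.subtype := by
      rw [commutator_def, Subgroup.map_commutator, ← MonoidHom.range_eq_map, Subgroup.range_subtype]
      exact hgH
    obtain ⟨g', hg', rfl⟩ := hmap
    have hcomm : ∀ x y : MonoidAlgebra (ZMod p) H,
        x * y - y * x ∈ Ring.jacobson (MonoidAlgebra (ZMod p) H) := by
      by_contra hcon
      obtain ⟨f, hf⟩ := free_of_noncomm (F := F) p hF hcon
      exact hno ⟨(Units.map (MonoidAlgebra.mapDomainRingHom F H.subtype).toMonoidHom).comp f,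
        (Units.map_injective (hinj H)).comp hf⟩
    obtain ⟨k, hk⟩ := pgroup_of_comm p hcomm g' hg'
    refine ⟨k, Subtype.ext ?_⟩
    change (H.subtype g') ^ p ^ k = 1
    rw [← map_pow, hk, map_one]
  · rintro hP ⟨f, hf⟩
    let u := f (FreeGroup.of 0)
    let v := f (FreeGroup.of 1)
    obtain ⟨s1, hs1, h1⟩ := mem_range_of_support (u : MonoidAlgebra F G)
    obtain ⟨s2, hs2, h2⟩ :=
      mem_range_of_support ((u⁻¹ : (MonoidAlgebra F G)ˣ) : MonoidAlgebra F G)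
    obtain ⟨s3, hs3, h3⟩ := mem_range_of_support (v : MonoidAlgebra F G)
    obtain ⟨s4, hs4, h4⟩ :=
      mem_range_of_support ((v⁻¹ : (MonoidAlgebra F G)ˣ) : MonoidAlgebra F G)
    let s : Set G := s1 ∪ s2 ∪ s3 ∪ s4
    have hsf : s.Finite := ((hs1.union hs2).union hs3).union hs4
    let H := Subgroup.closure s
    have hfin : Finite H := hG H ((Subgroup.fg_iff _).2 ⟨s, rfl, hsf⟩)
    have hs : ∀ g ∈ s, g ∈ H := fun g hg => Subgroup.subset_closure hg
    obtain ⟨x, hx⟩ := h1 H fun g hg => hs g (by simp only [s, Set.mem_union]; tauto)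
    obtain ⟨x', hx'⟩ := h2 H fun g hg => hs g (by simp only [s, Set.mem_union]; tauto)
    obtain ⟨y, hy⟩ := h3 H fun g hg => hs g (by simp only [s, Set.mem_union]; tauto)
    obtain ⟨y', hy'⟩ := h4 H fun g hg => hs g (by simp only [s, Set.mem_union]; tauto)
    have hPH : IsPGroup p (commutator H) := by
      have hle : (commutator H).map H.subtype ≤ commutator G := by
        rw [commutator_def, commutator_def, Subgroup.map_commutator]
        exact Subgroup.commutator_mono le_top le_top
      intro g
      obtain ⟨k, hk⟩ := hP ⟨H.subtype g, hle ⟨g, g.2, rfl⟩⟩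
      refine ⟨k, Subtype.ext (Subtype.ext ?_)⟩
      have hk' := congrArg Subtype.val hk
      simpa using hk'
    have hch : CharP (MonoidAlgebra F H) p :=
      charP_of_injective_algebraMap (algebraMap F (MonoidAlgebra F H)).injective p
    have hart : IsArtinianRing (MonoidAlgebra F H) := IsArtinianRing.of_finite F _
    have hxx : x * x' = 1 := hinj H (by rw [map_mul, hx, hx', map_one, Units.mul_inv])
    have hyy : y * y' = 1 := hinj H (by rw [map_mul, hy, hy', map_one, Units.mul_inv])
    have hw : x * y * x' * y' - 1 ∈ Ring.jacobson (MonoidAlgebra F H) := by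
      have h1 := comm_of_pgroup (k := F) p hPH y x'
      have h2 := Ideal.mul_mem_right y' _ (Ideal.mul_mem_left _ x h1)
      have e : x * (y * x' - x' * y) * y' = x * y * x' * y' - (x * x') * (y * y') := by noncomm_ring
      rwa [e, hxx, hyy, one_mul] at h2
    obtain ⟨k, hk⟩ := jac_pow p hw
    have hk' := congrArg (MonoidAlgebra.mapDomainRingHom F H.subtype) hk
    simp only [map_pow, map_mul, hx, hx', hy, hy', map_one] at hk'
    have hk2 : (u * v * u⁻¹ * v⁻¹) ^ p ^ k = 1 := Units.ext (by simpa using hk')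
    have hk3 : f ((FreeGroup.of 0 * FreeGroup.of 1 * (FreeGroup.of 0)⁻¹ * (FreeGroup.of 1)⁻¹) ^ p ^ k)
        = f 1 := by
      simpa only [map_pow, map_mul, map_inv, map_one] using hk2
    have hk4 := hf hk3
    rw [pow_eq_one_iff_left (pow_ne_zero _ hp.ne')] at hk4
    revert hk4
    decide
end

section
/- Let F be a field of characteristic p > 0 and G a locally finite group whose derived subgroup G' = [G,G] is a p-group, and let FG denote the group algebra of G over F. Then for all g, h ∈ G, the element g·h − h·g of FG lies in the Jacobson radical J(FG); consequently the quotient ring FG/J(FG) is commutative. -/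
/-- A finite `p`-group acting on a nonzero abelian group of exponent `p` has a nonzero fixed point. -/
theorem exists_ne_zero_fixed {N V : Type*} [Group N] [Finite N] [AddCommGroup V]
    [DistribMulAction N V] (p : ℕ) [Module (ZMod p) V] [Fact p.Prime] (hN : IsPGroup p N)
    (hV : ∀ v : V, p • v = 0) (v : V) (hv : v ≠ 0) :
    ∃ w : V, w ≠ 0 ∧ ∀ n : N, n • w = w := by
  let W : Submodule (ZMod p) V := Submodule.span (ZMod p) (Set.range fun n : N => n • v)
  have hsm : ∀ (n : N) (w : V), w ∈ W → n • w ∈ W := by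
    intro n w hw
    induction hw using Submodule.span_induction with
    | mem x hx =>
      obtain ⟨m, rfl⟩ := hx
      exact Submodule.subset_span ⟨n * m, by simp [mul_smul]⟩
    | zero => simp
    | add x y _ _ hx hy => rw [smul_add]; exact W.add_mem hx hy
    | smul c x _ hx =>
      have : n • (c • x) = c • (n • x) :=
        ZMod.map_smul (DistribSMul.toAddMonoidHom V n) c x
      rw [this]; exact W.smul_mem _ hx
  have : Module.Finite (ZMod p) W := Module.Finite.span_of_finite _ (Set.finite_range _)
  have : Finite W := Module.finite_of_finite (ZMod p)
  let _ : MulAction N W :=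
    { smul := fun n w => ⟨n • (w : V), hsm n w w.2⟩
      one_smul := fun w => Subtype.ext (one_smul N (w : V))
      mul_smul := fun a b w => Subtype.ext (mul_smul a b (w : V)) }
  have hvW : v ∈ W := Submodule.subset_span ⟨1, by simp⟩
  have hdvd : p ∣ Nat.card W := by
    have h1 : addOrderOf (⟨v, hvW⟩ : W) = p :=
      addOrderOf_eq_prime (Subtype.ext (hV v)) (fun h => hv (congrArg Subtype.val h))
    exact h1.symm.dvd.trans (addOrderOf_dvd_natCard _)
  have h0 : (0 : W) ∈ MulAction.fixedPoints N W := fun n => Subtype.ext (smul_zero n)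
  obtain ⟨b, hb, hne⟩ := hN.exists_fixed_point_of_prime_dvd_card_of_fixed_point W hdvd h0
  exact ⟨b, fun h => hne (Subtype.ext h.symm), fun n => congrArg Subtype.val (hb n)⟩

open MonoidAlgebra in
/-- If `N` is a finite normal `p`-subgroup of `H`, then `n - 1` is in the radical of `F[H]`. -/
theorem of_sub_one_mem_jacobson {F H : Type*} [Field F] [Group H] (p : ℕ) [Fact p.Prime]
    [CharP F p] (N : Subgroup H) [N.Normal] [Finite N] (hN : IsPGroup p N) (n : H) (hn : n ∈ N) :
    of F H n - 1 ∈ Ring.jacobson (MonoidAlgebra F H) := by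
  rw [Ring.jacobson_eq_sInf_isMaximal, Submodule.mem_sInf]
  intro m hm
  have hm : Ideal.IsMaximal m := hm
  let V := MonoidAlgebra F H ⧸ m
  have : IsSimpleModule (MonoidAlgebra F H) V := isSimpleModule_iff_isCoatom.2 hm.out
  let _ : DistribMulAction N V :=
    DistribMulAction.compHom V ((of F H).comp N.subtype)
  have hsmul : ∀ (k : N) (w : V), k • w = of F H (k : H) • w := fun _ _ => rfl
  have hV : ∀ v : V, p • v = 0 := by
    intro v
    have : CharP (MonoidAlgebra F H) p := charP_of_injective_algebraMap' F p
    have : ((p : MonoidAlgebra F H)) • v = p • v := Nat.cast_smul_eq_nsmul _ _ _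
    rw [← this, CharP.cast_eq_zero, zero_smul]
  have : Nontrivial V := IsSimpleModule.nontrivial (MonoidAlgebra F H) V
  obtain ⟨v, hv⟩ := exists_ne (0 : V)
  let _ : Module (ZMod p) V := AddCommGroup.zmodModule hV
  obtain ⟨w, hw0, hw⟩ := exists_ne_zero_fixed p hN hV v hv
  let S : Submodule (MonoidAlgebra F H) V :=
    { carrier := {u | ∀ k ∈ N, of F H k • u = u}
      add_mem' := fun {a b} ha hb k hk => by rw [smul_add, ha k hk, hb k hk]
      zero_mem' := fun k _ => smul_zero _
      smul_mem' := fun r u hu => by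
        induction r using MonoidAlgebra.induction_linear with
        | zero => intro k _; simp
        | add a b ha hb => intro k hk; rw [add_smul, smul_add, ha k hk, hb k hk]
        | single h c =>
          intro k hk
          have h1 : of F H k * single h c = single h c * of F H (h⁻¹ * k * h) := by
            simp [of_apply, single_mul_single, mul_assoc]
          have h2 : h⁻¹ * k * h ∈ N := by
            simpa using Subgroup.Normal.conj_mem (H := N) inferInstance k hk h⁻¹
          rw [← mul_smul, h1, mul_smul, hu _ h2] }
  have hS : S = ⊤ := by
    refine (eq_bot_or_eq_top S).resolve_left fun h => hw0 ?_
    have : w ∈ S := fun k hk => hw ⟨k, hk⟩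
    rw [h] at this
    exact (Submodule.mem_bot _).1 this
  have h1 : (Submodule.Quotient.mk 1 : V) ∈ S := hS ▸ Submodule.mem_top
  have h2 := h1 n hn
  rw [← Submodule.Quotient.mk_smul] at h2
  have h3 := (Submodule.Quotient.eq m).1 h2
  simpa using h3

open MonoidAlgebra in
theorem commutator_mem_jacobson_aux
    {F G : Type*} [Field F] [Group G] (p : ℕ) [Fact p.Prime] [CharP F p]
    (hG : IsLocallyFiniteGroup G) (hG' : IsPGroup p (commutator G)) (g h : G) :
    of F G g * of F G h - of F G h * of F G g ∈
      TwoSidedIdeal.jacobson (⊥ : TwoSidedIdeal (MonoidAlgebra F G)) := by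
  classical
  rw [TwoSidedIdeal.mem_jacobson_iff]
  intro y
  let T : Finset G := y.coeff.support ∪ {g, h}
  let H : Subgroup G := Subgroup.closure (T : Set G)
  have : Finite H := hG H ⟨T, rfl⟩
  have hT : ∀ t ∈ T, t ∈ H := fun t ht => Subgroup.subset_closure ht
  let φ : MonoidAlgebra F H →+* MonoidAlgebra F G := mapDomainRingHom F H.subtype
  have hφ : ∀ (t : H) (c : F), φ (single t c) = single (t : G) c := by
    intro t c; simp [φ]
  have hy : y ∈ φ.range := by
    rw [← MonoidAlgebra.sum_coeff_single y]
    refine Subring.sum_mem _ fun t ht => ?_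
    exact ⟨single ⟨t, hT t (Finset.mem_union_left _ ht)⟩ _, hφ _ _⟩
  obtain ⟨y', hy'⟩ := hy
  let g' : H := ⟨g, hT g (by simp [T])⟩
  let h' : H := ⟨h, hT h (by simp [T])⟩
  let N : Subgroup H := (commutator G).comap H.subtype
  have hN : IsPGroup p N := hG'.comap_subtype
  have hc : (g' * h' * g'⁻¹ * h'⁻¹) ∈ N :=
    Subgroup.commutator_mem_commutator (Subgroup.mem_top g) (Subgroup.mem_top h)
  have key := of_sub_one_mem_jacobson (F := F) p N hN _ hc
  have key2 := (Ring.jacobson (MonoidAlgebra F H)).mul_mem_right (of F H (h' * g')) key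
  have e : (of F H (g' * h' * g'⁻¹ * h'⁻¹) - 1) * of F H (h' * g') =
      of F H g' * of F H h' - of F H h' * of F H g' := by
    rw [sub_mul, one_mul, ← map_mul, ← map_mul, ← map_mul]
    congr 2
    simp [mul_assoc]
  rw [e, ← Ideal.jacobson_bot, Ideal.mem_jacobson_iff] at key2
  obtain ⟨z, hz⟩ := key2 y'
  refine ⟨φ z, ?_⟩
  have hz := congrArg φ ((Submodule.mem_bot _).1 hz)
  have hof : ∀ t : H, φ (of F H t) = of F G (t : G) := fun t => hφ t 1
  simp only [map_sub, map_add, map_mul φ, map_one, map_zero, hof, hy'] at hz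
  rw [TwoSidedIdeal.mem_bot]
  exact hz

/-- Let `F` be a field of characteristic `p > 0` and `G` a locally finite group whose derived
subgroup `[G, G]` is a `p`-group. Then for all `g, h ∈ G` the element `g·h - h·g` of the
group algebra `F[G]` lies in the Jacobson radical `J(F[G])`; consequently the quotient ring
`F[G] / J(F[G])` is commutative. -/
theorem commutators_mem_jacobson_and_quotient_commutative
    {F G : Type*} [Field F] [Group G] (p : ℕ) (hp : 0 < p) [CharP F p]
    (hG : IsLocallyFiniteGroup G) (hG' : IsPGroup p (commutator G)) :
    (∀ g h : G,
        MonoidAlgebra.of F G g * MonoidAlgebra.of F G h -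
            MonoidAlgebra.of F G h * MonoidAlgebra.of F G g ∈
          TwoSidedIdeal.jacobson (⊥ : TwoSidedIdeal (MonoidAlgebra F G))) ∧
      ∀ x y :
          (TwoSidedIdeal.jacobson (⊥ : TwoSidedIdeal (MonoidAlgebra F G))).ringCon.Quotient,
        x * y = y * x := by
  have : Fact p.Prime := ⟨(CharP.char_is_prime_or_zero F p).resolve_right hp.ne'⟩
  have h1 := commutator_mem_jacobson_aux (F := F) p hG hG'
  refine ⟨h1, ?_⟩
  intro x y
  obtain ⟨a, rfl⟩ := Quotient.exists_rep x
  obtain ⟨b, rfl⟩ := Quotient.exists_rep y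
  have h2 : a * b - b * a ∈ TwoSidedIdeal.jacobson (⊥ : TwoSidedIdeal (MonoidAlgebra F G)) := by
    induction a using MonoidAlgebra.induction_linear with
    | zero => simp
    | add a a' ha ha' =>
      have e : (a + a') * b - b * (a + a') = (a * b - b * a) + (a' * b - b * a') := by
        noncomm_ring
      rw [e]; exact TwoSidedIdeal.add_mem _ ha ha'
    | single g c =>
      induction b using MonoidAlgebra.induction_linear with
      | zero => simp
      | add b b' hb hb' =>
        have e : MonoidAlgebra.single g c * (b + b') - (b + b') * MonoidAlgebra.single g c =
            (MonoidAlgebra.single g c * b - b * MonoidAlgebra.single g c) +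
            (MonoidAlgebra.single g c * b' - b' * MonoidAlgebra.single g c) := by
          noncomm_ring
        rw [e]; exact TwoSidedIdeal.add_mem _ hb hb'
      | single h d =>
        have e := TwoSidedIdeal.mul_mem_left _ (MonoidAlgebra.single 1 (c * d)) _ (h1 g h)
        simpa [mul_sub, MonoidAlgebra.of_apply, MonoidAlgebra.single_mul_single, mul_comm d c]
          using e
  exact Quotient.sound ((TwoSidedIdeal.rel_iff _ _ _).2 h2)
end
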